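/- arXiv:2203.06625 — 4 statements merged into one kernel-verified Lean document; each statement's English description precedes it below -/
import Mathlib

section
/- Let q be a prime power, n and k integers with 1 < k < n−1, and suppose q ≥ 3 or k ≥ 3. Then every injective map f : C(n,k)_q → G_k(V) such that f(X) and f(Y) are adjacent whenever X, Y ∈ C(n,k)_q are adjacent extends to an automorphism of the Grassmann graph Γ_k(V), and this extension is unique: there is exactly one bijection g : G_k(V) → G_k(V) with (g(X), g(Y) adjacent ⇔ X, Y adjacent) and g(X) = f(X) for all X ∈ C(n,k)_q. -/
/-!
Common definitions: `V = F^n`, coordinate hyperplanes, Grassmannians `G_k(V)`,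
non-degenerate linear `[n,k]_q` codes `C(n,k)_q`, adjacency, stars, tops,
and (maximal) cliques of the graph `Γ(n,k)_q` of non-degenerate codes.
-/

/-- The `i`-th coordinate hyperplane `C_i ⊂ F^n`: the kernel of the `i`-th
coordinate functional. -/
def coordHyp (F : Type*) [Field F] (n : ℕ) (i : Fin n) : Submodule F (Fin n → F) :=
  LinearMap.ker (LinearMap.proj i : (Fin n → F) →ₗ[F] F)

/-- The Grassmannian `G_k(V)`: the set of `k`-dimensional subspaces of `F^n`. -/
def grass (F : Type*) [Field F] (n k : ℕ) : Set (Submodule F (Fin n → F)) :=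
  {X | Module.finrank F ↥X = k}

/-- `C(n,k)_q`: the set of non-degenerate linear `[n,k]` codes, i.e. `k`-dimensional
subspaces of `F^n` not contained in any coordinate hyperplane. -/
def ndCodes (F : Type*) [Field F] (n k : ℕ) : Set (Submodule F (Fin n → F)) :=
  {X | Module.finrank F ↥X = k ∧ ∀ i : Fin n, ¬ X ≤ coordHyp F n i}

/-- Adjacency of `k`-dimensional subspaces: the intersection is `(k-1)`-dimensional. -/
def adjSub (F : Type*) [Field F] (n k : ℕ) (X Y : Submodule F (Fin n → F)) : Prop :=
  Module.finrank F ↥(X ⊓ Y) = k - 1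

/-- The star `S(X) ⊂ G_k(V)` of a `(k-1)`-dimensional subspace `X`: all `k`-dimensional
subspaces containing `X`. -/
def starOf (F : Type*) [Field F] (n k : ℕ) (X : Submodule F (Fin n → F)) :
    Set (Submodule F (Fin n → F)) :=
  {Y | Module.finrank F ↥Y = k ∧ X ≤ Y}

/-- The top `T(Y) ⊂ G_k(V)` of a `(k+1)`-dimensional subspace `Y`: all `k`-dimensional
subspaces of `Y`. -/
def topOf (F : Type*) [Field F] (n k : ℕ) (Y : Submodule F (Fin n → F)) :
    Set (Submodule F (Fin n → F)) :=
  {Z | Module.finrank F ↥Z = k ∧ Z ≤ Y}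

/-- `S^c(X) = S(X) ∩ C(n,k)_q`. -/
def scOf (F : Type*) [Field F] (n k : ℕ) (X : Submodule F (Fin n → F)) :
    Set (Submodule F (Fin n → F)) :=
  starOf F n k X ∩ ndCodes F n k

/-- `T^c(Y) = T(Y) ∩ C(n,k)_q`. -/
def tcOf (F : Type*) [Field F] (n k : ℕ) (Y : Submodule F (Fin n → F)) :
    Set (Submodule F (Fin n → F)) :=
  topOf F n k Y ∩ ndCodes F n k

/-- `c(X)`: the number of coordinate hyperplanes containing the subspace `X`. -/
noncomputable def numHyp (F : Type*) [Field F] (n : ℕ) (X : Submodule F (Fin n → F)) : ℕ :=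
  Set.ncard {i : Fin n | X ≤ coordHyp F n i}

/-- A clique of the graph `Γ(n,k)_q`: a set of non-degenerate `[n,k]` codes that are
pairwise adjacent. -/
def isClique (F : Type*) [Field F] (n k : ℕ) (S : Set (Submodule F (Fin n → F))) : Prop :=
  S ⊆ ndCodes F n k ∧ S.Pairwise (adjSub F n k)

/-- A maximal clique of `Γ(n,k)_q`: a clique not properly contained in another clique. -/
def isMaxClique (F : Type*) [Field F] (n k : ℕ) (S : Set (Submodule F (Fin n → F))) : Prop :=
  isClique F n k S ∧ ∀ T, isClique F n k T → S ⊆ T → T = S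

/-- `[m]_q = q^{m-1} + ⋯ + q + 1 = (q^m - 1)/(q - 1)`. -/
def gaussNum (q m : ℕ) : ℕ := ∑ i ∈ Finset.range m, q ^ i


set_option linter.unusedSectionVars false
set_option linter.unusedSimpArgs false
section Toolkit
variable {F : Type*} [Field F] {V : Type*} [AddCommGroup V] [Module F V] [FiniteDimensional F V]

/-- dimension of a subspace -/
noncomputable def dm (X : Submodule F V) : ℕ := Module.finrank F ↥X

/-- adjacency of subspaces of the same dimension -/
def Ad (X Y : Submodule F V) : Prop := dm X = dm Y ∧ dm (X ⊓ Y) + 1 = dm X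

lemma dm_sup_inf (A B : Submodule F V) : dm (A ⊔ B) + dm (A ⊓ B) = dm A + dm B :=
  Submodule.finrank_sup_add_finrank_inf_eq A B

lemma dm_mono {A B : Submodule F V} (h : A ≤ B) : dm A ≤ dm B := Submodule.finrank_mono h

lemma dm_eq {A B : Submodule F V} (h : A ≤ B) (h' : dm B ≤ dm A) : A = B :=
  Submodule.eq_of_le_of_finrank_le h h'

lemma dm_lt {A B : Submodule F V} (h : A ≤ B) (h' : A ≠ B) : dm A < dm B := by
  by_contra hc
  exact h' (dm_eq h (by omega))

lemma dm_bot : dm (⊥ : Submodule F V) = 0 := finrank_bot F V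

lemma dm_zero {A : Submodule F V} (h : dm A = 0) : A = ⊥ := Submodule.finrank_eq_zero.mp h

lemma dm_span {v : V} (hv : v ≠ 0) : dm (Submodule.span F {v}) = 1 := finrank_span_singleton hv

lemma dm_sup_span {A : Submodule F V} {v : V} (hv : v ∉ A) :
    dm (A ⊔ Submodule.span F {v}) = dm A + 1 := by
  have h := dm_sup_inf A (Submodule.span F {v})
  have h0 : v ≠ 0 := fun h => hv (h ▸ A.zero_mem)
  rw [dm_span h0] at h
  have : A ⊓ Submodule.span F {v} = ⊥ := by
    rw [Submodule.eq_bot_iff]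
    rintro x ⟨hx, hx'⟩
    obtain ⟨c, rfl⟩ := Submodule.mem_span_singleton.mp hx'
    by_cases hc : c = 0
    · simp [hc]
    · exact absurd ((Submodule.smul_mem_iff A hc).mp hx) hv
  rw [this, dm_bot] at h
  omega

lemma dm_sup_span_le (A : Submodule F V) (v : V) :
    dm (A ⊔ Submodule.span F {v}) ≤ dm A + 1 := by
  by_cases h : v ∈ A
  · rw [sup_eq_left.mpr (by simpa using h)]; omega
  · rw [dm_sup_span h]

lemma ex_not_mem {A B : Submodule F V} (h : dm A < dm B) : ∃ v ∈ B, v ∉ A := by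
  by_contra hc
  push Not at hc
  exact absurd (dm_mono (A := B) (B := A) hc) (by omega)

lemma ex_not_mem' {A B : Submodule F V} (h : ¬ B ≤ A) : ∃ v ∈ B, v ∉ A := by
  by_contra hc
  push Not at hc
  exact h hc

lemma span_le_iff {v : V} {A : Submodule F V} : Submodule.span F {v} ≤ A ↔ v ∈ A := by simp

lemma mem_spv (v : V) : v ∈ Submodule.span F {v} := Submodule.mem_span_singleton_self v

lemma ex_between {A B : Submodule F V} (hAB : A ≤ B) (m : ℕ) (h1 : dm A ≤ m) (h2 : m ≤ dm B) :
    ∃ C, A ≤ C ∧ C ≤ B ∧ dm C = m := by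
  induction m, h1 using Nat.le_induction with
  | base => exact ⟨A, le_rfl, hAB, rfl⟩
  | succ m hm ih =>
    obtain ⟨C, hC1, hC2, hC3⟩ := ih (by omega)
    obtain ⟨v, hv, hv'⟩ := ex_not_mem (A := C) (B := B) (by omega)
    exact ⟨C ⊔ Submodule.span F {v}, le_sup_of_le_left hC1, sup_le hC2 (span_le_iff.2 hv),
      by rw [dm_sup_span hv', hC3]⟩

lemma dm_le (A : Submodule F V) : dm A ≤ Module.finrank F V := Submodule.finrank_le A

lemma dm_top : dm (⊤ : Submodule F V) = Module.finrank F V := finrank_top F V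

/-- a point spanned -/
lemma pt_eq {P : Submodule F V} (h : dm P = 1) {v : V} (hv : v ∈ P) (h0 : v ≠ 0) :
    P = Submodule.span F {v} :=
  (dm_eq (span_le_iff.2 hv) (by rw [h, dm_span h0])).symm

lemma pt_ex {P : Submodule F V} (h : dm P = 1) : ∃ v, v ≠ 0 ∧ P = Submodule.span F {v} := by
  obtain ⟨v, hv, hv'⟩ := ex_not_mem (A := (⊥ : Submodule F V)) (B := P) (by rw [dm_bot]; omega)
  have : v ≠ 0 := by simpa using hv'
  exact ⟨v, this, pt_eq h hv this⟩

lemma Ad.symm {X Y : Submodule F V} (h : Ad X Y) : Ad Y X :=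
  ⟨h.1.symm, by rw [inf_comm, h.2, h.1]⟩

lemma Ad.ne {X Y : Submodule F V} (h : Ad X Y) : X ≠ Y := by
  rintro rfl
  have := h.2
  rw [inf_idem] at this
  omega

lemma Ad.sup {X Y : Submodule F V} (h : Ad X Y) : dm (X ⊔ Y) = dm X + 1 := by
  have := dm_sup_inf X Y
  have := h.1
  have := h.2
  omega

lemma Ad.of_le {X Y U : Submodule F V} (h : dm X = dm Y) (hne : X ≠ Y) (hX : X ≤ U) (hY : Y ≤ U)
    (hU : dm U ≤ dm X + 1) : Ad X Y := by
  have h1 := dm_sup_inf X Y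
  have h2 := dm_mono (sup_le hX hY)
  have h3 : dm (X ⊓ Y) < dm X := dm_lt inf_le_left (fun h' => hne (dm_eq (inf_eq_left.1 h') h.ge))
  exact ⟨h, by omega⟩

lemma Ad.of_ge {X Y A : Submodule F V} (h : dm X = dm Y) (hne : X ≠ Y) (hX : A ≤ X) (hY : A ≤ Y)
    (hU : dm X ≤ dm A + 1) : Ad X Y := by
  have h2 := dm_mono (le_inf hX hY)
  have h3 : dm (X ⊓ Y) < dm X := dm_lt inf_le_left (fun h' => hne (dm_eq (inf_eq_left.1 h') h.ge))
  exact ⟨h, by omega⟩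

lemma Ad.inf_eq {X Y A : Submodule F V} (h : Ad X Y) (hX : A ≤ X) (hY : A ≤ Y)
    (hU : dm X ≤ dm A + 1) : X ⊓ Y = A :=
  (dm_eq (le_inf hX hY) (by have := h.2; omega)).symm

lemma Ad.sup_eq {X Y U : Submodule F V} (h : Ad X Y) (hX : X ≤ U) (hY : Y ≤ U)
    (hU : dm U ≤ dm X + 1) : X ⊔ Y = U :=
  (dm_eq (sup_le hX hY) (by rw [h.sup]; omega))

/-- two distinct hyperplanes of `X` span `X` -/
lemma sup_hyp {A B X : Submodule F V} (hA : A ≤ X) (hB : B ≤ X) (h : dm A + 1 = dm X)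
    (hd : dm A = dm B) (hne : A ≠ B) : A ⊔ B = X :=
  (Ad.of_le hd hne hA hB (by omega)).sup_eq hA hB (by omega)

lemma triple {X₁ X₂ X₃ : Submodule F V} (h12 : Ad X₁ X₂) (h13 : Ad X₁ X₃) (h23 : Ad X₂ X₃) :
    X₁ ⊓ X₂ ≤ X₃ ∨ X₃ ≤ X₁ ⊔ X₂ := by
  by_cases hne : X₁ ⊓ X₃ = X₂ ⊓ X₃
  · left
    have h1 : X₁ ⊓ X₃ ≤ X₁ ⊓ X₂ := le_inf inf_le_left (hne ▸ inf_le_left)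
    have := dm_eq h1 (by have := h12.2; have := h13.2; omega)
    rw [← this]
    exact inf_le_right
  · right
    have := sup_hyp (X := X₃) inf_le_right inf_le_right
      (by have := h13.2; have := h13.1; omega)
      (by have := h13.2; have := h23.2; have := h12.1; omega) hne
    rw [← this]
    exact sup_le_sup inf_le_left inf_le_left

lemma clique {C : Set (Submodule F V)} (hC : C.Pairwise Ad) {X₁ X₂ : Submodule F V}
    (h1 : X₁ ∈ C) (h2 : X₂ ∈ C) (hne : X₁ ≠ X₂) :
    (∀ X ∈ C, X₁ ⊓ X₂ ≤ X) ∨ (∀ X ∈ C, X ≤ X₁ ⊔ X₂) := by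
  by_contra hcon
  push Not at hcon
  obtain ⟨⟨X₃, h3, hX3⟩, ⟨X₄, h4, hX4⟩⟩ := hcon
  have a12 := hC h1 h2 hne
  have n31 : X₁ ≠ X₃ := fun h => hX3 (h ▸ inf_le_left)
  have n32 : X₂ ≠ X₃ := fun h => hX3 (h ▸ inf_le_right)
  have n41 : X₁ ≠ X₄ := fun h => hX4 (h ▸ le_sup_left)
  have n42 : X₂ ≠ X₄ := fun h => hX4 (h ▸ le_sup_right)
  have a13 := hC h1 h3 n31
  have a23 := hC h2 h3 n32
  have a14 := hC h1 h4 n41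
  have a24 := hC h2 h4 n42
  have l3 : X₃ ≤ X₁ ⊔ X₂ := (triple a12 a13 a23).resolve_left hX3
  have l4 : X₁ ⊓ X₂ ≤ X₄ := (triple a12 a14 a24).resolve_right hX4
  have n34 : X₃ ≠ X₄ := fun h => hX4 (h ▸ l3)
  have a34 := hC h3 h4 n34
  have l4' : X₁ ⊓ X₃ ≤ X₄ := by
    refine (triple a13 a14 a34).resolve_right (fun h => hX4 (h.trans (sup_le le_sup_left l3)))
  have hne' : X₁ ⊓ X₂ ≠ X₁ ⊓ X₃ := fun h => hX3 (h ▸ inf_le_right)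
  have := sup_hyp (X := X₁) inf_le_left inf_le_left a12.2
    (by have := a12.2; have := a13.2; omega) hne'
  have : X₁ ≤ X₄ := this ▸ sup_le l4 l4'
  exact n41 (dm_eq this a14.1.ge)

/-- Lemma A -/
lemma star_of_three {W X : Submodule F V} {u₁ u₂ u₃ : V} (h1 : u₁ ∉ W)
    (h2 : u₂ ∉ W ⊔ Submodule.span F {u₁})
    (h3 : u₃ ∉ W ⊔ Submodule.span F {u₁} ⊔ Submodule.span F {u₂})
    (a1 : Ad X (W ⊔ Submodule.span F {u₁})) (a2 : Ad X (W ⊔ Submodule.span F {u₂}))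
    (a3 : Ad X (W ⊔ Submodule.span F {u₃})) : W ≤ X := by
  have h2' : u₂ ∉ W := fun h => h2 (le_sup_left (a := W) h)
  have h3' : u₃ ∉ W ⊔ Submodule.span F {u₁} := fun h => h3 (le_sup_left (b := Submodule.span F {u₂}) h)
  have h3'' : u₃ ∉ W := fun h => h3' (le_sup_left (a := W) h)
  set W1 := W ⊔ Submodule.span F {u₁} with hW1
  set W2 := W ⊔ Submodule.span F {u₂} with hW2
  set W3 := W ⊔ Submodule.span F {u₃} with hW3
  have d1 : dm W1 = dm W + 1 := dm_sup_span h1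
  have d2 : dm W2 = dm W + 1 := dm_sup_span h2'
  have d3 : dm W3 = dm W + 1 := dm_sup_span h3''
  have m2 : u₂ ∈ W2 := le_sup_right (a := W) (mem_spv u₂)
  have m3 : u₃ ∈ W3 := le_sup_right (a := W) (mem_spv u₃)
  have a12 : Ad W1 W2 := Ad.of_ge (by omega) (fun h => h2 (h ▸ m2)) le_sup_left le_sup_left (by omega)
  have a13 : Ad W1 W3 := Ad.of_ge (by omega) (fun h => h3' (h ▸ m3)) le_sup_left le_sup_left (by omega)
  have i12 : W1 ⊓ W2 = W := a12.inf_eq le_sup_left le_sup_left (by omega)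
  have i13 : W1 ⊓ W3 = W := a13.inf_eq le_sup_left le_sup_left (by omega)
  rcases triple a12 a1.symm a2.symm with h | h
  · rwa [i12] at h
  rcases triple a13 a1.symm a3.symm with h' | h'
  · rwa [i13] at h'
  exfalso
  have s12 : dm (W1 ⊔ W2) = dm W1 + 1 := a12.sup
  have s13 : dm (W1 ⊔ W3) = dm W1 + 1 := a13.sup
  have hne : W1 ⊔ W2 ≠ W1 ⊔ W3 := by
    intro he
    apply h3
    have e : W1 ⊔ W2 = W1 ⊔ Submodule.span F {u₂} := by
      rw [hW2, ← sup_assoc]; congr 1; exact sup_eq_left.2 le_sup_left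
    rw [← e, he]
    exact le_sup_right (a := W1) m3
  have a := Ad.of_ge (A := W1) (by omega) hne le_sup_left le_sup_left (by omega)
  have := a.inf_eq (A := W1) le_sup_left le_sup_left (by omega)
  have hX : X ≤ W1 := this ▸ le_inf h h'
  exact a1.ne (dm_eq hX a1.1.ge)

/-- every vector of `X` lies in a hyperplane of `X`, if `dim X ≥ 2` -/
lemma ex_hyp {X : Submodule F V} {x : V} (hx : x ∈ X) (h : 2 ≤ dm X) :
    ∃ Z ≤ X, x ∈ Z ∧ dm Z + 1 = dm X := by
  have h1 : dm (Submodule.span F {x}) ≤ 1 := by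
    by_cases h0 : x = 0
    · subst h0; rw [Submodule.span_zero_singleton, dm_bot]; omega
    · rw [dm_span h0]
  obtain ⟨C, h1, h2, h3⟩ := ex_between (span_le_iff.2 hx) (dm X - 1) (by omega) (by omega)
  exact ⟨C, h2, h1 (mem_spv x), by omega⟩

end Toolkit

section Count
variable {F : Type*} [Field F] [Fintype F] {V : Type*} [AddCommGroup V] [Module F V]
  [FiniteDimensional F V]

lemma card_sub (A : Submodule F V) : (A : Set V).ncard = Fintype.card F ^ dm A := by
  have : Finite V := Module.finite_of_finite F
  rw [← Nat.card_coe_set_eq, dm, ← Nat.card_eq_fintype_card]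
  exact Module.natCard_eq_pow_finrank (K := F) (V := A)

lemma two_le_card : 2 ≤ Fintype.card F := Fintype.one_lt_card

/-- covers of `A` in `B` -/
def cov (A B : Submodule F V) : Set (Submodule F V) := {U | A ≤ U ∧ U ≤ B ∧ dm U = dm A + 1}

instance : Finite (Submodule F V) := by
  have : Finite V := Module.finite_of_finite F
  exact Finite.of_injective (fun A : Submodule F V => (A : Set V)) SetLike.coe_injective

lemma ncard_cov {A B : Submodule F V} (h : A ≤ B) :
    (cov A B).ncard = gaussNum (Fintype.card F) (dm B - dm A) := by
  classical
  have : Finite V := Module.finite_of_finite F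
  have : Fintype V := Fintype.ofFinite V
  have : Fintype (Submodule F V) := Fintype.ofFinite _
  set q := Fintype.card F with hq
  have hq2 : 2 ≤ q := two_le_card
  have hcA := card_sub A
  have hcB := card_sub B
  -- count pairs
  let S : Finset V := (Set.toFinset (B : Set V)) \ (Set.toFinset (A : Set V))
  let T : Finset (Submodule F V) := (cov A B).toFinset
  have hS : S.card = q ^ dm B - q ^ dm A := by
    rw [Finset.card_sdiff_of_subset (by simpa using h), ← Set.ncard_eq_toFinset_card',
      ← Set.ncard_eq_toFinset_card', hcA, hcB]
  have hmap : ∀ v ∈ S, A ⊔ Submodule.span F {v} ∈ T := by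
    intro v hv
    simp only [S, Finset.mem_sdiff, Set.mem_toFinset, SetLike.mem_coe] at hv
    apply Set.mem_toFinset.2
    exact ⟨le_sup_left, sup_le h (span_le_iff.2 hv.1), dm_sup_span hv.2⟩
  have hfib : ∀ U ∈ T, (S.filter (fun v => A ⊔ Submodule.span F {v} = U)).card
      = q ^ (dm A + 1) - q ^ dm A := by
    intro U hU
    replace hU : U ∈ cov A B := Set.mem_toFinset.1 hU
    have : S.filter (fun v => A ⊔ Submodule.span F {v} = U)
        = (Set.toFinset (U : Set V)) \ (Set.toFinset (A : Set V)) := by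
      ext v
      simp only [S, Finset.mem_filter, Finset.mem_sdiff, Set.mem_toFinset, SetLike.mem_coe]
      constructor
      · rintro ⟨⟨h1, h2⟩, h3⟩
        exact ⟨h3 ▸ le_sup_right (a := A) (mem_spv v), h2⟩
      · rintro ⟨h1, h2⟩
        exact ⟨⟨hU.2.1 h1, h2⟩, dm_eq (sup_le hU.1 (span_le_iff.2 h1))
          (by rw [dm_sup_span h2, hU.2.2])⟩
    rw [this, Finset.card_sdiff_of_subset (by simpa using hU.1), ← Set.ncard_eq_toFinset_card',
      ← Set.ncard_eq_toFinset_card', hcA, card_sub U, hU.2.2]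
  have key := Finset.card_eq_sum_card_fiberwise hmap
  rw [Finset.sum_congr rfl hfib, Finset.sum_const, hS, smul_eq_mul] at key
  rw [Set.ncard_eq_toFinset_card']
  change T.card = _
  have hle := dm_mono h
  obtain ⟨d, hd⟩ := Nat.exists_eq_add_of_le hle
  have hdd : dm B - dm A = d := by omega
  rw [hdd]
  have hg : gaussNum q d * (q - 1) = q ^ d - 1 := by
    have := Nat.geomSum_eq hq2 d
    rw [gaussNum, this]
    exact Nat.div_mul_cancel (by simpa using Nat.sub_dvd_pow_sub_pow q 1 d)
  have hp : 0 < q ^ dm A := by positivity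
  have e1 : q ^ dm B - q ^ dm A = q ^ dm A * (q ^ d - 1) := by
    rw [hd, pow_add, Nat.mul_sub, mul_one]
  have e2 : q ^ (dm A + 1) - q ^ dm A = q ^ dm A * (q - 1) := by
    rw [pow_succ, Nat.mul_sub, mul_one]
  rw [e1, e2, ← hg] at key
  have : q ^ dm A * (q - 1) * gaussNum q d = q ^ dm A * (q - 1) * T.card := by
    rw [mul_comm T.card] at key
    rw [← key]; ring
  exact (Nat.eq_of_mul_eq_mul_left (by apply Nat.mul_pos hp; omega) this).symm

/-- Injective maps between intervals of the same length are onto. -/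
lemma cov_surj {A B A' B' : Submodule F V} (h : A ≤ B) (h' : A' ≤ B')
    (hd : dm B - dm A = dm B' - dm A') (φ : Submodule F V → Submodule F V)
    (hm : ∀ U ∈ cov A B, φ U ∈ cov A' B') (hi : Set.InjOn φ (cov A B)) :
    ∀ W ∈ cov A' B', ∃ U ∈ cov A B, φ U = W := by
  have h1 : (φ '' cov A B) ⊆ cov A' B' := by rintro _ ⟨U, hU, rfl⟩; exact hm U hU
  have h2 := Set.eq_of_subset_of_ncard_le h1
    (by rw [hi.ncard_image, ncard_cov h, ncard_cov h', hd]) (Set.toFinite _)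
  intro W hW
  rw [← h2] at hW
  exact hW

lemma gauss_succ (q d : ℕ) : gaussNum q (d+1) = gaussNum q d + q ^ d := Finset.sum_range_succ _ _

lemma gauss_mono {q : ℕ} {a b : ℕ} (h : a ≤ b) : gaussNum q a ≤ gaussNum q b := by
  induction b, h using Nat.le_induction with
  | base => exact le_rfl
  | succ b _ ih => rw [gauss_succ]; omega

lemma gauss_lt {q : ℕ} (hq : 2 ≤ q) {a b : ℕ} (h : a < b) : gaussNum q a < gaussNum q b := by
  have h1 := gauss_mono (q := q) (show a + 1 ≤ b from h)
  rw [gauss_succ] at h1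
  have : 0 < q ^ a := by positivity
  omega

end Count

set_option linter.unusedSectionVars false
set_option linter.unusedSimpArgs false
section Iso
variable {F : Type*} [Field F] {V : Type*} [AddCommGroup V] [Module F V] [FiniteDimensional F V]

lemma dm_le_of_strictMono {φ : Submodule F V → Submodule F V} (h : StrictMono φ) (m : ℕ) :
    ∀ X, dm X = m → m ≤ dm (φ X) := by
  induction m with
  | zero => intro X _; omega
  | succ m ih =>
    intro X hX
    obtain ⟨Z, _, hZ, hd⟩ := ex_between (bot_le : ⊥ ≤ X) m (by rw [dm_bot]; omega) (by omega)
    have hlt : Z < X := lt_of_le_of_ne hZ (by rintro rfl; omega)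
    have h1 := ih Z hd
    have h2 := h hlt
    have h3 := dm_lt h2.le h2.ne
    omega

lemma iso_dm (G : Submodule F V ≃o Submodule F V) (X : Submodule F V) : dm (G X) = dm X := by
  apply le_antisymm
  · have := dm_le_of_strictMono G.symm.strictMono _ (G X) rfl
    simpa using this
  · exact dm_le_of_strictMono G.strictMono _ X rfl

lemma iso_Ad (G : Submodule F V ≃o Submodule F V) (X Y : Submodule F V) :
    Ad (G X) (G Y) ↔ Ad X Y := by
  simp only [Ad, ← map_inf, iso_dm]

end Iso

section Dual
variable {F : Type*} [Field F] {n : ℕ}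

/-- orthogonal complement for the standard form -/
noncomputable def du (X : Submodule F (Fin n → F)) : Submodule F (Fin n → F) :=
  (Matrix.toBilin' (1 : Matrix (Fin n) (Fin n) F)).orthogonal X

lemma du_nd : (Matrix.toBilin' (1 : Matrix (Fin n) (Fin n) F)).Nondegenerate := by
  apply Matrix.nondegenerate_toBilin'_iff.2
  apply Matrix.nondegenerate_of_det_ne_zero
  simp

lemma du_refl : (Matrix.toBilin' (1 : Matrix (Fin n) (Fin n) F)).IsRefl := by
  intro x y h
  simp only [Matrix.toBilin'_apply', Matrix.one_mulVec] at h ⊢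
  rwa [dotProduct_comm]

lemma du_du (X : Submodule F (Fin n → F)) : du (du X) = X :=
  LinearMap.BilinForm.orthogonal_orthogonal du_nd du_refl X

lemma du_dm (X : Submodule F (Fin n → F)) : dm (du X) = n - dm X := by
  have := LinearMap.BilinForm.finrank_orthogonal du_nd X
  rw [Module.finrank_fin_fun] at this
  exact this

lemma du_anti {X Y : Submodule F (Fin n → F)} (h : X ≤ Y) : du Y ≤ du X :=
  LinearMap.BilinForm.orthogonal_le h

lemma dmn (X : Submodule F (Fin n → F)) : dm X ≤ n := by
  have := dm_le X
  simpa using this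

lemma dmtop : dm (⊤ : Submodule F (Fin n → F)) = n := by
  rw [dm_top]; simp

lemma du_le {X Y : Submodule F (Fin n → F)} : du X ≤ du Y ↔ Y ≤ X :=
  ⟨fun h => by have := du_anti h; rwa [du_du, du_du] at this, du_anti⟩

lemma du_inj {X Y : Submodule F (Fin n → F)} (h : du X = du Y) : X = Y := by
  rw [← du_du X, h, du_du]

lemma du_Ad' {X Y : Submodule F (Fin n → F)} (h : Ad X Y) : Ad (du X) (du Y) := by
  have h1 := h.sup
  have := dmn (X ⊔ Y)
  have := dmn (X)
  have := dmn (Y)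
  refine Ad.of_ge (A := du (X ⊔ Y)) ?_ (fun e => h.ne (du_inj e)) (du_anti le_sup_left)
    (du_anti le_sup_right) ?_
  · rw [du_dm, du_dm, h.1]
  · rw [du_dm, du_dm]; omega

lemma du_Ad {X Y : Submodule F (Fin n → F)} : Ad (du X) (du Y) ↔ Ad X Y :=
  ⟨fun h => by have := du_Ad' h; rwa [du_du, du_du] at this, du_Ad'⟩

variable [Fintype F]

/-- number of hyperplanes of `Y` -/
lemma ncard_top (Y : Submodule F (Fin n → F)) (k : ℕ) (hY : dm Y = k + 1) :
    {X | X ≤ Y ∧ dm X = k}.ncard = gaussNum (Fintype.card F) (k + 1) := by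
  have h1 := ncard_cov (le_top : du Y ≤ ⊤)
  have hn := dmn Y
  rw [dmtop, du_dm, show n - (n - dm Y) = k + 1 by omega] at h1
  rw [← h1]
  have : cov (du Y) ⊤ = du '' {X | X ≤ Y ∧ dm X = k} := by
    ext U
    constructor
    · rintro ⟨h1, _, h2⟩
      refine ⟨du U, ⟨?_, ?_⟩, du_du U⟩
      · rw [← du_du Y]; exact du_anti h1
      · rw [du_dm, h2, du_dm]; omega
    · rintro ⟨X, ⟨h1, h2⟩, rfl⟩
      exact ⟨du_anti h1, le_top, by rw [du_dm, du_dm]; omega⟩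
  rw [this, Set.ncard_image_of_injective _ (fun _ _ => du_inj)]

end Dual

section Coll
variable {F : Type*} [Field F] [Fintype F] {V : Type*} [AddCommGroup V] [Module F V]
  [FiniteDimensional F V]

lemma mem_covbot {P B : Submodule F V} : P ∈ cov ⊥ B ↔ P ≤ B ∧ dm P = 1 := by
  constructor
  · rintro ⟨_, h1, h2⟩; rw [dm_bot] at h2; exact ⟨h1, h2⟩
  · rintro ⟨h1, h2⟩; exact ⟨bot_le, h1, by rw [dm_bot, h2]⟩

/-- a map of points injective on points that maps points of `B` into a space of the same dimension is onto -/
lemma pts_surj {B B' : Submodule F V} (hd : dm B = dm B') (g : Submodule F V → Submodule F V)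
    (h1 : ∀ P, dm P = 1 → dm (g P) = 1)
    (hi : ∀ P Q, dm P = 1 → dm Q = 1 → g P = g Q → P = Q)
    (hm : ∀ P ≤ B, dm P = 1 → g P ≤ B') :
    ∀ W ≤ B', dm W = 1 → ∃ P ≤ B, dm P = 1 ∧ g P = W := by
  intro W hW hW1
  obtain ⟨U, hU, h⟩ := cov_surj (bot_le : ⊥ ≤ B) (bot_le : ⊥ ≤ B') (by rw [hd]) g
    (fun U hU => by
      rw [mem_covbot] at hU ⊢
      exact ⟨hm U hU.1 hU.2, h1 U hU.2⟩)
    (fun P hP Q hQ h => by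
      rw [mem_covbot] at hP hQ
      exact hi P Q hP.2 hQ.2 h) W (mem_covbot.2 ⟨hW, hW1⟩)
  rw [mem_covbot] at hU
  exact ⟨U, hU.1, hU.2, h⟩

lemma line_eq {P Q L : Submodule F V} (hP : dm P = 1) (hQ : dm Q = 1) (hne : P ≠ Q)
    (hPL : P ≤ L) (hQL : Q ≤ L) (hL : dm L = 2) : P ⊔ Q = L :=
  sup_hyp hPL hQL (by omega) (by omega) hne

lemma line_dm {P Q : Submodule F V} (hP : dm P = 1) (hQ : dm Q = 1) (hne : P ≠ Q) :
    dm (P ⊔ Q) = 2 := by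
  have := (Ad.of_ge (A := ⊥) (by omega : dm P = dm Q) hne bot_le bot_le
    (by rw [dm_bot]; omega)).sup
  omega

lemma pt_le_eq {P Q : Submodule F V} (hP : dm P = 1) (hQ : dm Q = 1) (h : P ≤ Q) : P = Q :=
  dm_eq h (by omega)

lemma collin (g : Submodule F V → Submodule F V)
    (h1 : ∀ P, dm P = 1 → dm (g P) = 1)
    (hi : ∀ P Q, dm P = 1 → dm Q = 1 → g P = g Q → P = Q)
    (hl : ∀ L, dm L = 2 → ∃ L', dm L' = 2 ∧ ∀ P ≤ L, dm P = 1 → g P ≤ L') :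
    ∃ G : Submodule F V ≃o Submodule F V, ∀ P, dm P = 1 → G P = g P := by
  classical
  have hspan : ∀ v : V, v ≠ 0 → dm (Submodule.span F {v}) = 1 := fun v => dm_span
  have key : ∀ P Q, dm P = 1 → dm Q = 1 → ∀ u : V, u ≠ 0 → u ∈ g P ⊔ g Q →
      ∃ R ≤ P ⊔ Q, dm R = 1 ∧ u ∈ g R := by
    intro P Q hP hQ u hu0 hu
    by_cases hPQ : P = Q
    · subst hPQ
      rw [sup_idem] at hu
      exact ⟨P, le_sup_left, hP, hu⟩
    have hL := line_dm hP hQ hPQ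
    obtain ⟨L', hL', hm⟩ := hl _ hL
    have e : g P ⊔ g Q = L' := line_eq (h1 P hP) (h1 Q hQ) (fun h => hPQ (hi P Q hP hQ h))
      (hm P le_sup_left hP) (hm Q le_sup_right hQ) hL'
    rw [e] at hu
    obtain ⟨R, hR, hR1, hgR⟩ := pts_surj (hL.trans hL'.symm) g h1 hi hm (Submodule.span F {u})
      (span_le_iff.2 hu) (hspan u hu0)
    exact ⟨R, hR, hR1, hgR ▸ mem_spv u⟩
  let G0 : Submodule F V → Submodule F V := fun X =>
    { carrier := {v | v = 0 ∨ ∃ P ≤ X, dm P = 1 ∧ v ∈ g P}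
      zero_mem' := Or.inl rfl
      add_mem' := by
        rintro a b (rfl | ⟨P, hP, hP1, ha⟩) hb
        · simpa using hb
        rcases hb with rfl | ⟨Q, hQ, hQ1, hb⟩
        · rw [add_zero]; exact Or.inr ⟨P, hP, hP1, ha⟩
        by_cases h0 : a + b = 0
        · exact Or.inl h0
        obtain ⟨R, hR, hR1, h⟩ := key P Q hP1 hQ1 (a + b) h0
          (Submodule.add_mem_sup ha hb)
        exact Or.inr ⟨R, hR.trans (sup_le hP hQ), hR1, h⟩
      smul_mem' := by
        rintro c a (rfl | ⟨P, hP, hP1, ha⟩)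
        · left; simp
        · exact Or.inr ⟨P, hP, hP1, (g P).smul_mem c ha⟩ }
  have hmem : ∀ X v, v ∈ G0 X ↔ v = 0 ∨ ∃ P ≤ X, dm P = 1 ∧ v ∈ g P := fun X v => Iff.rfl
  have hpt : ∀ P X, dm P = 1 → (g P ≤ G0 X ↔ P ≤ X) := by
    intro P X hP
    constructor
    · intro h
      obtain ⟨v, hv0, hv⟩ := pt_ex (h1 P hP)
      have : v ∈ G0 X := h (hv ▸ mem_spv v)
      rcases (hmem X v).1 this with h0 | ⟨Q, hQ, hQ1, hvQ⟩
      · exact absurd h0 hv0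
      · have : g P = g Q := by rw [hv, pt_eq (h1 Q hQ1) hvQ hv0]
        exact (hi P Q hP hQ1 this) ▸ hQ
    · intro h v hv
      exact (hmem X v).2 (Or.inr ⟨P, h, hP, hv⟩)
  have hle : ∀ X Y, G0 X ≤ G0 Y ↔ X ≤ Y := by
    intro X Y
    constructor
    · intro h x hx
      by_cases h0 : x = 0
      · rw [h0]; exact Y.zero_mem
      have := (hpt (Submodule.span F {x}) X (hspan x h0)).2 (span_le_iff.2 hx)
      exact span_le_iff.1 ((hpt _ Y (hspan x h0)).1 (this.trans h))
    · rintro h v (h0 | ⟨P, hP, hP1, hv⟩)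
      · exact Or.inl h0
      · exact Or.inr ⟨P, hP.trans h, hP1, hv⟩
  let E : Submodule F V ↪o Submodule F V := OrderEmbedding.ofMapLEIff G0 hle
  have hs : Function.Surjective E := Finite.surjective_of_injective E.injective
  refine ⟨RelIso.ofSurjective E hs, ?_⟩
  intro P hP
  change G0 P = g P
  apply (dm_eq ((hpt P P hP).2 le_rfl) _).symm
  rw [h1 P hP]
  have := iso_dm (RelIso.ofSurjective E hs) P
  rw [← hP, ← this]
  exact le_rfl

end Coll

set_option linter.unusedSectionVars false
set_option linter.unusedSimpArgs false
section Desc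
variable {F : Type*} [Field F] {n : ℕ}

/-- non-degenerate -/
def nd (X : Submodule F (Fin n → F)) : Prop := ∀ i : Fin n, ¬ X ≤ coordHyp F n i

lemma nd_mono {X Y : Submodule F (Fin n → F)} (h : X ≤ Y) (hX : nd X) : nd Y :=
  fun i hi => hX i (h.trans hi)

lemma mem_ch {v : Fin n → F} {i : Fin n} : v ∈ coordHyp F n i ↔ v i = 0 := Iff.rfl

lemma nd_iff {X : Submodule F (Fin n → F)} : nd X ↔ ∀ i, ∃ v ∈ X, v i ≠ 0 := by
  constructor
  · intro h i
    obtain ⟨v, hv, hv'⟩ := ex_not_mem' (h i)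
    exact ⟨v, hv, hv'⟩
  · rintro h i hi
    obtain ⟨v, hv, hv'⟩ := h i
    exact hv' (hi hv)

/-- injective adjacency preserving at level `k` -/
structure Lv (k : ℕ) (f : Submodule F (Fin n → F) → Submodule F (Fin n → F)) : Prop where
  mem : ∀ X, nd X → dm X = k → dm (f X) = k
  inj : ∀ X Y, nd X → nd Y → dm X = k → dm Y = k → f X = f Y → X = Y
  adj : ∀ X Y, nd X → nd Y → dm X = k → dm Y = k → Ad X Y → Ad (f X) (f Y)

/-- stars go to stars -/
def StarP (k : ℕ) (f : Submodule F (Fin n → F) → Submodule F (Fin n → F)) : Prop :=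
  ∀ Z, nd Z → dm Z + 1 = k → ∃ A, dm A + 1 = k ∧ ∀ X, Z ≤ X → dm X = k → A ≤ f X

structure Gd (j k : ℕ) (f : Submodule F (Fin n → F) → Submodule F (Fin n → F)) : Prop where
  mem : ∀ X, nd X → j ≤ dm X → dm X ≤ k → dm (f X) = dm X
  inj : ∀ X Y, nd X → nd Y → j ≤ dm X → dm X ≤ k → dm X = dm Y → f X = f Y → X = Y
  adj : ∀ X Y, nd X → nd Y → j ≤ dm X → dm X ≤ k → Ad X Y → Ad (f X) (f Y)
  star : StarP j f
  mono : ∀ X Y, nd X → j ≤ dm X → dm Y ≤ k → X ≤ Y → f X ≤ f Y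
  surj : ∀ X U, nd X → j ≤ dm X → dm X < k → f X ≤ U → dm U = dm X + 1 →
    ∃ Y, X ≤ Y ∧ dm Y = dm X + 1 ∧ f Y = U

lemma Gd.of_Lv {k : ℕ} {f : Submodule F (Fin n → F) → Submodule F (Fin n → F)} (h : Lv k f)
    (hs : StarP k f) : Gd k k f where
  mem X hX h1 h2 := (h.mem X hX (by omega)).trans (by omega)
  inj X Y hX hY h1 h2 h3 := h.inj X Y hX hY (by omega) (by omega)
  adj X Y hX hY h1 h2 h3 := h.adj X Y hX hY (by omega) (by have := h3.1; omega) h3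
  star := hs
  mono X Y hX h1 h2 h3 := by
    rw [dm_eq h3 (by omega)]
  surj X U hX h1 h2 := by omega

variable [Fintype F]

lemma Gd.down {j k : ℕ} {f : Submodule F (Fin n → F) → Submodule F (Fin n → F)}
    (h : Gd (j + 1) k f) (hj : 1 ≤ j) (hjk : j + 1 ≤ k) (hkn : k + 2 ≤ n) :
    ∃ f', Gd j k f' ∧ ∀ X, dm X = k → f' X = f X := by
  classical
  have hst := h.star
  simp only [StarP] at hst
  choose! A hA1 hA2 using hst
  let f' : Submodule F (Fin n → F) → Submodule F (Fin n → F) :=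
    fun X => if dm X = j then A X else f X
  have f'hi : ∀ X, j + 1 ≤ dm X → f' X = f X := fun X hX => by
    simp only [f']; rw [if_neg (by omega)]
  have f'lo : ∀ X, dm X = j → f' X = A X := fun X hX => by
    simp only [f']; rw [if_pos hX]
  have dA : ∀ X, nd X → dm X = j → dm (A X) = j := fun X hX hd => by
    have := hA1 X hX (by omega); omega
  have lA : ∀ X Y, nd X → dm X = j → X ≤ Y → dm Y = j + 1 → A X ≤ f Y := fun X Y hX hd hXY hY =>
    hA2 X hX (by omega) Y hXY hY
  have sA : ∀ X U, nd X → dm X = j → A X ≤ U → dm U = j + 1 →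
      ∃ Y, X ≤ Y ∧ dm Y = j + 1 ∧ f Y = U := by
    intro X U hX hd hU hUd
    have := dA X hX hd
    obtain ⟨Y, hY, e⟩ := cov_surj (le_top : X ≤ ⊤) (le_top : A X ≤ ⊤) (by omega) f
      (fun Y hY => ⟨lA X Y hX hd hY.1 (by rw [hY.2.2, hd]), le_top, by
        rw [h.mem Y (nd_mono hY.1 hX) (by rw [hY.2.2]; omega) (by rw [hY.2.2]; omega), hY.2.2]; omega⟩)
      (fun Y hY Y' hY' e => h.inj Y Y' (nd_mono hY.1 hX) (nd_mono hY'.1 hX)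
        (by rw [hY.2.2]; omega) (by rw [hY.2.2]; omega) (by rw [hY.2.2, hY'.2.2]) e)
      U ⟨hU, le_top, by omega⟩
    exact ⟨Y, hY.1, by rw [hY.2.2, hd], e⟩
  have iA : ∀ X Y, nd X → nd Y → dm X = j → dm Y = j → A X = A Y → X = Y := by
    intro X Y hX hY hdX hdY e
    symm
    refine dm_eq ?_ (by omega)
    by_contra hc
    obtain ⟨y, hy, hyX⟩ := ex_not_mem' hc
    have d1 := dm_sup_span hyX
    obtain ⟨v, -, hv⟩ := ex_not_mem (A := X ⊔ Submodule.span F {y}) (B := ⊤)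
      (by rw [dmtop]; omega)
    have hv' : v ∉ X := fun hh => hv (le_sup_left (a := X) hh)
    have d2 := dm_sup_span hv'
    set U := X ⊔ Submodule.span F {v} with hU
    have hUn : nd U := nd_mono le_sup_left hX
    obtain ⟨U', hU1, hU2, hU3⟩ := sA Y (f U) hY hdY (e ▸ lA X U hX hdX le_sup_left (by omega))
      (by rw [h.mem U hUn (by omega) (by omega)]; omega)
    have : U' = U := h.inj U' U (nd_mono hU1 hY) hUn (by omega) (by omega) (by omega) hU3
    have hyU : y ∈ U := this ▸ hU1 hy
    have : X ⊔ Submodule.span F {y} = U := dm_eq (sup_le le_sup_left (span_le_iff.2 hyU)) (by omega)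
    exact hv (this ▸ le_sup_right (a := X) (mem_spv v))
  have adA : ∀ X Y, nd X → nd Y → dm X = j → Ad X Y → Ad (A X) (A Y) := by
    intro X Y hX hY hd ha
    have hdY : dm Y = j := by have := ha.1; omega
    have hs := ha.sup
    have hn : nd (X ⊔ Y) := nd_mono le_sup_left hX
    have e1 := dA X hX hd
    have e2 := dA Y hY hdY
    refine Ad.of_le (U := f (X ⊔ Y)) (by omega) (fun e => ha.ne (iA X Y hX hY hd hdY e))
      (lA X _ hX hd le_sup_left (by omega)) (lA Y _ hY hdY le_sup_right (by omega)) ?_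
    rw [h.mem _ hn (by omega) (by omega)]; omega
  refine ⟨f', ⟨?_, ?_, ?_, ?_, ?_, ?_⟩, fun X hX => f'hi X (by omega)⟩
  · intro X hX h1 h2
    rcases Nat.eq_or_lt_of_le h1 with e | e
    · rw [f'lo X e.symm, dA X hX e.symm, e]
    · rw [f'hi X e, h.mem X hX e h2]
  · intro X Y hX hY h1 h2 h3 h4
    rcases Nat.eq_or_lt_of_le h1 with e | e
    · rw [f'lo X e.symm, f'lo Y (by omega)] at h4
      exact iA X Y hX hY e.symm (by omega) h4
    · rw [f'hi X e, f'hi Y (by omega)] at h4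
      exact h.inj X Y hX hY e h2 h3 h4
  · intro X Y hX hY h1 h2 h3
    have h4 := h3.1
    rcases Nat.eq_or_lt_of_le h1 with e | e
    · rw [f'lo X e.symm, f'lo Y (by omega)]
      exact adA X Y hX hY e.symm h3
    · rw [f'hi X e, f'hi Y (by omega)]
      exact h.adj X Y hX hY e h2 h3
  · intro Z hZ hd
    have hC : (Set.image f' {X | Z ≤ X ∧ dm X = j}).Pairwise Ad := by
      rintro _ ⟨X, ⟨hX1, hX2⟩, rfl⟩ _ ⟨Y, ⟨hY1, hY2⟩, rfl⟩ hne
      rw [f'lo X hX2, f'lo Y hY2]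
      exact adA X Y (nd_mono hX1 hZ) (nd_mono hY1 hZ) hX2
        (Ad.of_ge (by omega) (fun e => hne (e ▸ rfl)) hX1 hY1 (by omega))
    obtain ⟨v1, -, hv1⟩ := ex_not_mem (A := Z) (B := ⊤) (by rw [dmtop]; omega)
    have d1 := dm_sup_span hv1
    set X1 := Z ⊔ Submodule.span F {v1}
    obtain ⟨v2, -, hv2⟩ := ex_not_mem (A := X1) (B := ⊤) (by rw [dmtop]; omega)
    have hv2' : v2 ∉ Z := fun hh => hv2 (le_sup_left (a := Z) hh)
    have d2 := dm_sup_span hv2'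
    set X2 := Z ⊔ Submodule.span F {v2}
    have m2 : v2 ∈ X2 := le_sup_right (a := Z) (mem_spv v2)
    have n1 : nd X1 := nd_mono le_sup_left hZ
    have n2 : nd X2 := nd_mono le_sup_left hZ
    have ne12 : X1 ≠ X2 := fun e => hv2 (e ▸ m2)
    have a12 : Ad X1 X2 := Ad.of_ge (A := Z) (by omega) ne12 le_sup_left le_sup_left (by omega)
    have d12 := a12.sup
    obtain ⟨v3, -, hv3⟩ := ex_not_mem (A := X1 ⊔ X2) (B := ⊤) (by rw [dmtop]; omega)
    have hv3' : v3 ∉ Z := fun hh => hv3 (le_sup_left (a := X1) (le_sup_left (a := Z) hh))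
    have d3 := dm_sup_span hv3'
    set X3 := Z ⊔ Submodule.span F {v3}
    have m3 : v3 ∈ X3 := le_sup_right (a := Z) (mem_spv v3)
    have n3 : nd X3 := nd_mono le_sup_left hZ
    have ne13 : X1 ≠ X3 := fun e => hv3 (le_sup_left (a := X1) (e ▸ m3))
    have a13 : Ad X1 X3 := Ad.of_ge (A := Z) (by omega) ne13 le_sup_left le_sup_left (by omega)
    have d13 := a13.sup
    have e1 := f'lo X1 (by omega)
    have e2 := f'lo X2 (by omega)
    have e3 := f'lo X3 (by omega)
    have b12 := adA X1 X2 n1 n2 (by omega) a12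
    have b13 := adA X1 X3 n1 n3 (by omega) a13
    have dA1 := dA X1 n1 (by omega)
    rcases clique hC (X₁ := f' X1) (X₂ := f' X2) ⟨X1, ⟨le_sup_left, by omega⟩, rfl⟩
      ⟨X2, ⟨le_sup_left, by omega⟩, rfl⟩ (by rw [e1, e2]; exact b12.ne) with hh | hh
    · refine ⟨f' X1 ⊓ f' X2, ?_, fun X hX hXd => hh _ ⟨X, ⟨hX, hXd⟩, rfl⟩⟩
      rw [e1, e2, b12.2, dA1]
    · exfalso
      have t3 := hh (f' X3) ⟨X3, ⟨le_sup_left, by omega⟩, rfl⟩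
      rw [e1, e2, e3] at t3
      have k12 : A X1 ⊔ A X2 = f (X1 ⊔ X2) := b12.sup_eq
        (lA X1 _ n1 (by omega) le_sup_left (by omega))
        (lA X2 _ n2 (by omega) le_sup_right (by omega))
        (by rw [h.mem _ (nd_mono le_sup_left n1) (by omega) (by omega)]; omega)
      have k13 : A X1 ⊔ A X3 = f (X1 ⊔ X3) := b13.sup_eq
        (lA X1 _ n1 (by omega) le_sup_left (by omega))
        (lA X3 _ n3 (by omega) le_sup_right (by omega))
        (by rw [h.mem _ (nd_mono le_sup_left n1) (by omega) (by omega)]; omega)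
      have : A X1 ⊔ A X3 = A X1 ⊔ A X2 := dm_eq (sup_le le_sup_left t3)
        (by rw [b12.sup, b13.sup])
      rw [k12, k13] at this
      have := h.inj _ _ (nd_mono le_sup_left n1) (nd_mono le_sup_left n1) (by omega) (by omega)
        (by omega) this
      exact hv3 (this ▸ le_sup_right (a := X1) m3)
  · intro X Y hX h1 h2 hXY
    rcases Nat.eq_or_lt_of_le h1 with e | e
    · rcases Nat.eq_or_lt_of_le (dm_mono hXY) with e' | e'
      · rw [dm_eq hXY (by omega)]
      · obtain ⟨U, hU1, hU2, hU3⟩ := ex_between hXY (j + 1) (by omega) (by omega)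
        rw [f'lo X e.symm, f'hi Y (by omega)]
        exact (lA X U hX e.symm hU1 hU3).trans
          (h.mono U Y (nd_mono hU1 hX) (by omega) h2 hU2)
    · rw [f'hi X e, f'hi Y (by have := dm_mono hXY; omega)]
      exact h.mono X Y hX e h2 hXY
  · intro X U hX h1 h2 hXU hU
    rcases Nat.eq_or_lt_of_le h1 with e | e
    · rw [f'lo X e.symm] at hXU
      obtain ⟨Y, hY1, hY2, hY3⟩ := sA X U hX e.symm hXU (by omega)
      exact ⟨Y, hY1, by omega, by rw [f'hi Y (by omega)]; exact hY3⟩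
    · rw [f'hi X e] at hXU
      obtain ⟨Y, hY1, hY2, hY3⟩ := h.surj X U hX e h2 hXU hU
      exact ⟨Y, hY1, by omega, by rw [f'hi Y (by omega)]; exact hY3⟩

lemma Gd.ex {k : ℕ} {f : Submodule F (Fin n → F) → Submodule F (Fin n → F)} (h : Lv k f)
    (hs : StarP k f) (hk : 1 ≤ k) (hkn : k + 2 ≤ n) :
    ∃ f', Gd 1 k f' ∧ ∀ X, dm X = k → f' X = f X := by
  have : ∀ d, d < k → ∃ f', Gd (k - d) k f' ∧ ∀ X, dm X = k → f' X = f X := by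
    intro d
    induction d with
    | zero => intro _; exact ⟨f, Gd.of_Lv h hs, fun _ _ => rfl⟩
    | succ d ih =>
      intro hd
      obtain ⟨f1, h1, h2⟩ := ih (by omega)
      rw [show k - d = (k - (d + 1)) + 1 by omega] at h1
      obtain ⟨f2, h3, h4⟩ := h1.down (by omega) (by omega) hkn
      exact ⟨f2, h3, fun X hX => (h4 X hX).trans (h2 X hX)⟩
  have := this (k - 1) (by omega)
  rwa [show k - (k - 1) = 1 by omega] at this

end Desc

set_option linter.unusedSectionVars false
set_option linter.unusedSimpArgs false
section First
variable {F : Type*} [Field F] {n : ℕ}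

lemma nd_one {X : Submodule F (Fin n → F)} (h : (1 : Fin n → F) ∈ X) : nd X :=
  nd_iff.2 fun _ => ⟨1, h, one_ne_zero⟩

lemma conn {r : ℕ} (P : Submodule F (Fin n → F) → Prop)
    (step : ∀ Z1 Z2, nd Z1 → nd Z2 → dm Z1 = r → Ad Z1 Z2 → P Z1 → P Z2) (hr : 1 ≤ r) :
    ∀ Z1 Z2, nd Z1 → nd Z2 → dm Z1 = r → dm Z2 = r → P Z1 → P Z2 := by
  have key : ∀ m, ∀ Z1 Z2 : Submodule F (Fin n → F), (1 : Fin n → F) ∈ Z1 → (1 : Fin n → F) ∈ Z2 →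
      dm Z1 = r → dm Z2 = r → r ≤ dm (Z1 ⊓ Z2) + m → P Z1 → P Z2 := by
    intro m
    induction m with
    | zero =>
      intro Z1 Z2 h1 h2 d1 d2 hm hP
      have e1 := dm_eq (inf_le_left : Z1 ⊓ Z2 ≤ Z1) (by omega)
      have e2 := dm_eq (inf_le_right : Z1 ⊓ Z2 ≤ Z2) (by omega)
      rw [← e2, e1]; exact hP
    | succ m ih =>
      intro Z1 Z2 h1 h2 d1 d2 hm hP
      by_cases hle : Z2 ≤ Z1
      · rw [dm_eq hle (by omega)]; exact hP
      obtain ⟨y, hy2, hy1⟩ := ex_not_mem' hle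
      have hlt : dm (Z1 ⊓ Z2) < dm Z1 := by
        by_contra hc
        have e1 := dm_eq (inf_le_left : Z1 ⊓ Z2 ≤ Z1) (by omega)
        have e2 : Z1 ≤ Z2 := inf_eq_left.1 e1
        exact hy1 (dm_eq e2 (by omega) ▸ hy2)
      obtain ⟨H, hH1, hH2, hH3⟩ := ex_between (inf_le_left : Z1 ⊓ Z2 ≤ Z1) (r - 1) (by omega) (by omega)
      have hyH : y ∉ H := fun h => hy1 (hH2 h)
      have d3 := dm_sup_span hyH
      have w3 : (1 : Fin n → F) ∈ H ⊔ Submodule.span F {y} := le_sup_left (a := H) (hH1 ⟨h1, h2⟩)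
      have m3 : y ∈ H ⊔ Submodule.span F {y} := le_sup_right (a := H) (mem_spv y)
      refine ih (H ⊔ Submodule.span F {y}) Z2 w3 h2 (by omega) d2 ?_
        (step Z1 _ (nd_one h1) (nd_one w3) d1 (Ad.of_ge (A := H) (by omega)
          (fun e => hy1 (e ▸ m3)) hH2 le_sup_left (by omega)) hP)
      have hyI : y ∉ Z1 ⊓ Z2 := fun h => hy1 h.1
      have d4 := dm_sup_span hyI
      have : (Z1 ⊓ Z2) ⊔ Submodule.span F {y} ≤ (H ⊔ Submodule.span F {y}) ⊓ Z2 :=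
        sup_le (le_inf (hH1.trans le_sup_left) inf_le_right)
          (le_inf le_sup_right (span_le_iff.2 hy2))
      have := dm_mono this
      omega
  have prox : ∀ Z : Submodule F (Fin n → F), nd Z → dm Z = r → ∃ Z', (1 : Fin n → F) ∈ Z' ∧ dm Z' = r ∧
      (Z = Z' ∨ Ad Z Z') := by
    intro Z hZ hd
    by_cases hw : (1 : Fin n → F) ∈ Z
    · exact ⟨Z, hw, hd, Or.inl rfl⟩
    obtain ⟨A, -, hA, hAd⟩ := ex_between (bot_le : ⊥ ≤ Z) (r - 1) (by rw [dm_bot]; omega) (by omega)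
    have d3 := dm_sup_span (fun h => hw (hA h) : (1 : Fin n → F) ∉ A)
    have m3 : (1 : Fin n → F) ∈ A ⊔ Submodule.span F {1} := le_sup_right (a := A) (mem_spv _)
    exact ⟨_, m3, by omega, Or.inr (Ad.of_ge (A := A) (by omega) (fun e => hw (e ▸ m3)) hA
      le_sup_left (by omega))⟩
  intro Z1 Z2 n1 n2 d1 d2 hP
  obtain ⟨Z1', w1, e1, c1⟩ := prox Z1 n1 d1
  obtain ⟨Z2', w2, e2, c2⟩ := prox Z2 n2 d2
  have p1 : P Z1' := by
    rcases c1 with rfl | c1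
    · exact hP
    · exact step Z1 Z1' n1 (nd_one w1) d1 c1 hP
  have p2 : P Z2' := key r Z1' Z2' w1 w2 e1 e2 (by omega) p1
  rcases c2 with rfl | c2
  · exact p2
  · exact step Z2' Z2 (nd_one w2) n2 e2 c2.symm p2

variable [Fintype F]

lemma two_ext {k : ℕ} {Z : Submodule F (Fin n → F)} (hd : dm Z + 1 = k) (hkn : k + 1 ≤ n) :
    ∃ X1 X2, Z ≤ X1 ∧ Z ≤ X2 ∧ dm X1 = k ∧ dm X2 = k ∧ X1 ≠ X2 := by
  obtain ⟨v1, -, hv1⟩ := ex_not_mem (A := Z) (B := ⊤) (by rw [dmtop]; omega)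
  have d1 := dm_sup_span hv1
  obtain ⟨v2, -, hv2⟩ := ex_not_mem (A := Z ⊔ Submodule.span F {v1}) (B := ⊤) (by rw [dmtop]; omega)
  have hv2' : v2 ∉ Z := fun hh => hv2 (le_sup_left (a := Z) hh)
  have d2 := dm_sup_span hv2'
  exact ⟨_, _, le_sup_left, le_sup_left, by omega, by omega,
    fun e => hv2 (e ▸ le_sup_right (a := Z) (mem_spv v2))⟩

lemma star_or_top {k : ℕ} {f : Submodule F (Fin n → F) → Submodule F (Fin n → F)} (h : Lv k f)
    (hkn : k + 2 ≤ n) {Z : Submodule F (Fin n → F)} (hZ : nd Z) (hd : dm Z + 1 = k) :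
    (∃ A, dm A + 1 = k ∧ ∀ X, Z ≤ X → dm X = k → A ≤ f X) ∨
    (∃ W, dm W = k + 1 ∧ ∀ X, Z ≤ X → dm X = k → f X ≤ W) := by
  obtain ⟨X1, X2, l1, l2, d1, d2, hne⟩ := two_ext hd (by omega)
  have hC : (f '' {X | Z ≤ X ∧ dm X = k}).Pairwise Ad := by
    rintro _ ⟨X, ⟨hX1, hX2⟩, rfl⟩ _ ⟨Y, ⟨hY1, hY2⟩, rfl⟩ hne
    exact h.adj X Y (nd_mono hX1 hZ) (nd_mono hY1 hZ) hX2 hY2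
      (Ad.of_ge (by omega) (fun e => hne (e ▸ rfl)) hX1 hY1 (by omega))
  have a12 := h.adj X1 X2 (nd_mono l1 hZ) (nd_mono l2 hZ) d1 d2
    (Ad.of_ge (by omega) hne l1 l2 (by omega))
  have e1 := h.mem X1 (nd_mono l1 hZ) d1
  rcases clique hC (X₁ := f X1) (X₂ := f X2) ⟨X1, ⟨l1, d1⟩, rfl⟩ ⟨X2, ⟨l2, d2⟩, rfl⟩ a12.ne with hh | hh
  · left
    exact ⟨_, by rw [a12.2, e1], fun X hX hXd => hh _ ⟨X, ⟨hX, hXd⟩, rfl⟩⟩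
  · right
    exact ⟨_, by rw [a12.sup, e1], fun X hX hXd => hh _ ⟨X, ⟨hX, hXd⟩, rfl⟩⟩

lemma cov_top_inj {k : ℕ} {f : Submodule F (Fin n → F) → Submodule F (Fin n → F)} (h : Lv k f)
    {Z : Submodule F (Fin n → F)} (hZ : nd Z) (hd : dm Z + 1 = k) : Set.InjOn f (cov Z ⊤) :=
  fun X hX Y hY e => h.inj X Y (nd_mono hX.1 hZ) (nd_mono hY.1 hZ) (by rw [hX.2.2, hd])
    (by rw [hY.2.2, hd]) e

lemma first_gt {k : ℕ} {f : Submodule F (Fin n → F) → Submodule F (Fin n → F)} (h : Lv k f)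
    (hkn : k + 2 ≤ n) (h2 : 2 * k < n) : StarP k f := by
  intro Z hZ hd
  rcases star_or_top h hkn hZ hd with hh | ⟨W, hW, hh⟩
  · exact hh
  exfalso
  have h1 : f '' (cov Z ⊤) ⊆ {X | X ≤ W ∧ dm X = k} := by
    rintro _ ⟨X, hX, rfl⟩
    have : dm X = k := by rw [hX.2.2, hd]
    exact ⟨hh X hX.1 this, h.mem X (nd_mono hX.1 hZ) this⟩
  have h3 := Set.ncard_le_ncard h1 (Set.toFinite _)
  rw [(cov_top_inj h hZ hd).ncard_image, ncard_cov le_top, ncard_top _ _ hW, dmtop] at h3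
  have := gauss_lt (q := Fintype.card F) two_le_card (a := k + 1) (b := n - dm Z) (by omega)
  omega

lemma first_eq {k : ℕ} {f : Submodule F (Fin n → F) → Submodule F (Fin n → F)} (h : Lv k f)
    (hk : 1 < k) (h2 : 2 * k = n) : StarP k f ∨
      ∀ Z, nd Z → dm Z + 1 = k → ∃ W, dm W = k + 1 ∧ ∀ X, Z ≤ X → dm X = k → f X ≤ W := by
  by_cases hs : StarP k f
  · exact Or.inl hs
  right
  simp only [StarP] at hs
  push Not at hs
  obtain ⟨Z0, n0, d0, hs⟩ := hs
  have t0 : ∃ W, dm W = k + 1 ∧ ∀ X, Z0 ≤ X → dm X = k → f X ≤ W := by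
    rcases star_or_top h (by omega) n0 d0 with ⟨A, hA, hh⟩ | hh
    · obtain ⟨X, h1, h2, h3⟩ := hs A hA
      exact absurd (hh X h1 h2) h3
    · exact hh
  intro Z hZ hd
  refine conn (r := k - 1) (fun Z => ∃ W, dm W = k + 1 ∧ ∀ X, Z ≤ X → dm X = k → f X ≤ W)
    ?_ (by omega) Z0 Z n0 hZ (by omega) (by omega) t0
  clear! Z Z0
  rintro Z2 Z1 n2 n1 d2 ha ⟨W, hW, hW'⟩
  have d1 := ha.1
  rcases star_or_top h (by omega) n1 (by omega) with ⟨A, hA, hA'⟩ | hh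
  swap
  · exact hh
  exfalso
  have ds := ha.sup
  have ns : nd (Z2 ⊔ Z1) := nd_mono le_sup_left n2
  have dfs := h.mem _ ns (by omega)
  have lA := hA' _ le_sup_right (show dm (Z2 ⊔ Z1) = k by omega)
  have lW := hW' _ le_sup_left (show dm (Z2 ⊔ Z1) = k by omega)
  obtain ⟨v, hvW, hv⟩ := ex_not_mem (A := f (Z2 ⊔ Z1)) (B := W) (by omega)
  have dX := dm_sup_span (fun h => hv (lA h) : v ∉ A)
  set X' := A ⊔ Submodule.span F {v} with hX'
  have hvX : v ∈ X' := le_sup_right (a := A) (mem_spv v)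
  obtain ⟨X1, hX1, e1⟩ := cov_surj (le_top : Z1 ≤ ⊤) (le_top : A ≤ ⊤) (by omega) f
    (fun X hX => by
      have : dm X = k := by rw [hX.2.2]; omega
      exact ⟨hA' X hX.1 this, le_top, by rw [h.mem X (nd_mono hX.1 n1) this]; omega⟩)
    (cov_top_inj h n1 (by omega)) X' ⟨le_sup_left, le_top, dX⟩
  have h1 : f '' (cov Z2 ⊤) ⊆ {X | X ≤ W ∧ dm X = k} := by
    rintro _ ⟨X, hX, rfl⟩
    have : dm X = k := by rw [hX.2.2]; omega
    exact ⟨hW' X hX.1 this, h.mem X (nd_mono hX.1 n2) this⟩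
  have h3 := Set.eq_of_subset_of_ncard_le h1 (by
    rw [(cov_top_inj h n2 (by omega)).ncard_image, ncard_cov le_top, ncard_top _ _ hW, dmtop]
    rw [show n - dm Z2 = k + 1 by omega]) (Set.toFinite _)
  have h4 : X' ∈ {X | X ≤ W ∧ dm X = k} :=
    ⟨sup_le (lA.trans lW) (span_le_iff.2 hvW), by omega⟩
  rw [← h3] at h4
  obtain ⟨X2, hX2, e2⟩ := h4
  have c1 : dm X1 = k := by rw [hX1.2.2]; omega
  have c2 : dm X2 = k := by rw [hX2.2.2]; omega
  have := h.inj X1 X2 (nd_mono hX1.1 n1) (nd_mono hX2.1 n2) c1 c2 (e1.trans e2.symm)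
  have hle : Z2 ⊔ Z1 ≤ X1 := sup_le (this ▸ hX2.1) hX1.1
  have : Z2 ⊔ Z1 = X1 := dm_eq hle (by omega)
  rw [this, e1] at hv
  exact hv hvX

lemma tc_card {k : ℕ} {Y : Submodule F (Fin n → F)} (hY : nd Y) (hd : dm Y = k + 1) :
    gaussNum (Fintype.card F) (k + 1) ≤ {X | X ≤ Y ∧ dm X = k ∧ nd X}.ncard + n := by
  rw [← ncard_top _ _ hd]
  have h1 : {X | X ≤ Y ∧ dm X = k} ⊆ {X | X ≤ Y ∧ dm X = k ∧ nd X} ∪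
      Set.range (fun i : Fin n => Y ⊓ coordHyp F n i) := by
    rintro X ⟨h1, h2⟩
    by_cases hX : nd X
    · exact Or.inl ⟨h1, h2, hX⟩
    · right
      simp only [nd, not_forall, not_not] at hX
      obtain ⟨i, hi⟩ := hX
      refine ⟨i, (dm_eq (le_inf h1 hi) ?_).symm⟩
      have := dm_lt (inf_le_left : Y ⊓ coordHyp F n i ≤ Y) (fun e => hY i (inf_eq_left.1 e))
      omega
  refine (Set.ncard_le_ncard h1 (Set.toFinite _)).trans ((Set.ncard_union_le _ _).trans ?_)
  have : (Set.range (fun i : Fin n => Y ⊓ coordHyp F n i)).ncard ≤ n := by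
    rw [← Set.image_univ]
    refine (Set.ncard_image_le (Set.toFinite _)).trans ?_
    rw [Set.ncard_univ]; simp
  omega

lemma pow_gt {k : ℕ} (hk : 3 ≤ k) : 2 * k < 2 ^ k := by
  induction k, hk using Nat.le_induction with
  | base => norm_num
  | succ m _ ih => rw [pow_succ]; omega

lemma gauss_ge {q : ℕ} (hq : 2 ≤ q) (d : ℕ) : 2 ^ d ≤ gaussNum q d + 1 := by
  induction d with
  | zero => simp
  | succ d ih => rw [gauss_succ, pow_succ]; have := Nat.pow_le_pow_left hq d; omega

lemma first_lt {k : ℕ} {f : Submodule F (Fin n → F) → Submodule F (Fin n → F)} (h : Lv k f)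
    (hkn : k + 2 ≤ n) (h2 : n < 2 * k) : StarP k f := by
  have hk3 := pow_gt (show 3 ≤ k by omega)
  have q2 : 2 ≤ Fintype.card F := two_le_card
  have hq := Nat.pow_le_pow_left q2 k
  have hg := gauss_ge q2 (k + 1)
  have top : ∀ Y, nd Y → dm Y = k + 1 → ∃ W, dm W = k + 1 ∧ ∀ X, X ≤ Y → dm X = k → nd X → f X ≤ W := by
    intro Y hY hd
    have hc := tc_card hY hd
    have hgs := gauss_succ (Fintype.card F) k
    have ii : Set.InjOn f {X | X ≤ Y ∧ dm X = k ∧ nd X} := fun X hX X' hX' e =>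
      h.inj X X' hX.2.2 hX'.2.2 hX.2.1 hX'.2.1 e
    have hC : (f '' {X | X ≤ Y ∧ dm X = k ∧ nd X}).Pairwise Ad := by
      rintro _ ⟨X, hX, rfl⟩ _ ⟨X', hX', rfl⟩ hne
      exact h.adj X X' hX.2.2 hX'.2.2 hX.2.1 hX'.2.1
        (Ad.of_le (hX.2.1.trans hX'.2.1.symm) (fun e => hne (e ▸ rfl)) hX.1 hX'.1 (by rw [hd, hX.2.1]))
    have h1 : 1 < {X | X ≤ Y ∧ dm X = k ∧ nd X}.ncard := by
      have : 1 ≤ gaussNum (Fintype.card F) k :=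
        (gauss_mono (q := Fintype.card F) (show 1 ≤ k by omega)).trans' (by simp [gaussNum])
      omega
    obtain ⟨X1, hX1, X2, hX2, hne⟩ := (Set.one_lt_ncard (Set.toFinite _)).1 h1
    have a12 := hC ⟨X1, hX1, rfl⟩ ⟨X2, hX2, rfl⟩ (fun e => hne (ii hX1 hX2 e))
    have e1 := h.mem X1 hX1.2.2 hX1.2.1
    rcases clique hC ⟨X1, hX1, rfl⟩ ⟨X2, hX2, rfl⟩ a12.ne with hh | hh
    · exfalso
      have da := a12.2
      have : f '' {X | X ≤ Y ∧ dm X = k ∧ nd X} ⊆ cov (f X1 ⊓ f X2) ⊤ := by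
        rintro _ ⟨X, hX, rfl⟩
        exact ⟨hh _ ⟨X, hX, rfl⟩, le_top, by rw [h.mem X hX.2.2 hX.2.1, da, e1]⟩
      have := Set.ncard_le_ncard this (Set.toFinite _)
      rw [ii.ncard_image, ncard_cov le_top, dmtop] at this
      have := gauss_mono (q := Fintype.card F) (show n - dm (f X1 ⊓ f X2) ≤ k by omega)
      omega
    · exact ⟨_, by rw [a12.sup, e1], fun X x1 x2 x3 => hh _ ⟨X, ⟨x1, x2, x3⟩, rfl⟩⟩
  intro Z hZ hd
  rcases star_or_top h hkn hZ hd with hh | ⟨W, hW, hh⟩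
  · exact hh
  exfalso
  have tW : ∀ Y, Z ≤ Y → dm Y = k + 1 → ∀ X, X ≤ Y → dm X = k → nd X → f X ≤ W := by
    intro Y hZY hY
    obtain ⟨W', hW', hh'⟩ := top Y (nd_mono hZY hZ) hY
    obtain ⟨v1, hv1Y, hv1⟩ := ex_not_mem (A := Z) (B := Y) (by omega)
    have d1 := dm_sup_span hv1
    obtain ⟨v2, hv2Y, hv2⟩ := ex_not_mem (A := Z ⊔ Submodule.span F {v1}) (B := Y) (by omega)
    have hv2' : v2 ∉ Z := fun hh => hv2 (le_sup_left (a := Z) hh)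
    have d2 := dm_sup_span hv2'
    have n1 : nd (Z ⊔ Submodule.span F {v1}) := nd_mono le_sup_left hZ
    have n2 : nd (Z ⊔ Submodule.span F {v2}) := nd_mono le_sup_left hZ
    have a12 := h.adj _ _ n1 n2 (by omega) (by omega)
      (Ad.of_ge (A := Z) (by omega) (fun e => hv2 (e ▸ le_sup_right (a := Z) (mem_spv v2)))
        le_sup_left le_sup_left (by omega))
    have e1 := h.mem _ n1 (by omega)
    have s1 := a12.sup_eq (hh _ le_sup_left (by omega)) (hh _ le_sup_left (by omega)) (by omega)
    have s2 := a12.sup_eq (hh' _ (sup_le hZY (span_le_iff.2 hv1Y)) (by omega) n1)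
      (hh' _ (sup_le hZY (span_le_iff.2 hv2Y)) (by omega) n2) (by omega)
    rw [← s1, s2]; exact hh'
  obtain ⟨X0, hX0, -, dX0⟩ := ex_between (le_top : Z ≤ ⊤) k (by omega) (by rw [dmtop]; omega)
  obtain ⟨Y1, Y2, l1, l2, d1, d2, hne⟩ := two_ext (k := k + 1) (Z := X0) (by omega) (by omega)
  have a12 : Ad Y1 Y2 := Ad.of_ge (A := X0) (by omega) hne l1 l2 (by omega)
  have c1 := tc_card (nd_mono (hX0.trans l1) hZ) d1
  have c2 := tc_card (nd_mono (hX0.trans l2) hZ) d2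
  set T1 := {X | X ≤ Y1 ∧ dm X = k ∧ nd X} with hT1
  set T2 := {X | X ≤ Y2 ∧ dm X = k ∧ nd X} with hT2
  have hi : (T1 ∩ T2).ncard ≤ 1 := by
    rw [← Set.ncard_singleton (Y1 ⊓ Y2)]
    refine Set.ncard_le_ncard ?_ (Set.toFinite _)
    rintro X ⟨x1, x2⟩
    exact dm_eq (le_inf x1.1 x2.1) (by have := a12.2; have := x1.2.1; omega)
  have hu := Set.ncard_union_add_ncard_inter T1 T2 (Set.toFinite _) (Set.toFinite _)
  have ii : Set.InjOn f (T1 ∪ T2) := by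
    intro X hX X' hX' e
    have g1 : dm X = k ∧ nd X := by rcases hX with hX | hX <;> exact hX.2
    have g2 : dm X' = k ∧ nd X' := by rcases hX' with hX | hX <;> exact hX.2
    exact h.inj X X' g1.2 g2.2 g1.1 g2.1 e
  have hsub : f '' (T1 ∪ T2) ⊆ {X | X ≤ W ∧ dm X = k} := by
    rintro _ ⟨X, hX | hX, rfl⟩
    · exact ⟨tW Y1 (hX0.trans l1) d1 X hX.1 hX.2.1 hX.2.2, h.mem X hX.2.2 hX.2.1⟩
    · exact ⟨tW Y2 (hX0.trans l2) d2 X hX.1 hX.2.1 hX.2.2, h.mem X hX.2.2 hX.2.1⟩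
  have := Set.ncard_le_ncard hsub (Set.toFinite _)
  rw [ii.ncard_image, ncard_top _ _ hW] at this
  rw [pow_succ] at hg
  omega

lemma Lv.du {k : ℕ} {f : Submodule F (Fin n → F) → Submodule F (Fin n → F)} (h : Lv k f)
    (h2 : 2 * k = n) : Lv k (fun X => _root_.du (f X)) where
  mem X hX hd := by rw [du_dm, h.mem X hX hd]; omega
  inj X Y hX hY hdX hdY e := h.inj X Y hX hY hdX hdY (du_inj e)
  adj X Y hX hY hdX hdY ha := du_Ad.2 (h.adj X Y hX hY hdX hdY ha)

lemma first {k : ℕ} {f : Submodule F (Fin n → F) → Submodule F (Fin n → F)} (h : Lv k f)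
    (hk : 1 < k) (hkn : k + 2 ≤ n) : StarP k f ∨ (2 * k = n ∧ StarP k (fun X => du (f X))) := by
  rcases lt_trichotomy (2 * k) n with h2 | h2 | h2
  · exact Or.inl (first_gt h hkn h2)
  · rcases first_eq h hk h2 with hh | hh
    · exact Or.inl hh
    · right
      refine ⟨h2, fun Z hZ hd => ?_⟩
      obtain ⟨W, hW, hW'⟩ := hh Z hZ hd
      exact ⟨du W, by rw [du_dm]; omega, fun X hX hXd => du_le.2 (hW' X hX hXd)⟩
  · exact Or.inl (first_lt h hkn h2)

end First

set_option linter.unusedSectionVars false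
set_option linter.unusedSimpArgs false
section BigQ
variable {F : Type*} [Field F] {n : ℕ}

/-- nowhere zero vector -/
def ndv (w : Fin n → F) : Prop := ∀ i, w i ≠ 0

lemma nd_of_ndv {w : Fin n → F} {X : Submodule F (Fin n → F)} (hw : ndv w) (h : w ∈ X) : nd X :=
  nd_iff.2 fun i => ⟨w, h, hw i⟩

lemma top_of_single {A : Submodule F (Fin n → F)} (h : ∀ i, Pi.single i (1 : F) ∈ A) : dm A = n := by
  have : A = ⊤ := by
    rw [Submodule.eq_top_iff']
    intro x
    rw [pi_eq_sum_univ' x]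
    refine Submodule.sum_mem _ fun i _ => Submodule.smul_mem _ _ ?_
    convert h i using 1
  rw [this, dmtop]

variable [Fintype F]

lemma ex_avoid (hq : 3 ≤ Fintype.card F) (x : F) : ∃ y : F, y ≠ 0 ∧ y ≠ x := by
  classical
  by_contra hc
  push Not at hc
  have : (Finset.univ : Finset F) ⊆ {0, x} := by
    intro y _
    by_cases h : y = 0
    · simp [h]
    · simp [hc y h]
  have := (Finset.card_le_card this).trans Finset.card_le_two
  rw [Finset.card_univ] at this
  omega

lemma pregood (hq : 3 ≤ Fintype.card F) {A L : Submodule F (Fin n → F)} (hA : dm A < n)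
    (hL : dm L = 2) : ∃ w a, w ∉ A ∧ a ∈ L ∧ a ≠ 0 ∧ ndv w ∧ ndv (w + a) := by
  classical
  by_contra hc
  push Not at hc
  have : dm A = n := by
    apply top_of_single
    intro i
    obtain ⟨a, haL, ha0, hai⟩ : ∃ a ∈ L, a ≠ 0 ∧ a i = 0 := by
      obtain ⟨u, hu, hu'⟩ := ex_not_mem (A := (⊥ : Submodule F (Fin n → F))) (B := L) (by rw [dm_bot]; omega)
      have hu0 : u ≠ 0 := by simpa using hu'
      obtain ⟨v, hv, hv'⟩ := ex_not_mem (A := Submodule.span F {u}) (B := L) (by rw [dm_span hu0]; omega)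
      by_cases hui : u i = 0
      · exact ⟨u, hu, hu0, hui⟩
      refine ⟨v - (v i / u i) • u, L.sub_mem hv (L.smul_mem _ hu), ?_, ?_⟩
      · intro e
        exact hv' (Submodule.mem_span_singleton.2 ⟨v i / u i, (sub_eq_zero.1 e).symm⟩)
      · simp [hui]
    choose y hy0 hy using fun x => ex_avoid hq (x : F)
    let w : F → Fin n → F := fun c j => if j = i then c else y (-a j)
    have hw : ∀ c, c ≠ 0 → w c ∈ A := by
      intro c hc0
      by_contra hcA
      refine hc (w c) a hcA haL ha0 ?_ ?_
      · intro j
        by_cases hj : j = i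
        · simp [w, hj, hc0]
        · simp [w, hj, hy0]
      · intro j
        by_cases hj : j = i
        · simp [w, hj, hc0, hai]
        · simp only [w, hj, Pi.add_apply, if_false]
          intro e
          exact hy (-a j) (eq_neg_of_add_eq_zero_left e)
    have h1 := hw 1 one_ne_zero
    have h2 := hw (y 1) (hy0 1)
    have h3 : (y 1 - 1)⁻¹ • (w (y 1) - w 1) = Pi.single i (1 : F) := by
      have : y 1 - 1 ≠ 0 := sub_ne_zero.2 (hy 1)
      ext j
      by_cases hj : j = i
      · subst hj; simp [w, this]
      · simp [w, hj, Pi.single_apply]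
    rw [← h3]
    exact A.smul_mem _ (A.sub_mem h2 h1)
  omega

lemma ex_ndv (hq : 3 ≤ Fintype.card F) (hn : 2 ≤ n) {A : Submodule F (Fin n → F)} (hA : dm A < n) :
    ∃ w, w ∉ A ∧ ndv w := by
  obtain ⟨L, -, -, hL⟩ := ex_between (bot_le : (⊥ : Submodule F (Fin n → F)) ≤ ⊤) 2
    (by rw [dm_bot]; omega) (by rw [dmtop]; omega)
  obtain ⟨w, a, h1, -, -, h2, -⟩ := pregood hq hA hL
  exact ⟨w, h1, h2⟩

variable {k : ℕ} {Φ : Submodule F (Fin n → F) → Submodule F (Fin n → F)}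

lemma Gd.refl (h : Gd 1 k Φ) {A B : Submodule F (Fin n → F)} (hA : nd A) (hB : nd B)
    (h1 : 1 ≤ dm A) (h2 : dm B = dm A + 1) (h3 : dm B ≤ k) (hle : Φ A ≤ Φ B) : A ≤ B := by
  obtain ⟨Y, hY1, hY2, hY3⟩ := h.surj A (Φ B) hA h1 (by omega) hle
    (by rw [h.mem B hB (by omega) h3]; omega)
  rw [← h.inj Y B (nd_mono hY1 hA) hB (by omega) (by omega) (by omega) hY3]
  exact hY1

lemma Gd.lineW (h : Gd 1 k Φ) (hk : 2 ≤ k) {w : Fin n → F} (hw : ndv w) (hw0 : w ≠ 0)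
    {l m W : Submodule F (Fin n → F)} (hwl : w ∈ l) (hwm : w ∉ m) (hm : nd m) (hl2 : dm l = 2)
    (ha : Ad l m) (hW : Φ (Submodule.span F {w}) ≤ W) (hmW : Φ m ≤ W) : Φ l ≤ W := by
  have n1 : nd (Submodule.span F {w}) := nd_of_ndv hw (mem_spv w)
  have nl : nd l := nd_of_ndv hw hwl
  have hm2 : dm m = 2 := by have := ha.1; omega
  have dw := dm_span (F := F) hw0
  have d1 := h.mem _ n1 (by omega) (by omega)
  have dl := h.mem l nl (by omega) (by omega)
  have a2 := h.adj l m nl hm (by omega) (by omega) ha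
  have hle := h.mono _ l n1 (by omega) (by omega) (span_le_iff.2 hwl)
  have hnle : ¬ Φ (Submodule.span F {w}) ≤ Φ m := fun hc =>
    hwm (span_le_iff.1 (h.refl n1 hm (by omega) (by omega) (by omega) hc))
  have := line_eq (P := Φ (Submodule.span F {w})) (Q := Φ l ⊓ Φ m) (L := Φ l) (by omega)
    (by have := a2.2; omega) (fun e => hnle (e ▸ inf_le_right)) hle inf_le_left (by omega)
  rw [← this]
  exact sup_le hW (inf_le_right.trans hmW)

lemma notin_span_sup {A : Submodule F (Fin n → F)} {v w : Fin n → F} (hv : v ∉ A)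
    (hw : w ∉ A ⊔ Submodule.span F {v}) : v ∉ A ⊔ Submodule.span F {w} := by
  intro h
  have hwA : w ∉ A := fun h => hw (le_sup_left (a := A) h)
  have d1 := dm_sup_span hv
  have d2 := dm_sup_span hwA
  have : A ⊔ Submodule.span F {v} = A ⊔ Submodule.span F {w} :=
    dm_eq (sup_le le_sup_left (span_le_iff.2 h)) (by omega)
  exact hw (this ▸ le_sup_right (a := A) (mem_spv w))

lemma ndv_ne (hn : 1 ≤ n) {w : Fin n → F} (hw : ndv w) : w ≠ 0 := fun h => hw ⟨0, hn⟩ (by simp [h])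

lemma ex_pt (hq : 3 ≤ Fintype.card F) (h : Gd 1 k Φ) (hk : 2 ≤ k) (hkn : k + 2 ≤ n)
    (P : Submodule F (Fin n → F)) (hP : dm P = 1) :
    ∃ p, dm p = 1 ∧ ∀ w, ndv w → w ∉ P → p ≤ Φ (P ⊔ Submodule.span F {w}) := by
  by_cases hnP : nd P
  · refine ⟨Φ P, by rw [h.mem P hnP (by omega) (by omega), hP], fun w _ hw => ?_⟩
    exact h.mono P _ hnP (by omega) (by rw [dm_sup_span hw]; omega) le_sup_left
  obtain ⟨w1, m1, v1⟩ := ex_ndv hq (by omega) (A := P) (by omega)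
  have z1 := ndv_ne (by omega) v1
  have d1 := dm_sup_span m1
  obtain ⟨w2, m2, v2⟩ := ex_ndv hq (by omega) (A := P ⊔ Submodule.span F {w1}) (by omega)
  have m2' : w2 ∉ P := fun h => m2 (le_sup_left (a := P) h)
  have d2 := dm_sup_span m2'
  have d12 := dm_sup_span m2
  obtain ⟨w3, m3, v3⟩ := ex_ndv hq (by omega)
    (A := P ⊔ Submodule.span F {w1} ⊔ Submodule.span F {w2}) (by omega)
  have m3a : w3 ∉ P ⊔ Submodule.span F {w1} := fun h => m3 (le_sup_left (a := P ⊔ Submodule.span F {w1}) h)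
  have m3' : w3 ∉ P := fun h => m3a (le_sup_left (a := P) h)
  have d3 := dm_sup_span m3'
  have i1 : w1 ∈ P ⊔ Submodule.span F {w1} := le_sup_right (a := P) (mem_spv w1)
  have i2 : w2 ∈ P ⊔ Submodule.span F {w2} := le_sup_right (a := P) (mem_spv w2)
  have i3 : w3 ∈ P ⊔ Submodule.span F {w3} := le_sup_right (a := P) (mem_spv w3)
  have hC : {X | ∃ w, ndv w ∧ w ∉ P ∧ X = Φ (P ⊔ Submodule.span F {w})}.Pairwise Ad := by
    rintro _ ⟨w, hw, hwP, rfl⟩ _ ⟨w', hw', hwP', rfl⟩ hne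
    have e1 := dm_sup_span hwP
    have e2 := dm_sup_span hwP'
    exact h.adj _ _ (nd_of_ndv hw (le_sup_right (a := P) (mem_spv w)))
      (nd_of_ndv hw' (le_sup_right (a := P) (mem_spv w'))) (by omega) (by omega)
      (Ad.of_ge (A := P) (by omega) (fun e => hne (by rw [e])) le_sup_left le_sup_left (by omega))
  have a12 : Ad (Φ (P ⊔ Submodule.span F {w1})) (Φ (P ⊔ Submodule.span F {w2})) := by
    exact h.adj _ _ (nd_of_ndv v1 i1) (nd_of_ndv v2 i2) (by omega) (by omega)
      (Ad.of_ge (A := P) (by omega) (fun e => m2 (e ▸ i2)) le_sup_left le_sup_left (by omega))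
  have e1 := h.mem _ (nd_of_ndv v1 i1) (by omega) (by omega)
  rcases clique hC ⟨w1, v1, m1, rfl⟩ ⟨w2, v2, m2', rfl⟩ a12.ne with hh | hh
  · exact ⟨_, by have := a12.2; omega, fun w hw hwP => hh _ ⟨w, hw, hwP, rfl⟩⟩
  exfalso
  have x3 := hh _ ⟨w3, v3, m3', rfl⟩
  have dW := a12.sup
  set W := Φ (P ⊔ Submodule.span F {w1}) ⊔ Φ (P ⊔ Submodule.span F {w2}) with hW
  have n1 : nd (Submodule.span F {w1}) := nd_of_ndv v1 (mem_spv w1)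
  have dw1 := dm_span (F := F) z1
  have dfw1 := h.mem _ n1 (by omega) (by omega)
  have lw1 : Φ (Submodule.span F {w1}) ≤ W :=
    (h.mono _ _ n1 (by omega) (by omega) le_sup_right).trans (le_sup_left)
  have w1Y : Submodule.span F {w1} ≤ P ⊔ Submodule.span F {w1} ⊔ Submodule.span F {w2} :=
    le_sup_right.trans le_sup_left
  have n12 : w1 ∉ P ⊔ Submodule.span F {w2} := notin_span_sup m1 m2
  have n13 : w1 ∉ P ⊔ Submodule.span F {w3} := notin_span_sup m1 m3a
  have m13 : w3 ∉ Submodule.span F {w1} := fun h => m3a (le_sup_right (a := P) h)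
  have d13 := dm_sup_span m13
  have i13 : w1 ∈ Submodule.span F {w1} ⊔ Submodule.span F {w3} :=
    le_sup_left (a := Submodule.span F {w1}) (mem_spv w1)
  have nn13 := nd_of_ndv v1 i13
  have W13 : Φ (Submodule.span F {w1} ⊔ Submodule.span F {w3}) ≤ W := by
    refine h.lineW hk v1 z1 i13 n13 (nd_of_ndv v3 i3) (by omega) ?_ lw1 x3
    exact Ad.of_ge (A := Submodule.span F {w3}) (by omega) (fun e => n13 (e ▸ i13)) le_sup_right
      le_sup_right (by rw [dm_span (ndv_ne (by omega) v3)]; omega)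
  obtain ⟨l, hl, el⟩ := cov_surj w1Y lw1 (by omega) Φ
    (fun l hl => by
      have hwl : w1 ∈ l := span_le_iff.1 hl.1
      have hl2 : dm l = 2 := by rw [hl.2.2, dw1]
      have hln := nd_of_ndv v1 hwl
      refine ⟨h.mono _ _ n1 (by omega) (by omega) hl.1, ?_, ?_⟩
      · refine h.lineW hk v1 z1 hwl n12 (nd_of_ndv v2 i2) (by omega) ?_ lw1 le_sup_right
        exact Ad.of_le (by omega) (fun e => n12 (e ▸ hwl)) hl.2.1
          (sup_le (le_sup_left.trans le_sup_left) le_sup_right) (by omega)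
      · rw [h.mem l hln (by omega) (by omega)]; omega)
    (fun l hl l' hl' e => by
      have hwl : w1 ∈ l := span_le_iff.1 hl.1
      have hl2 : dm l = 2 := by rw [hl.2.2, dw1]
      have hwl' : w1 ∈ l' := span_le_iff.1 hl'.1
      have hl2' : dm l' = 2 := by rw [hl'.2.2, dw1]
      exact h.inj l l' (nd_of_ndv v1 hwl) (nd_of_ndv v1 hwl') (by omega) (by omega) (by omega) e)
    (Φ (Submodule.span F {w1} ⊔ Submodule.span F {w3}))
    ⟨h.mono _ _ n1 (by omega) (by omega) le_sup_left, W13, by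
      rw [h.mem _ nn13 (by omega) (by omega)]; omega⟩
  have hwl : w1 ∈ l := span_le_iff.1 hl.1
  have hl2 : dm l = 2 := by rw [hl.2.2, dw1]
  have := h.inj l _ (nd_of_ndv v1 hwl) nn13 (by omega) (by omega) (by omega) el
  exact m3 (hl.2.1 (this ▸ le_sup_right (a := Submodule.span F {w1}) (mem_spv w3)))

theorem caseBig (hq : 3 ≤ Fintype.card F) (h : Gd 1 k Φ) (hk : 2 ≤ k) (hkn : k + 2 ≤ n) :
    ∃ G : Submodule F (Fin n → F) ≃o Submodule F (Fin n → F),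
      ∀ X, dm X = k → (∃ w ∈ X, ndv w) → Φ X = G X := by
  have hg := ex_pt hq h hk hkn
  choose! g g1 g2 using hg
  have gw : ∀ w, ndv w → g (Submodule.span F {w}) = Φ (Submodule.span F {w}) := by
    intro w hw
    have w0 := ndv_ne (by omega) hw
    have dw := dm_span (F := F) w0
    have nw : nd (Submodule.span F {w}) := nd_of_ndv hw (mem_spv w)
    obtain ⟨w1, m1, v1⟩ := ex_ndv hq (by omega) (A := Submodule.span F {w}) (by omega)
    have d1 := dm_sup_span m1
    obtain ⟨w2, m2, v2⟩ := ex_ndv hq (by omega) (A := Submodule.span F {w} ⊔ Submodule.span F {w1}) (by omega)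
    have m2' : w2 ∉ Submodule.span F {w} := fun h => m2 (le_sup_left (a := Submodule.span F {w}) h)
    have d2 := dm_sup_span m2'
    have n1 : nd (Submodule.span F {w} ⊔ Submodule.span F {w1}) := nd_mono le_sup_left nw
    have n2 : nd (Submodule.span F {w} ⊔ Submodule.span F {w2}) := nd_mono le_sup_left nw
    have a12 := h.adj _ _ n1 n2 (by omega) (by omega)
      (Ad.of_ge (A := Submodule.span F {w}) (by omega)
        (fun e => m2 (e ▸ le_sup_right (a := Submodule.span F {w}) (mem_spv w2))) le_sup_left le_sup_left (by omega))
    have e1 := h.mem _ n1 (by omega) (by omega)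
    have e0 := h.mem _ nw (by omega) (by omega)
    have gd := g1 _ dw
    have c1 := a12.inf_eq (g2 _ dw w1 v1 m1) (g2 _ dw w2 v2 m2') (by omega)
    have c2 := a12.inf_eq (h.mono _ _ nw (by omega) (by omega) le_sup_left)
      (h.mono _ _ nw (by omega) (by omega) le_sup_left) (by omega)
    rw [← c1, c2]
  have gi : ∀ P Q, dm P = 1 → dm Q = 1 → g P = g Q → P = Q := by
    intro P Q hP hQ e
    by_contra hne
    have dPQ := line_dm hP hQ hne
    have key : ∀ w, ndv w → w ∉ P ⊔ Q → g P = Φ (Submodule.span F {w}) := by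
      intro w hw hwPQ
      by_contra hc
      have w0 := ndv_ne (by omega) hw
      have dw := dm_span (F := F) w0
      have nw : nd (Submodule.span F {w}) := nd_of_ndv hw (mem_spv w)
      have hwP : w ∉ P := fun h => hwPQ (le_sup_left (a := P) h)
      have hwQ : w ∉ Q := fun h => hwPQ (le_sup_right (a := P) h)
      have d1 := dm_sup_span hwP
      have d2 := dm_sup_span hwQ
      have n1 : nd (P ⊔ Submodule.span F {w}) := nd_mono le_sup_right nw
      have n2 : nd (Q ⊔ Submodule.span F {w}) := nd_mono le_sup_right nw
      have e0 := h.mem _ nw (by omega) (by omega)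
      have e1 := h.mem _ n1 (by omega) (by omega)
      have e2 := h.mem _ n2 (by omega) (by omega)
      have c1 := line_eq (g1 P hP) (by omega) hc (g2 P hP w hw hwP)
        (h.mono _ _ nw (by omega) (by omega) le_sup_right) (by omega)
      have c2 := line_eq (g1 P hP) (by omega) hc (e ▸ g2 Q hQ w hw hwQ)
        (h.mono _ _ nw (by omega) (by omega) le_sup_right) (by omega)
      have := h.inj _ _ n1 n2 (by omega) (by omega) (by omega) (c1.symm.trans c2)
      have h1 : P ⊔ Q ≤ P ⊔ Submodule.span F {w} := sup_le le_sup_left (this ▸ le_sup_left)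
      have h2 := dm_eq h1 (by omega)
      exact hwPQ (h2 ▸ le_sup_right (a := P) (mem_spv w))
    obtain ⟨w1, m1, v1⟩ := ex_ndv hq (by omega) (A := P ⊔ Q) (by omega)
    have d1 := dm_sup_span m1
    obtain ⟨w2, m2, v2⟩ := ex_ndv hq (by omega) (A := P ⊔ Q ⊔ Submodule.span F {w1}) (by omega)
    have m2' : w2 ∉ P ⊔ Q := fun h => m2 (le_sup_left (a := P ⊔ Q) h)
    have dw1 := dm_span (F := F) (ndv_ne (by omega) v1)
    have dw2 := dm_span (F := F) (ndv_ne (by omega) v2)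
    have := h.inj _ _ (nd_of_ndv v1 (mem_spv w1)) (nd_of_ndv v2 (mem_spv w2)) (by omega) (by omega)
      (by omega) ((key w1 v1 m1).symm.trans (key w2 v2 m2'))
    exact m2 (le_sup_right (a := P ⊔ Q) (this ▸ mem_spv w2))
  have plane : ∀ L, dm L = 2 → ∀ w a, w ∉ L → a ∈ L → a ≠ 0 → ndv w → ndv (w + a) →
      ∃ W, dm W = 3 ∧ ∀ P, dm P = 1 → P ≤ L ⊔ Submodule.span F {w} → g P ≤ W := by
    intro L hL w a hwL haL ha0 hw hwa
    have w0 := ndv_ne (by omega) hw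
    have dw := dm_span (F := F) w0
    have dY := dm_sup_span hwL
    have nw : nd (Submodule.span F {w}) := nd_of_ndv hw (mem_spv w)
    obtain ⟨b, hbL, hb⟩ := ex_not_mem (A := Submodule.span F {a}) (B := L) (by rw [dm_span ha0]; omega)
    have hb0 : b ≠ 0 := fun e => hb (e ▸ Submodule.zero_mem _)
    have db := dm_span (F := F) hb0
    have hbL' : Submodule.span F {b} ≤ L := span_le_iff.2 hbL
    have hwb : w ∉ Submodule.span F {b} := fun hh => hwL (hbL' hh)
    have hwab : w + a ∉ Submodule.span F {b} := fun hh => hwL (by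
      have := L.sub_mem (hbL' hh) haL
      rwa [add_sub_cancel_right] at this)
    have d1 := dm_sup_span hwb
    have d2 := dm_sup_span hwab
    have nm1 : nd (Submodule.span F {b} ⊔ Submodule.span F {w}) := nd_mono le_sup_right nw
    have nm2 : nd (Submodule.span F {b} ⊔ Submodule.span F {w + a}) :=
      nd_of_ndv hwa (le_sup_right (a := Submodule.span F {b}) (mem_spv _))
    have hwm : w ∉ Submodule.span F {b} ⊔ Submodule.span F {w + a} := by
      intro hh
      rw [Submodule.mem_sup] at hh
      obtain ⟨x, hx, y, hy, e⟩ := hh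
      obtain ⟨c, rfl⟩ := Submodule.mem_span_singleton.1 hx
      obtain ⟨d, rfl⟩ := Submodule.mem_span_singleton.1 hy
      have hd1 : d = 1 := by
        by_contra hd
        have h1 : (1 - d) • w ∈ L := by
          have : (1 - d) • w = c • b + d • a := by
            have : (1 - d) • w = w - d • w := by rw [sub_smul, one_smul]
            rw [this]; nth_rewrite 1 [← e]; rw [smul_add]; abel
          rw [this]
          exact L.add_mem (L.smul_mem _ hbL) (L.smul_mem _ haL)
        have h2 := L.smul_mem (1 - d)⁻¹ h1
        rw [smul_smul, inv_mul_cancel₀ (sub_ne_zero.2 (Ne.symm hd)), one_smul] at h2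
        exact hwL h2
      subst hd1
      have h3 : c • b + a = 0 := by
        have : c • b + a = (c • b + (1 : F) • (w + a)) - w := by rw [one_smul]; abel
        rw [this, e, sub_self]
      by_cases hc : c = 0
      · subst hc; rw [zero_smul, zero_add] at h3; exact ha0 h3
      · refine hb (Submodule.mem_span_singleton.2 ⟨-c⁻¹, ?_⟩)
        rw [eq_neg_of_add_eq_zero_right h3, smul_neg, neg_smul, neg_neg, smul_smul, inv_mul_cancel₀ hc,
          one_smul]
    have mY : Submodule.span F {b} ⊔ Submodule.span F {w + a} ≤ L ⊔ Submodule.span F {w} :=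
      sup_le (hbL'.trans le_sup_left) (span_le_iff.2 (Submodule.add_mem _
        (le_sup_right (a := L) (mem_spv w)) (le_sup_left (a := L) haL)))
    have a12 := h.adj _ _ nm1 nm2 (by omega) (by omega)
      (Ad.of_ge (A := Submodule.span F {b}) (by omega)
        (fun e => hwm (e ▸ le_sup_right (a := Submodule.span F {b}) (mem_spv w))) le_sup_left le_sup_left
        (by omega))
    have e1 := h.mem _ nm1 (by omega) (by omega)
    have hWs := a12.sup
    have lw : Φ (Submodule.span F {w}) ≤ Φ (Submodule.span F {b} ⊔ Submodule.span F {w}) ⊔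
        Φ (Submodule.span F {b} ⊔ Submodule.span F {w + a}) :=
      (h.mono _ _ nw (by omega) (by omega) le_sup_right).trans le_sup_left
    refine ⟨_, by rw [hWs, e1, d1, db], fun P hP hPY => ?_⟩
    by_cases hwP : w ∈ P
    · rw [pt_eq hP hwP w0, gw w hw]
      exact lw
    · have d3 := dm_sup_span hwP
      have i3 : w ∈ P ⊔ Submodule.span F {w} := le_sup_right (a := P) (mem_spv w)
      refine (g2 P hP w hw hwP).trans ?_
      refine h.lineW hk hw w0 i3 hwm nm2 (by omega) ?_ lw le_sup_right
      exact Ad.of_le (by omega) (fun e => hwm (e ▸ i3)) (sup_le hPY le_sup_right) mY (by omega)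
  obtain ⟨G, hG⟩ := collin g g1 gi (by
    intro L hL
    obtain ⟨w1, a1, m1, ha1, ha1', v1, v1'⟩ := pregood hq (A := L) (by omega) hL
    have d1 := dm_sup_span m1
    obtain ⟨w2, a2, m2, ha2, ha2', v2, v2'⟩ := pregood hq (A := L ⊔ Submodule.span F {w1}) (by omega) hL
    have m2' : w2 ∉ L := fun h => m2 (le_sup_left (a := L) h)
    obtain ⟨W1, dW1, hW1⟩ := plane L hL w1 a1 m1 ha1 ha1' v1 v1'
    obtain ⟨W2, dW2, hW2⟩ := plane L hL w2 a2 m2' ha2 ha2' v2 v2'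
    have hne : W1 ≠ W2 := by
      intro e
      have dw2 := dm_span (F := F) (ndv_ne (by omega) v2)
      obtain ⟨P, hP1, hP2, hP3⟩ := pts_surj (B := L ⊔ Submodule.span F {w1}) (B' := W1) (by omega) g g1 gi
        (fun P hP hP1 => hW1 P hP1 hP) (g (Submodule.span F {w2}))
        (e ▸ hW2 _ dw2 le_sup_right) (g1 _ dw2)
      have := gi _ _ hP2 dw2 hP3
      exact m2 (hP1 (this ▸ mem_spv w2))
    have ha : Ad W1 W2 := by
      obtain ⟨P, -, hPL, dP⟩ := ex_between (bot_le : ⊥ ≤ L) 1 (by rw [dm_bot]; omega) (by omega)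
      obtain ⟨v, hv, hvP⟩ := ex_not_mem (A := P) (B := L) (by omega)
      have v0 : v ≠ 0 := fun e => hvP (e ▸ P.zero_mem)
      have dv := dm_span (F := F) v0
      have hvL : Submodule.span F {v} ≤ L := span_le_iff.2 hv
      have dd := line_dm (g1 _ dP) (g1 _ dv) (fun e => hvP (gi _ _ dP dv e ▸ mem_spv v))
      exact Ad.of_ge (A := g P ⊔ g (Submodule.span F {v})) (by omega) hne
        (sup_le (hW1 _ dP (hPL.trans le_sup_left)) (hW1 _ dv (hvL.trans le_sup_left)))
        (sup_le (hW2 _ dP (hPL.trans le_sup_left)) (hW2 _ dv (hvL.trans le_sup_left))) (by omega)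
    exact ⟨W1 ⊓ W2, by have := ha.2; omega, fun P hPL hP => le_inf (hW1 P hP (hPL.trans le_sup_left))
      (hW2 P hP (hPL.trans le_sup_left))⟩)
  refine ⟨G, fun X hX ⟨w, hwX, hw⟩ => ?_⟩
  have hXn := nd_of_ndv hw hwX
  symm
  refine dm_eq ?_ (by rw [h.mem X hXn (by omega) (by omega), iso_dm])
  rw [← OrderIso.le_symm_apply]
  intro x hx
  by_cases hx0 : x = 0
  · rw [hx0]; exact Submodule.zero_mem _
  have dx := dm_span (F := F) hx0
  rw [← span_le_iff, OrderIso.le_symm_apply, hG _ dx]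
  by_cases hwx : w ∈ Submodule.span F {x}
  · have w0 := ndv_ne (by omega) hw
    rw [pt_eq dx hwx w0, gw w hw]
    exact h.mono _ _ (nd_of_ndv hw (mem_spv w)) (by rw [dm_span w0]) (by omega) (span_le_iff.2 hwX)
  · exact (g2 _ dx w hw hwx).trans (h.mono _ _ (nd_of_ndv hw (le_sup_right (a := Submodule.span F {x}) (mem_spv w)))
      (by rw [dm_sup_span hwx]; omega) (by omega) (sup_le (span_le_iff.2 hx) (span_le_iff.2 hwX)))

lemma rigidBig (hq : 3 ≤ Fintype.card F) (hk : 2 ≤ k) (hkn : k + 2 ≤ n)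
    {X X' : Submodule F (Fin n → F)} (hX : dm X = k) (hX' : dm X' = k) (hno : ¬ ∃ w ∈ X, ndv w)
    (ha : ∀ Y, dm Y = k → (∃ w ∈ Y, ndv w) → Ad X Y → Ad X' Y) : X' = X := by
  symm
  refine dm_eq ?_ (by omega)
  intro x hx
  obtain ⟨Z, hZX, hxZ, dZ⟩ := ex_hyp hx (by omega)
  obtain ⟨w1, m1, v1⟩ := ex_ndv hq (by omega) (A := Z) (by omega)
  have d1 := dm_sup_span m1
  obtain ⟨w2, m2, v2⟩ := ex_ndv hq (by omega) (A := Z ⊔ Submodule.span F {w1}) (by omega)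
  have d12 := dm_sup_span m2
  have m2' : w2 ∉ Z := fun h => m2 (le_sup_left (a := Z) h)
  obtain ⟨w3, m3, v3⟩ := ex_ndv hq (by omega)
    (A := Z ⊔ Submodule.span F {w1} ⊔ Submodule.span F {w2}) (by omega)
  have m3' : w3 ∉ Z := fun h => m3 (le_sup_left (a := Z ⊔ Submodule.span F {w1}) (le_sup_left (a := Z) h))
  have key : ∀ w, w ∉ Z → ndv w → Ad X' (Z ⊔ Submodule.span F {w}) := by
    intro w hw hw'
    have i : w ∈ Z ⊔ Submodule.span F {w} := le_sup_right (a := Z) (mem_spv w)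
    have d := dm_sup_span hw
    exact ha _ (by omega) ⟨w, i, hw'⟩ (Ad.of_ge (A := Z) (by omega) (fun e => hno ⟨w, e ▸ i, hw'⟩) hZX
      le_sup_left (by omega))
  exact star_of_three m1 m2 m3 (key w1 m1 v1) (key w2 m2' v2) (key w3 m3' v3) hxZ

end BigQ

set_option linter.unusedSectionVars false
set_option linter.unusedSimpArgs false
section Two
variable {F : Type*} [Field F] {n : ℕ}

/-- span of two vectors -/
def ln (v u : Fin n → F) : Submodule F (Fin n → F) := Submodule.span F {v} ⊔ Submodule.span F {u}

lemma ln_l (v u : Fin n → F) : v ∈ ln v u := le_sup_left (a := Submodule.span F {v}) (mem_spv v)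
lemma ln_r (v u : Fin n → F) : u ∈ ln v u := le_sup_right (a := Submodule.span F {v}) (mem_spv u)

lemma ln_le {v u : Fin n → F} {X : Submodule F (Fin n → F)} (hv : v ∈ X) (hu : u ∈ X) : ln v u ≤ X :=
  sup_le (span_le_iff.2 hv) (span_le_iff.2 hu)

lemma nd_ln {v u : Fin n → F} (h : ∀ i, v i ≠ 0 ∨ u i ≠ 0) : nd (ln v u) :=
  nd_iff.2 fun i => (h i).elim (fun h => ⟨v, ln_l v u, h⟩) (fun h => ⟨u, ln_r v u, h⟩)


lemma aa (h11 : (1 : F) + 1 = 0)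
    (v : Fin n → F) : v + v = 0 := by
  ext i
  have : v i + v i = v i * (1 + 1) := by ring
  simp only [Pi.add_apply, Pi.zero_apply, this, h11, mul_zero]

lemma mem_sp2 (h01 : ∀ x : F, x = 0 ∨ x = 1)
    {x v : Fin n → F} : x ∈ Submodule.span F {v} ↔ x = 0 ∨ x = v := by
  rw [Submodule.mem_span_singleton]
  constructor
  · rintro ⟨c, rfl⟩
    rcases h01 c with rfl | rfl <;> simp
  · rintro (rfl | rfl)
    · exact ⟨0, by simp⟩
    · exact ⟨1, by simp⟩

lemma mem_sup2 (h01 : ∀ x : F, x = 0 ∨ x = 1)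
    {A : Submodule F (Fin n → F)} {x v : Fin n → F} :
    x ∈ A ⊔ Submodule.span F {v} ↔ x ∈ A ∨ ∃ y ∈ A, x = y + v := by
  rw [Submodule.mem_sup]
  constructor
  · rintro ⟨y, hy, z, hz, rfl⟩
    rcases (mem_sp2 h01).1 hz with rfl | rfl
    · left; simpa using hy
    · right; exact ⟨y, hy, rfl⟩
  · rintro (h | ⟨y, hy, rfl⟩)
    · exact ⟨x, h, 0, Submodule.zero_mem _, by simp⟩
    · exact ⟨y, hy, v, mem_spv v, rfl⟩

lemma mem_ln (h01 : ∀ x : F, x = 0 ∨ x = 1)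
    {x v u : Fin n → F} : x ∈ ln v u ↔ x = 0 ∨ x = v ∨ x = u ∨ x = v + u := by
  rw [ln, mem_sup2 h01, mem_sp2 h01]
  constructor
  · rintro ((h | h) | ⟨y, hy, h⟩)
    · exact Or.inl h
    · exact Or.inr (Or.inl h)
    · rcases (mem_sp2 h01).1 hy with rfl | rfl
      · right; right; left; simpa using h
      · right; right; right; exact h
  · rintro (h | h | h | h)
    · exact Or.inl (Or.inl h)
    · exact Or.inl (Or.inr h)
    · exact Or.inr ⟨0, Submodule.zero_mem _, by simpa using h⟩
    · exact Or.inr ⟨v, mem_spv v, h⟩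

lemma dm_ln (h01 : ∀ x : F, x = 0 ∨ x = 1)
    {v u : Fin n → F} (hv : v ≠ 0) (hu : u ≠ 0) (hne : u ≠ v) : dm (ln v u) = 2 := by
  rw [ln, dm_sup_span, dm_span hv]
  rw [mem_sp2 h01]
  tauto

lemma ln_eq (h01 : ∀ x : F, x = 0 ∨ x = 1)
    {v u : Fin n → F} {L : Submodule F (Fin n → F)} (hv : v ≠ 0) (hu : u ≠ 0) (hne : u ≠ v)
    (hvL : v ∈ L) (huL : u ∈ L) (hL : dm L = 2) : ln v u = L :=
  dm_eq (ln_le hvL huL) (by rw [dm_ln h01 hv hu hne, hL])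

variable [Fintype F] {k : ℕ} {Φ : Submodule F (Fin n → F) → Submodule F (Fin n → F)}

/-- good line -/
def gl (L : Submodule F (Fin n → F)) : Prop := nd L ∧ dm L = 2 ∧ (1 : Fin n → F) ∉ L

lemma one_ne (hn : 1 ≤ n) : (1 : Fin n → F) ≠ 0 := fun h => by
  have := congrFun h ⟨0, hn⟩
  simp at this

lemma nd_sp1 : nd (Submodule.span F {(1 : Fin n → F)}) := nd_one (mem_spv _)

lemma F_pt (h01 : ∀ x : F, x = 0 ∨ x = 1) (h11 : (1 : F) + 1 = 0)
    (h : Gd 1 k Φ) (hk : 3 ≤ k) (hkn : k + 2 ≤ n) {L : Submodule F (Fin n → F)} (hL : gl L)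
    {v : Fin n → F} (hv : v ∈ L) (hv0 : v ≠ 0) : dm (Φ L ⊓ Φ (ln v 1)) = 1 := by
  obtain ⟨nL, dL, oL⟩ := hL
  have n2 : nd (ln v 1) := nd_one (ln_r v 1)
  have v1 : (1 : Fin n → F) ≠ v := fun e => oL (e ▸ hv)
  have d2 := dm_ln h01 hv0 (one_ne (by omega)) v1
  have ha : Ad L (ln v 1) := Ad.of_ge (A := Submodule.span F {v}) (by omega)
    (fun e => oL (e ▸ ln_r v 1)) (span_le_iff.2 hv) le_sup_left (by rw [dm_span hv0]; omega)
  have := (h.adj _ _ nL n2 (by omega) (by omega) ha).2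
  have := h.mem L nL (by omega) (by omega)
  omega

lemma F_cons (h01 : ∀ x : F, x = 0 ∨ x = 1) (h11 : (1 : F) + 1 = 0)
    (h : Gd 1 k Φ) (hk : 3 ≤ k) (hkn : k + 2 ≤ n) {L1 L2 : Submodule F (Fin n → F)}
    (hL1 : gl L1) (hL2 : gl L2) {v : Fin n → F} (hv1 : v ∈ L1) (hv2 : v ∈ L2) (hv0 : v ≠ 0) :
    Φ L1 ⊓ Φ (ln v 1) = Φ L2 ⊓ Φ (ln v 1) := by
  by_cases hne : L1 = L2
  · rw [hne]
  have p1 := F_pt h01 h11 h hk hkn hL1 hv1 hv0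
  have p2 := F_pt h01 h11 h hk hkn hL2 hv2 hv0
  obtain ⟨n1, d1, o1⟩ := hL1
  obtain ⟨n2, d2, o2⟩ := hL2
  have v1 : (1 : Fin n → F) ≠ v := fun e => o1 (e ▸ hv1)
  have nl : nd (ln v 1) := nd_one (ln_r v 1)
  have dl := dm_ln h01 hv0 (one_ne (by omega)) v1
  obtain ⟨i, hi⟩ : ∃ i, v i = 0 := by
    by_contra hc
    push Not at hc
    exact v1 (by ext i; exact ((h01 (v i)).resolve_left (hc i)).symm)
  have key : ∀ L : Submodule F (Fin n → F), nd L → dm L = 2 → v ∈ L → ∀ x ∈ L, x i = 0 → x = 0 ∨ x = v := by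
    intro L nL dL hvL x hx hxi
    by_contra hc
    push Not at hc
    apply nL i
    rw [← ln_eq h01 hv0 hc.1 hc.2 hvL hx dL]
    exact ln_le hi hxi
  have s1 := dm_sup_span o1
  have s2 := dm_sup_span o2
  set Y1 := L1 ⊔ Submodule.span F {(1 : Fin n → F)} with hY1
  set Y2 := L2 ⊔ Submodule.span F {(1 : Fin n → F)} with hY2
  have i1 : (1 : Fin n → F) ∈ Y1 := le_sup_right (a := L1) (mem_spv _)
  have i2 : (1 : Fin n → F) ∈ Y2 := le_sup_right (a := L2) (mem_spv _)
  have hYne : Y1 ≠ Y2 := by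
    intro e
    obtain ⟨b, hb2, hb1⟩ := ex_not_mem' (A := L1) (B := L2) (fun hle => hne (dm_eq hle (by omega)).symm)
    have hbY : b ∈ Y1 := e ▸ le_sup_left (a := L2) hb2
    rcases (mem_sup2 h01).1 hbY with hb | ⟨x, hx, e'⟩
    · exact hb1 hb
    have hbi : b i = 1 := by
      refine (h01 (b i)).resolve_left fun hb => ?_
      rcases key L2 n2 d2 hv2 b hb2 hb with rfl | rfl
      · exact hb1 L1.zero_mem
      · exact hb1 hv1
    have hxi : x i = 0 := by
      have := congrFun e' i
      rw [hbi] at this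
      simpa using this
    have hx2 : x ∈ L2 := by
      rcases key L1 n1 d1 hv1 x hx hxi with rfl | rfl
      · exact L2.zero_mem
      · exact hv2
    apply o2
    have := L2.sub_mem hb2 hx2
    rwa [e', add_sub_cancel_left] at this
  have nY1 : nd Y1 := nd_one i1
  have nY2 : nd Y2 := nd_one i2
  have lY1 : ln v 1 ≤ Y1 := ln_le (le_sup_left (a := L1) hv1) i1
  have lY2 : ln v 1 ≤ Y2 := ln_le (le_sup_left (a := L2) hv2) i2
  have aY := h.adj _ _ nY1 nY2 (by omega) (by omega)
    (Ad.of_ge (A := ln v 1) (by omega) hYne lY1 lY2 (by omega))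
  have aL := h.adj _ _ n1 n2 (by omega) (by omega)
    (Ad.of_ge (A := Submodule.span F {v}) (by omega) hne (span_le_iff.2 hv1) (span_le_iff.2 hv2)
      (by rw [dm_span hv0]; omega))
  have mY1 := h.mem _ nY1 (by omega) (by omega)
  have ml := h.mem _ nl (by omega) (by omega)
  have mL1 := h.mem _ n1 (by omega) (by omega)
  have eY := aY.inf_eq (h.mono _ _ nl (by omega) (by omega) lY1) (h.mono _ _ nl (by omega) (by omega) lY2)
    (by omega)
  have hle : Φ L1 ⊓ Φ L2 ≤ Φ (ln v 1) := by
    rw [← eY]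
    exact inf_le_inf (h.mono _ _ n1 (by omega) (by omega) le_sup_left)
      (h.mono _ _ n2 (by omega) (by omega) le_sup_left)
  have dd := aL.2
  rw [← dm_eq (le_inf inf_le_left hle : Φ L1 ⊓ Φ L2 ≤ Φ L1 ⊓ Φ (ln v 1)) (by omega)]
  exact dm_eq (le_inf inf_le_right hle : Φ L1 ⊓ Φ L2 ≤ Φ L2 ⊓ Φ (ln v 1)) (by omega)

/-- good points -/
def Tg (v : Fin n → F) : Prop := v ≠ 0 ∧ ∃ L, gl L ∧ v ∈ L

lemma Tg.ne_one {v : Fin n → F} (h : Tg v) : v ≠ 1 := by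
  rintro rfl
  obtain ⟨_, L, hL, hv⟩ := h
  exact hL.2.2 hv

lemma gl_ln (h01 : ∀ x : F, x = 0 ∨ x = 1) (h11 : (1 : F) + 1 = 0)
    {v u : Fin n → F} (h : ∀ i, v i ≠ 0 ∨ u i ≠ 0) (hv0 : v ≠ 0) (hv1 : v ≠ 1) (hu0 : u ≠ 0)
    (hu1 : u ≠ 1) (hne : u ≠ v) (hne' : u ≠ v + 1) : gl (ln v u) := by
  refine ⟨nd_ln h, dm_ln h01 hv0 hu0 hne, ?_⟩
  rw [mem_ln h01]
  rintro (e | e | e | e)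
  · obtain ⟨i, hi⟩ := Function.ne_iff.1 hv0
    have := congrFun e i
    simp at this
  · exact hv1 e.symm
  · exact hu1 e.symm
  · exact hne' (by linear_combination (-1 : Fin n → F) * e - aa h11 v)

lemma Tg_of (h01 : ∀ x : F, x = 0 ∨ x = 1) (h11 : (1 : F) + 1 = 0)
    {v : Fin n → F} (hn : 3 ≤ n) (hv0 : v ≠ 0) (hv1 : v ≠ 1) (he : ∀ i, v ≠ Pi.single i 1) : Tg v := by
  obtain ⟨i, hi⟩ := Function.ne_iff.1 hv0
  have hi' : v i = 1 := (h01 (v i)).resolve_left hi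
  obtain ⟨j, hj⟩ : ∃ j : Fin n, j ≠ i := by
    by_cases h : i = ⟨0, by omega⟩
    · exact ⟨⟨1, by omega⟩, by rw [h]; simp⟩
    · exact ⟨⟨0, by omega⟩, fun e => h e.symm⟩
  refine ⟨hv0, ln v (1 + Pi.single i 1), gl_ln h01 h11 ?_ hv0 hv1 ?_ ?_ ?_ ?_, ln_l _ _⟩
  · intro l
    by_cases hl : l = i
    · left; rw [hl]; exact hi
    · right; simp [hl]
  · intro e
    have := congrFun e j
    simp [hj] at this
  · intro e
    have := congrFun e i
    simp at this
  · intro e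
    have := congrFun e i
    simp [hi', h11] at this
  · intro e
    exact he i (by linear_combination (-1 : Fin n → F) * e)

lemma not_Tg (h01 : ∀ x : F, x = 0 ∨ x = 1) (h11 : (1 : F) + 1 = 0)
    {v : Fin n → F} (hn : 3 ≤ n) (hv0 : v ≠ 0) (hv1 : v ≠ 1) (hT : ¬ Tg v) : Tg (v + 1) := by
  have : ∃ i, v = Pi.single i 1 := by
    by_contra hc
    push Not at hc
    exact hT (Tg_of h01 h11 hn hv0 hv1 hc)
  obtain ⟨i, rfl⟩ := this
  apply Tg_of h01 h11 hn
  · intro e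
    exact hv1 (by linear_combination e - aa h11 1)
  · intro e
    exact hv0 (by linear_combination e)
  · intro j e
    obtain ⟨l, hl⟩ : ∃ l : Fin n, l ≠ i ∧ l ≠ j := by
      have : ({i, j} : Finset (Fin n))ᶜ.Nonempty := by
        rw [← Finset.card_pos, Finset.card_compl, Fintype.card_fin]
        have := Finset.card_le_two (a := i) (b := j)
        omega
      obtain ⟨l, hl⟩ := this
      simp at hl
      exact ⟨l, hl⟩
    have := congrFun e l
    simp [hl.1, hl.2] at this

end Two

set_option linter.unusedSectionVars false
set_option linter.unusedSimpArgs false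
section TwoB
variable {F : Type*} [Field F] {n : ℕ}
variable [Fintype F] {k : ℕ} {Φ : Submodule F (Fin n → F) → Submodule F (Fin n → F)}

/-- raw properties of the vector map -/
structure Raw (Φ : Submodule F (Fin n → F) → Submodule F (Fin n → F)) (w0 : Fin n → F)
    (g : (Fin n → F) → (Fin n → F)) : Prop where
  w0ne : w0 ≠ 0
  sp : Φ (Submodule.span F {1}) = Submodule.span F {w0}
  g0 : g 0 = 0
  g1 : g 1 = w0
  mem : ∀ L, gl L → ∀ v ∈ L, g v ∈ Φ L
  mem1 : ∀ v, v ≠ 0 → v ≠ 1 → g v ∈ Φ (ln v 1)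
  ne0 : ∀ v, v ≠ 0 → v ≠ 1 → g v ≠ 0
  ne1 : ∀ v, v ≠ 0 → v ≠ 1 → g v ≠ w0
  notT : ∀ v, v ≠ 0 → v ≠ 1 → ¬ Tg v → g v = g (v + 1) + w0

lemma ln_shift (h11 : (1 : F) + 1 = 0) (v : Fin n → F) : ln (v + 1) 1 = ln v 1 := by
  apply le_antisymm
  · exact ln_le (Submodule.add_mem _ (ln_l v 1) (ln_r v 1)) (ln_r v 1)
  · refine ln_le ?_ (ln_r _ 1)
    have : v = (v + 1) + 1 := by linear_combination -aa h11 (1 : Fin n → F)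
    rw [this]
    exact Submodule.add_mem _ (by rw [← this]; exact ln_l _ 1) (by rw [← this]; exact ln_r _ 1)

lemma ex_raw (h01 : ∀ x : F, x = 0 ∨ x = 1) (h11 : (1 : F) + 1 = 0)
    (h : Gd 1 k Φ) (hk : 3 ≤ k) (hkn : k + 2 ≤ n) : ∃ w0 g, Raw Φ w0 g := by
  classical
  have one0 : (1 : Fin n → F) ≠ 0 := one_ne (by omega)
  have d1 := dm_span (F := F) one0
  have m1 := h.mem _ nd_sp1 (by omega) (by omega)
  obtain ⟨w0, hw0, e0⟩ := pt_ex (P := Φ (Submodule.span F {1})) (by omega)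
  have w0L : ∀ L, gl L → w0 ∉ Φ L := by
    rintro L ⟨nL, dL, oL⟩ hc
    refine oL (span_le_iff.1 (h.refl nd_sp1 nL (by omega) (by omega) (by omega) ?_))
    rw [e0]
    exact span_le_iff.2 hc
  have ht : ∀ v, Tg v → ∃ p, p ≠ 0 ∧ p ∈ Φ (ln v 1) ∧ ∀ L, gl L → v ∈ L → p ∈ Φ L := by
    rintro v ⟨hv0, L, hL, hvL⟩
    obtain ⟨p, hp0, hp⟩ := pt_ex (F_pt h01 h11 h hk hkn hL hvL hv0)
    have hpm : p ∈ Φ L ⊓ Φ (ln v 1) := hp ▸ mem_spv p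
    refine ⟨p, hp0, hpm.2, fun L' hL' hv' => ?_⟩
    rw [F_cons h01 h11 h hk hkn hL hL' hvL hv' hv0] at hpm
    exact hpm.1
  choose! t t0 t1 t2 using ht
  have tw : ∀ v, Tg v → t v ≠ w0 := by
    intro v hv e
    obtain ⟨_, L, hL, hvL⟩ := id hv
    exact w0L L hL (e ▸ t2 v hv L hL hvL)
  let g : (Fin n → F) → (Fin n → F) := fun v =>
    if v = 0 then 0 else if v = 1 then w0 else if Tg v then t v else t (v + 1) + w0
  have gT : ∀ v, Tg v → g v = t v := by
    intro v hv
    simp only [g]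
    rw [if_neg hv.1, if_neg hv.ne_one, if_pos hv]
  have gN : ∀ v, v ≠ 0 → v ≠ 1 → ¬ Tg v → g v = t (v + 1) + w0 := by
    intro v hv0 hv1 hT
    simp only [g]
    rw [if_neg hv0, if_neg hv1, if_neg hT]
  have w0m : ∀ v, v ≠ 0 → v ≠ 1 → w0 ∈ Φ (ln v 1) := by
    intro v hv0 hv1
    have := h.mono _ (ln v 1) nd_sp1 (by omega)
      (by rw [dm_ln h01 hv0 one0 (Ne.symm hv1)]; omega) le_sup_right
    rw [e0] at this
    exact span_le_iff.1 this
  refine ⟨w0, g, hw0, e0, ?_, ?_, ?_, ?_, ?_, ?_, ?_⟩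
  · simp [g]
  · simp only [g]; rw [if_neg one0]; simp
  · intro L hL v hv
    by_cases hv0 : v = 0
    · simp only [g]; rw [if_pos hv0]; exact Submodule.zero_mem _
    · have : Tg v := ⟨hv0, L, hL, hv⟩
      rw [gT v this]
      exact t2 v this L hL hv
  · intro v hv0 hv1
    by_cases hT : Tg v
    · rw [gT v hT]; exact t1 v hT
    · rw [gN v hv0 hv1 hT]
      have := t1 _ (not_Tg h01 h11 (by omega) hv0 hv1 hT)
      rw [ln_shift h11] at this
      exact Submodule.add_mem _ this (w0m v hv0 hv1)
  · intro v hv0 hv1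
    by_cases hT : Tg v
    · rw [gT v hT]; exact t0 v hT
    · rw [gN v hv0 hv1 hT]
      intro e
      exact tw _ (not_Tg h01 h11 (by omega) hv0 hv1 hT) (by linear_combination e - aa h11 w0)
  · intro v hv0 hv1
    by_cases hT : Tg v
    · rw [gT v hT]; exact tw v hT
    · rw [gN v hv0 hv1 hT]
      intro e
      exact t0 _ (not_Tg h01 h11 (by omega) hv0 hv1 hT) (by linear_combination e)
  · intro v hv0 hv1 hT
    rw [gN v hv0 hv1 hT, gT _ (not_Tg h01 h11 (by omega) hv0 hv1 hT)]

variable {w0 : Fin n → F} {g : (Fin n → F) → (Fin n → F)}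

lemma Raw.distinct (h01 : ∀ x : F, x = 0 ∨ x = 1) (h11 : (1 : F) + 1 = 0)
    (h : Gd 1 k Φ) (hk : 3 ≤ k) (hkn : k + 2 ≤ n) (r : Raw Φ w0 g) {v u : Fin n → F}
    (hv0 : v ≠ 0) (hv1 : v ≠ 1) (hu0 : u ≠ 0) (hu1 : u ≠ 1) (hne : u ≠ v) (hne' : u ≠ v + 1) :
    g v ≠ g u := by
  intro e
  have one0 : (1 : Fin n → F) ≠ 0 := one_ne (by omega)
  have d1 := dm_span (F := F) one0
  have dv := dm_ln h01 hv0 one0 (Ne.symm hv1)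
  have du := dm_ln h01 hu0 one0 (Ne.symm hu1)
  have nv : nd (ln v 1) := nd_one (ln_r v 1)
  have nu : nd (ln u 1) := nd_one (ln_r u 1)
  have hh : ln v 1 ≠ ln u 1 := by
    intro e
    have := ln_l u 1
    rw [← e, mem_ln h01] at this
    tauto
  have a := h.adj _ _ nv nu (by omega) (by omega)
    (Ad.of_ge (A := Submodule.span F {1}) (by omega) hh le_sup_right le_sup_right (by omega))
  have m := h.mem _ nv (by omega) (by omega)
  have m1 := h.mem _ nd_sp1 (by omega) (by omega)
  have := a.inf_eq (h.mono _ _ nd_sp1 (by omega) (by omega) le_sup_right)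
    (h.mono _ _ nd_sp1 (by omega) (by omega) le_sup_right) (by omega)
  have hm : g v ∈ Φ (ln v 1) ⊓ Φ (ln u 1) := ⟨r.mem1 v hv0 hv1, e ▸ r.mem1 u hu0 hu1⟩
  rw [this, r.sp, mem_sp2 h01] at hm
  rcases hm with hm | hm
  · exact r.ne0 v hv0 hv1 hm
  · exact r.ne1 v hv0 hv1 hm

/-- the plane `M + v` is mapped to `Φ M + g v` -/
lemma Raw.plane (h01 : ∀ x : F, x = 0 ∨ x = 1) (h11 : (1 : F) + 1 = 0)
    (h : Gd 1 k Φ) (hk : 3 ≤ k) (hkn : k + 2 ≤ n) (r : Raw Φ w0 g) {M : Submodule F (Fin n → F)}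
    (hM : gl M) {v a : Fin n → F} (ha : a ∈ M) (hv : v ∉ M) (hL : gl (ln v a)) (ha0 : a ≠ 0) :
    Φ (M ⊔ Submodule.span F {v}) = Φ M ⊔ Submodule.span F {g v} := by
  have dM := hM.2.1
  have dL := hL.2.1
  have v0 : v ≠ 0 := fun e => hv (e ▸ M.zero_mem)
  have v1 : v ≠ 1 := fun e => hL.2.2 (e ▸ ln_l v a)
  have a1 : a ≠ 1 := fun e => hM.2.2 (e ▸ ha)
  have hav : v ≠ a := fun e => hv (e ▸ ha)
  have hav' : v ≠ a + 1 := by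
    intro e
    apply hL.2.2
    have : (1 : Fin n → F) = v - a := by rw [e]; ring
    rw [this]
    exact Submodule.sub_mem _ (ln_l v a) (ln_r v a)
  have dd := dm_sup_span hv
  have nY : nd (M ⊔ Submodule.span F {v}) := nd_mono le_sup_left hM.1
  have lM := h.mono M _ hM.1 (by omega) (by omega) (le_sup_left : M ≤ M ⊔ Submodule.span F {v})
  have lL := h.mono (ln v a) (M ⊔ Submodule.span F {v}) hL.1 (by omega) (by omega)
    (ln_le (le_sup_right (a := M) (mem_spv v)) (le_sup_left (a := M) ha))
  have mY := h.mem _ nY (by omega) (by omega)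
  have mM := h.mem _ hM.1 (by omega) (by omega)
  have mL := h.mem _ hL.1 (by omega) (by omega)
  have gvL := r.mem _ hL v (ln_l v a)
  have gaL := r.mem _ hL a (ln_r v a)
  have gaM := r.mem _ hM a ha
  have hgv : g v ∉ Φ M := by
    intro hc
    have hne : g v ≠ g a := fun e => r.distinct h01 h11 h hk hkn ha0 a1 v0 v1 hav hav' e.symm
    have e1 := ln_eq h01 (r.ne0 a ha0 a1) (r.ne0 v v0 v1) hne gaL gvL (by omega)
    have e2 := ln_eq h01 (r.ne0 a ha0 a1) (r.ne0 v v0 v1) hne gaM hc (by omega)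
    have := h.inj _ _ hL.1 hM.1 (by omega) (by omega) (by omega) (e1.symm.trans e2)
    exact hv (this ▸ ln_l v a)
  symm
  exact dm_eq (sup_le lM (span_le_iff.2 (lL gvL))) (by rw [dm_sup_span hgv]; omega)

lemma single_ne_one (hn : 3 ≤ n) (i j : Fin n) : ∃ l : Fin n, l ≠ i ∧ l ≠ j := by
  have : ({i, j} : Finset (Fin n))ᶜ.Nonempty := by
    rw [← Finset.card_pos, Finset.card_compl, Fintype.card_fin]
    have := Finset.card_le_two (a := i) (b := j)
    omega
  obtain ⟨l, hl⟩ := this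
  simp at hl
  exact ⟨l, hl⟩

lemma not_Tg_single (h01 : ∀ x : F, x = 0 ∨ x = 1) (hn : 3 ≤ n) (i : Fin n) :
    ¬ Tg (Pi.single i 1 : Fin n → F) := by
  rintro ⟨h0, L, ⟨nL, dL, oL⟩, hL⟩
  obtain ⟨b, hb, hb'⟩ := ex_not_mem (A := Submodule.span F {(Pi.single i 1 : Fin n → F)}) (B := L)
    (by rw [dm_span h0]; omega)
  rw [mem_sp2 h01] at hb'
  push Not at hb'
  have e := ln_eq h01 h0 hb'.1 hb'.2 hL hb dL
  have hbl : ∀ l, l ≠ i → b l = 1 := by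
    intro l hl
    refine (h01 (b l)).resolve_left fun hc => nL l ?_
    rw [← e]
    exact ln_le (mem_ch.2 (by simp [hl])) hc
  apply oL
  rcases h01 (b i) with hi | hi
  · have : (1 : Fin n → F) = Pi.single i 1 + b := by
      ext l
      by_cases hl : l = i
      · subst hl; simp [hi]
      · simp [hl, hbl l hl]
    rw [this]; exact L.add_mem hL hb
  · have : (1 : Fin n → F) = b := by
      ext l
      by_cases hl : l = i
      · subst hl; simp [hi]
      · simp [hl, hbl l hl]
    rw [this]; exact hb

lemma Raw.shift (h01 : ∀ x : F, x = 0 ∨ x = 1) (h11 : (1 : F) + 1 = 0)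
    (h : Gd 1 k Φ) (hk : 3 ≤ k) (hkn : k + 2 ≤ n) (r : Raw Φ w0 g) (v : Fin n → F) :
    g (v + 1) = g v + w0 := by
  have one0 : (1 : Fin n → F) ≠ 0 := one_ne (by omega)
  by_cases hv0 : v = 0
  · rw [hv0, zero_add, r.g0, r.g1, zero_add]
  by_cases hv1 : v = 1
  · rw [hv1, aa h11, r.g0, r.g1, aa h11]
  have hs : v + 1 + 1 = v := by linear_combination aa h11 (1 : Fin n → F)
  have hv0' : v + 1 ≠ 0 := fun e => hv1 (by linear_combination e - aa h11 (1 : Fin n → F))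
  have hv1' : v + 1 ≠ 1 := fun e => hv0 (by linear_combination e)
  by_cases hT : Tg v
  swap
  · rw [r.notT v hv0 hv1 hT]; linear_combination -aa h11 w0
  by_cases hT' : Tg (v + 1)
  swap
  · rw [r.notT _ hv0' hv1' hT', hs]
  have key : g (v + 1) ≠ g v := by
    intro e
    obtain ⟨i, hi⟩ := Function.ne_iff.1 hv0
    have hi : v i = 1 := (h01 (v i)).resolve_left hi
    obtain ⟨j, hj⟩ := Function.ne_iff.1 hv1
    have hj : v j = 0 := (h01 (v j)).resolve_right hj
    have hij : i ≠ j := fun e => by rw [e, hj] at hi; exact zero_ne_one hi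
    obtain ⟨l, hli, hlj⟩ := single_ne_one (show 3 ≤ n by omega) i j
    have hvi : v ≠ Pi.single i 1 := fun e => not_Tg_single h01 (by omega) i (e ▸ hT)
    have hvj : v + 1 ≠ Pi.single j 1 := fun e => not_Tg_single h01 (by omega) j (e ▸ hT')
    set A : Fin n → F := 1 + v + Pi.single i 1 with hA
    set B : Fin n → F := v + Pi.single j 1 with hB
    have Al : ∀ m, m ≠ i → v m = 0 → A m = 1 := fun m hm hv => by simp [hA, hm, hv]
    have Bl : ∀ m, m ≠ j → v m = 1 → B m = 1 := fun m hm hv => by simp [hB, hm, hv]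
    have Ai : A i = 1 := by simp [hA, hi, h11]
    have Bj : B j = 1 := by simp [hB, hj]
    have Bi := Bl i hij hi
    have Aj := Al j hij.symm hj
    have ssi := aa h11 (Pi.single i 1 : Fin n → F)
    have ssj := aa h11 (Pi.single j 1 : Fin n → F)
    have A0 : A ≠ 0 := fun e => by rw [e] at Ai; simp at Ai
    have B0 : B ≠ 0 := fun e => by rw [e] at Bi; simp at Bi
    have A1 : A ≠ 1 := fun e => hvi (by linear_combination e - ssi)
    have B1 : B ≠ 1 := fun e => hvj (by linear_combination e + aa h11 (1 : Fin n → F) - ssj)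
    have Av : A ≠ v := fun e => by rw [e, hj] at Aj; exact zero_ne_one Aj
    have Av' : A ≠ v + 1 := fun e => by
      have := congrFun e i
      rw [Ai] at this
      simp [hi, h11] at this
    have Bv : B ≠ v := fun e => by rw [e, hj] at Bj; exact zero_ne_one Bj
    have Bv' : B ≠ v + 1 := fun e => by
      have := congrFun e i
      rw [Bi] at this
      simp [hi, h11] at this
    have ABl : A l + B l = 1 := by
      have : A l + B l = 1 + (v + v) l := by simp [hA, hB, hli, hlj]; ring
      rw [this, aa h11]; simp
    have ABi : A i + B i = 0 := by rw [Ai, Bi, h11]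
    have BA : B ≠ A := fun e => by
      rw [e] at ABl
      have := congrFun (aa h11 A) l
      simp only [Pi.add_apply, ABl] at this
      simp at this
    have BA' : B ≠ A + 1 := fun e => by
      have := congrFun e i
      simp [Ai, Bi, h11] at this
    have hM : gl (ln A B) := by
      refine gl_ln h01 h11 (fun m => ?_) A0 A1 B0 B1 BA BA'
      rcases h01 (v m) with hm | hm
      · left
        rw [Al m (fun e => by rw [e, hi] at hm; exact one_ne_zero hm) hm]; exact one_ne_zero
      · right
        rw [Bl m (fun e => by rw [e, hj] at hm; exact zero_ne_one hm) hm]; exact one_ne_zero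
    have hL1 : gl (ln v A) := by
      refine gl_ln h01 h11 (fun m => ?_) hv0 hv1 A0 A1 Av Av'
      rcases h01 (v m) with hm | hm
      · right
        rw [Al m (fun e => by rw [e, hi] at hm; exact one_ne_zero hm) hm]; exact one_ne_zero
      · left; rw [hm]; exact one_ne_zero
    have hL2 : gl (ln (v + 1) B) := by
      refine gl_ln h01 h11 (fun m => ?_) hv0' hv1' B0 B1 Bv' (by rw [hs]; exact Bv)
      rcases h01 (v m) with hm | hm
      · left; simp [hm]
      · right
        rw [Bl m (fun e => by rw [e, hj] at hm; exact zero_ne_one hm) hm]; exact one_ne_zero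
    have hvM : v ∉ ln A B := by
      rw [mem_ln h01]
      rintro (e | e | e | e)
      · exact hv0 e
      · exact Av e.symm
      · exact Bv e.symm
      · have := congrFun e i
        rw [Pi.add_apply, ABi, hi] at this
        exact one_ne_zero this
    have hvM' : v + 1 ∉ ln A B := by
      rw [mem_ln h01]
      rintro (e | e | e | e)
      · exact hv0' e
      · exact Av' e.symm
      · exact Bv' e.symm
      · have := congrFun e j
        have Bj' : A j + B j = 0 := by rw [Aj, Bj, h11]
        rw [Pi.add_apply, Pi.add_apply, Bj', hj] at this
        simp at this
    have p1 := r.plane h01 h11 h hk hkn hM (ln_l A B) hvM hL1 A0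
    have p2 := r.plane h01 h11 h hk hkn hM (ln_r A B) hvM' hL2 B0
    have d1 := dm_sup_span hvM
    have d2 := dm_sup_span hvM'
    have dM := hM.2.1
    rw [e, ← p1] at p2
    have := h.inj _ _ (nd_mono le_sup_left hM.1) (nd_mono le_sup_left hM.1) (by omega) (by omega)
      (by omega) p2
    have hm : v ∈ ln A B ⊔ Submodule.span F {v + 1} := this ▸ le_sup_right (a := ln A B) (mem_spv v)
    rcases (mem_sup2 h01).1 hm with hm | ⟨y, hy, e'⟩
    · exact hvM hm
    · have : y = 1 := by linear_combination -e' - aa h11 (1 : Fin n → F)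
      exact hM.2.2 (this ▸ hy)
  have hm := r.mem1 _ hv0' hv1'
  rw [ln_shift h11] at hm
  have dl := dm_ln h01 hv0 one0 (Ne.symm hv1)
  have nl : nd (ln v 1) := nd_one (ln_r v 1)
  have ml := h.mem _ nl (by omega) (by omega)
  have w0m := h.mono _ (ln v 1) nd_sp1 (by rw [dm_span one0]) (by omega) le_sup_right
  rw [r.sp, span_le_iff] at w0m
  have := ln_eq h01 (r.ne0 v hv0 hv1) r.w0ne (r.ne1 v hv0 hv1).symm (r.mem1 v hv0 hv1) w0m (by omega)
  rw [← this, mem_ln h01] at hm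
  rcases hm with hm | hm | hm | hm
  · exact absurd hm (r.ne0 _ hv0' hv1')
  · exact absurd hm key
  · exact absurd hm (r.ne1 _ hv0' hv1')
  · exact hm

lemma Raw.add0 (h01 : ∀ x : F, x = 0 ∨ x = 1) (h11 : (1 : F) + 1 = 0)
    (h : Gd 1 k Φ) (hk : 3 ≤ k) (hkn : k + 2 ≤ n) (r : Raw Φ w0 g) (v u : Fin n → F)
    (hvu : ∀ i, v i ≠ 0 ∨ u i ≠ 0) : g (v + u) = g v + g u := by
  have sh := r.shift h01 h11 h hk hkn
  by_cases hv0 : v = 0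
  · rw [hv0, r.g0, zero_add, zero_add]
  by_cases hv1 : v = 1
  · rw [hv1, r.g1, add_comm, sh, add_comm]
  by_cases hu0 : u = 0
  · rw [hu0, r.g0, add_zero, add_zero]
  by_cases hu1 : u = 1
  · rw [hu1, r.g1, sh]
  by_cases hne : u = v
  · rw [hne, aa h11, aa h11, r.g0]
  by_cases hne' : u = v + 1
  · rw [hne', sh, show v + (v + 1) = 1 by linear_combination aa h11 v, r.g1]
    linear_combination -aa h11 (g v)
  have hL := gl_ln h01 h11 hvu hv0 hv1 hu0 hu1 hne hne'
  have hm := r.mem _ hL (v + u) (Submodule.add_mem _ (ln_l v u) (ln_r v u))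
  have dL := h.mem _ hL.1 (by rw [hL.2.1]; omega) (by rw [hL.2.1]; omega)
  rw [hL.2.1] at dL
  have s0 : v + u ≠ 0 := fun e => hne (by linear_combination e - aa h11 v)
  have s1 : v + u ≠ 1 := fun e => hne' (by linear_combination e - aa h11 v)
  rw [← ln_eq h01 (r.ne0 v hv0 hv1) (r.ne0 u hu0 hu1)
    (r.distinct h01 h11 h hk hkn hv0 hv1 hu0 hu1 hne hne').symm (r.mem _ hL v (ln_l v u))
    (r.mem _ hL u (ln_r v u)) dL, mem_ln h01] at hm
  rcases hm with hm | hm | hm | hm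
  · exact absurd hm (r.ne0 _ s0 s1)
  · exact absurd hm.symm (r.distinct h01 h11 h hk hkn hv0 hv1 s0 s1
      (fun e => hu0 (by linear_combination e)) (fun e => hu1 (by linear_combination e)))
  · exact absurd hm.symm (r.distinct h01 h11 h hk hkn hu0 hu1 s0 s1
      (fun e => hv0 (by linear_combination e)) (fun e => hv1 (by linear_combination e)))
  · exact hm

lemma Raw.add (h01 : ∀ x : F, x = 0 ∨ x = 1) (h11 : (1 : F) + 1 = 0)
    (h : Gd 1 k Φ) (hk : 3 ≤ k) (hkn : k + 2 ≤ n) (r : Raw Φ w0 g) (v u : Fin n → F) :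
    g (v + u) = g v + g u := by
  have sh := r.shift h01 h11 h hk hkn
  have a0 := r.add0 h01 h11 h hk hkn
  -- no cell (0,1)
  have c01 : ∀ v u : Fin n → F, (∀ i, v i ≠ 0 ∨ u i = 0) → g (v + u) = g v + g u := by
    intro v u hh
    have := a0 v (u + 1) (fun i => (hh i).imp id (fun e => by simp [e]))
    rw [← add_assoc, sh, sh] at this
    linear_combination this
  -- no cell (1,1)
  have c11 : ∀ v u : Fin n → F, (∀ i, v i = 0 ∨ u i = 0) → g (v + u) = g v + g u := by
    intro v u hh
    have := a0 (v + 1) (u + 1) (fun i => (hh i).imp (fun e => by simp [e]) (fun e => by simp [e]))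
    rw [show v + 1 + (u + 1) = v + u by linear_combination aa h11 (1 : Fin n → F), sh, sh] at this
    linear_combination this + aa h11 w0
  have vv : ∀ x : F, x = 0 ∨ x + 1 = 0 := fun x => (h01 x).imp id (fun e => by rw [e, h11])
  have e1 := c01 u (v * u) (fun i => by
    by_cases hu : u i = 0
    · right; simp [hu]
    · left; exact hu)
  have e2 := c11 v (u + v * u) (fun i => by
    rcases vv (v i) with hv | hv
    · left; exact hv
    · right
      simp only [Pi.add_apply, Pi.mul_apply]
      linear_combination hv * u i)
  have e3 := c11 (v + u) (v * u) (fun i => by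
    rcases h01 (v i) with hv | hv
    · right; simp [hv]
    · rcases h01 (u i) with hu | hu
      · right; simp [hu]
      · left; simp [hu, hv, h11])
  rw [← add_assoc] at e2
  linear_combination e2 + e1 - e3

theorem caseTwo (hq : Fintype.card F = 2) (h : Gd 1 k Φ) (hk : 3 ≤ k) (hkn : k + 2 ≤ n) :
    ∃ G : Submodule F (Fin n → F) ≃o Submodule F (Fin n → F),
      ∀ X, dm X = k → ((1 : Fin n → F) ∈ X ∨ ∃ i, (1 + Pi.single i 1 : Fin n → F) ∈ X ∧ ¬ X ≤ coordHyp F n i) →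
        Φ X = G X := by
  have h01 : ∀ x : F, x = 0 ∨ x = 1 := by
    classical
    intro x
    by_contra hc
    push Not at hc
    have : Finset.card ({0, 1, x} : Finset F) = 3 := by
      rw [Finset.card_eq_three]
      exact ⟨0, 1, x, zero_ne_one, hc.1.symm, hc.2.symm, rfl⟩
    have := Finset.card_le_univ ({0, 1, x} : Finset F)
    omega
  have h11 : (1 : F) + 1 = 0 := by
    refine (h01 (1 + 1)).resolve_right fun e => ?_
    exact one_ne_zero (α := F) (by linear_combination e)
  obtain ⟨w0, g, r⟩ := ex_raw h01 h11 h hk hkn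
  have one0 : (1 : Fin n → F) ≠ 0 := one_ne (by omega)
  have ad := r.add h01 h11 h hk hkn
  let gm : (Fin n → F) →ₗ[F] (Fin n → F) :=
    { toFun := g
      map_add' := ad
      map_smul' := by
        intro c v
        rcases h01 c with rfl | rfl
        · simp [r.g0]
        · simp }
  have gmi : Function.Injective gm := by
    rw [injective_iff_map_eq_zero]
    intro v hv
    by_contra hv0
    by_cases hv1 : v = 1
    · subst hv1
      exact r.w0ne (r.g1 ▸ hv)
    · exact r.ne0 v hv0 hv1 hv
  let e := LinearEquiv.ofInjectiveEndo gm gmi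
  have key : ∀ X, dm X = k → nd X → (∀ x ∈ X, g x ∈ Φ X) → Φ X = Submodule.orderIsoMapComap e X := by
    intro X hX nX hx
    symm
    refine dm_eq ?_ (by rw [h.mem X nX (by omega) (by omega), iso_dm])
    rintro _ ⟨x, hxX, rfl⟩
    exact hx x hxX
  have k1 : ∀ X, dm X = k → (1 : Fin n → F) ∈ X → ∀ x ∈ X, g x ∈ Φ X := by
    intro X hX h1 x hx
    by_cases hx0 : x = 0
    · rw [hx0, r.g0]; exact Submodule.zero_mem _
    by_cases hx1 : x = 1
    · have := h.mono _ X nd_sp1 (by rw [dm_span one0]) (by omega) (span_le_iff.2 h1)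
      rw [r.sp, span_le_iff] at this
      rw [hx1, r.g1]; exact this
    · exact h.mono (ln x 1) X (nd_one (ln_r x 1)) (by rw [dm_ln h01 hx0 one0 (Ne.symm hx1)]; omega)
        (by omega) (ln_le hx h1) (r.mem1 x hx0 hx1)
  refine ⟨Submodule.orderIsoMapComap e, fun X hX hh => ?_⟩
  by_cases h1 : (1 : Fin n → F) ∈ X
  · exact key X hX (nd_one h1) (k1 X hX h1)
  obtain ⟨i, hi, hXi⟩ := hh.resolve_left h1
  obtain ⟨z, hzX, hz⟩ := ex_not_mem' hXi
  rw [mem_ch] at hz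
  have hz1 : z i = 1 := (h01 _).resolve_left hz
  obtain ⟨l, hl, -⟩ := single_ne_one (show 3 ≤ n by omega) i i
  have hline : ∀ x ∈ X, x i = 1 → gl (ln x (1 + Pi.single i 1)) := by
    intro x hx hxi
    refine gl_ln h01 h11 (fun m => ?_) ?_ ?_ ?_ ?_ ?_ ?_
    · by_cases hm : m = i
      · left; rw [hm, hxi]; exact one_ne_zero
      · right; simp [hm]
    · intro e; rw [e] at hxi; simp at hxi
    · intro e; exact h1 (e ▸ hx)
    · intro e; have := congrFun e l; simp [hl] at this
    · intro e; have := congrFun e i; simp at this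
    · intro e; have := congrFun e i; simp [hxi, h11] at this
    · intro e
      apply h1
      have : (1 : Fin n → F) = x + (1 + Pi.single i 1) := by linear_combination (-1 : Fin n → F) * e - aa h11 x
      rw [this]; exact X.add_mem hx hi
  have hl0 := hline z hzX hz1
  have nX : nd X := nd_mono (ln_le hzX hi) hl0.1
  have hg1 : ∀ x ∈ X, x i = 1 → g x ∈ Φ X := by
    intro x hx hxi
    have hL := hline x hx hxi
    exact h.mono _ X hL.1 (by rw [hL.2.1]; omega) (by omega) (ln_le hx hi) (r.mem _ hL x (ln_l _ _))
  refine key X hX nX fun x hx => ?_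
  rcases h01 (x i) with hxi | hxi
  · have e1 : x = (x + z) + z := by linear_combination -aa h11 z
    rw [e1, ad]
    exact Submodule.add_mem _ (hg1 _ (X.add_mem hx hzX) (by simp [hxi, hz1])) (hg1 z hzX hz1)
  · exact hg1 x hx hxi

end TwoB

set_option linter.unusedSectionVars false
set_option linter.unusedSimpArgs false
section Fin
variable {F : Type*} [Field F] {n : ℕ}

/-- the subspaces already known to be fixed when `q = 2` -/
def Fx (Y : Submodule F (Fin n → F)) : Prop :=
  (1 : Fin n → F) ∈ Y ∨ ∃ i, (1 + Pi.single i 1 : Fin n → F) ∈ Y ∧ ¬ Y ≤ coordHyp F n i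

variable {k : ℕ}

lemma rigA (hk : 2 ≤ k) {X X' : Submodule F (Fin n → F)} (hX : dm X = k) (h1 : (1 : Fin n → F) ∉ X)
    (h1' : (1 : Fin n → F) ∉ X') (ha : ∀ Y, dm Y = k → Fx Y → Ad X Y → Ad X' Y) :
    X' ≤ X ⊔ Submodule.span F {1} := by
  obtain ⟨Z1, l1, -, d1⟩ := ex_hyp X.zero_mem (by omega)
  obtain ⟨x, hx, hx1⟩ := ex_not_mem (A := Z1) (B := X) (by omega)
  obtain ⟨Z2, l2, hx2, d2⟩ := ex_hyp hx (by omega)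
  have hs : Z1 ⊔ Z2 = X := sup_hyp l1 l2 d1 (by omega) (fun e => hx1 (e ▸ hx2))
  have m1 : ∀ Z : Submodule F (Fin n → F), (1 : Fin n → F) ∈ Z ⊔ Submodule.span F {1} :=
    fun Z => Submodule.mem_sup_right (mem_spv _)
  have D : ∀ Z ≤ X, dm Z + 1 = dm X → dm (Z ⊔ Submodule.span F {1}) = k ∧
      Ad X (Z ⊔ Submodule.span F {1}) := by
    intro Z hZ dZ
    have d : dm (Z ⊔ Submodule.span F {1}) = dm Z + 1 := dm_sup_span (fun h => h1 (hZ h))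
    refine ⟨by omega, Ad.of_ge (A := Z) (by omega) ?_ hZ le_sup_left (by omega)⟩
    intro e
    exact h1 (e ▸ m1 Z)
  obtain ⟨e1, a1⟩ := D Z1 l1 d1
  obtain ⟨e2, a2⟩ := D Z2 l2 d2
  have b1 := ha _ e1 (Or.inl (m1 Z1)) a1
  have b2 := ha _ e2 (Or.inl (m1 Z2)) a2
  have dU := dm_sup_span h1
  have hne : Z1 ⊔ Submodule.span F {1} ≠ Z2 ⊔ Submodule.span F {1} := by
    intro e
    apply h1
    have : X ≤ Z1 ⊔ Submodule.span F {1} := by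
      rw [← hs]
      exact sup_le le_sup_left (e ▸ le_sup_left)
    rw [dm_eq this (by omega)]
    exact m1 Z1
  have a12 : Ad (Z1 ⊔ Submodule.span F {1}) (Z2 ⊔ Submodule.span F {1}) :=
    Ad.of_le (U := X ⊔ Submodule.span F {1}) (by omega) hne (sup_le_sup_right l1 _)
      (sup_le_sup_right l2 _) (by omega)
  rcases triple a12 b1.symm b2.symm with h | h
  · exact absurd (h ⟨m1 Z1, m1 Z2⟩) h1'
  · exact h.trans (sup_le (sup_le_sup_right l1 _) (sup_le_sup_right l2 _))

lemma rigB (hk : 2 ≤ k) {X X' : Submodule F (Fin n → F)} (hX : dm X = k) (hX' : dm X' = k)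
    (h1 : (1 : Fin n → F) ∉ X)
    (h1' : (1 : Fin n → F) ∉ X') (ha : ∀ Y, dm Y = k → Fx Y → Ad X Y → Ad X' Y) {i : Fin n}
    (hi : ¬ X ≤ coordHyp F n i)
    (he : (Pi.single i 1 : Fin n → F) ∉ X ⊔ Submodule.span F {1}) : X' = X := by
  have hle := rigA hk hX h1 h1' ha
  have m1 : ∀ Z : Submodule F (Fin n → F), ∀ v, v ∈ Z ⊔ Submodule.span F {v} :=
    fun Z v => Submodule.mem_sup_right (mem_spv _)
  have hu : (1 + Pi.single i 1 : Fin n → F) ∉ X ⊔ Submodule.span F {1} := by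
    intro h
    apply he
    have := Submodule.sub_mem _ h (m1 X 1)
    simpa using this
  set u : Fin n → F := 1 + Pi.single i 1 with hudef
  have dU := dm_sup_span h1
  have key : ∀ Z ≤ X, dm Z + 1 = dm X → ¬ Z ≤ coordHyp F n i → Z ≤ X' := by
    intro Z hZ dZ hZi
    have huX : u ∉ X := fun h => hu (Submodule.mem_sup_left h)
    have dA : dm (Z ⊔ Submodule.span F {1}) = dm Z + 1 := dm_sup_span (fun h => h1 (hZ h))
    have dB : dm (Z ⊔ Submodule.span F {u}) = dm Z + 1 := dm_sup_span (fun h => huX (hZ h))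
    have aA : Ad X (Z ⊔ Submodule.span F {1}) :=
      Ad.of_ge (A := Z) (by omega) (fun e => h1 (e ▸ m1 Z 1)) hZ le_sup_left (by omega)
    have aB : Ad X (Z ⊔ Submodule.span F {u}) :=
      Ad.of_ge (A := Z) (by omega) (fun e => huX (e ▸ m1 Z u)) hZ le_sup_left (by omega)
    have bA := ha _ (by omega) (Or.inl (m1 Z 1)) aA
    have bB := ha _ (by omega) (Or.inr ⟨i, m1 Z u, fun h => hZi (le_sup_left.trans h)⟩) aB
    have lA : Z ⊔ Submodule.span F {1} ≤ X ⊔ Submodule.span F {1} := sup_le_sup_right hZ _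
    have aAB : Ad (Z ⊔ Submodule.span F {1}) (Z ⊔ Submodule.span F {u}) :=
      Ad.of_ge (A := Z) (by omega) (fun e => hu (lA (e ▸ m1 Z u))) le_sup_left le_sup_left
        (by omega)
    rcases triple aAB bA.symm bB.symm with h | h
    · exact (le_inf le_sup_left le_sup_left).trans h
    · exfalso
      have dAB := aAB.sup
      generalize hAB : Z ⊔ Submodule.span F {1} ⊔ (Z ⊔ Submodule.span F {u}) = W at *
      have huW : u ∈ W := by
        rw [← hAB]; exact Submodule.mem_sup_right (m1 Z u)
      have lW : Z ⊔ Submodule.span F {1} ≤ W := by rw [← hAB]; exact le_sup_left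
      have hlt : dm ((X ⊔ Submodule.span F {1}) ⊓ W) < dm W :=
        dm_lt inf_le_right (fun e => hu (inf_eq_right.1 e huW))
      have e1 := dm_eq (le_inf lA lW) (by omega)
      have l2 : X' ≤ Z ⊔ Submodule.span F {1} := e1 ▸ le_inf hle h
      have e2 := dm_eq l2 (by omega)
      exact h1' (e2 ▸ m1 Z 1)
  have key2 : ∀ x ∈ X, x i ≠ 0 → x ∈ X' := by
    intro x hx hxi
    obtain ⟨Z, hZ, hxZ, dZ⟩ := ex_hyp hx (by omega)
    exact key Z hZ dZ (fun h => hxi (h hxZ)) hxZ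
  symm
  refine dm_eq ?_ (by omega)
  intro x hx
  by_cases hxi : x i = 0
  · obtain ⟨z, hz, hzi⟩ := ex_not_mem' hi
    have hzi : z i ≠ 0 := hzi
    have e : x = (x + z) - z := by abel
    rw [e]
    exact Submodule.sub_mem _ (key2 _ (X.add_mem hx hz) (by simp [hxi, hzi])) (key2 z hz hzi)
  · exact key2 x hx hxi

variable [Fintype F]

lemma Fx.nd (_hq : Fintype.card F = 2) {Y : Submodule F (Fin n → F)} (h : Fx Y) : nd Y := by
  rcases h with h | ⟨i, h, hi⟩
  · exact nd_one h
  · intro j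
    by_cases hij : j = i
    · rw [hij]; exact hi
    · intro hj
      have := hj h
      rw [mem_ch] at this
      simp [hij] at this

/-- the hypothesis on a domain -/
lemma rigid (hqk : 3 ≤ Fintype.card F ∨ (Fintype.card F = 2 ∧ 3 ≤ k)) (hk : 2 ≤ k)
    (hkn : k + 2 ≤ n) (D : Submodule F (Fin n → F) → Prop)
    (hD : (∀ X, D X ↔ dm X = k ∧ nd X) ∨ (∀ X, D X ↔ dm X = k))
    (h : Submodule F (Fin n → F) → Submodule F (Fin n → F))
    (hm : ∀ X, D X → dm (h X) = k) (hi : ∀ X Y, D X → D Y → h X = h Y → X = Y)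
    (ha : ∀ X Y, D X → D Y → Ad X Y → Ad (h X) (h Y))
    (hf : ∀ X, dm X = k → nd X →
      ((3 ≤ Fintype.card F ∧ ∃ w ∈ X, ndv w) ∨ (Fintype.card F = 2 ∧ Fx X)) → h X = X) :
    ∀ X, D X → h X = X := by
  have hDk : ∀ X, D X → dm X = k := by
    rcases hD with hD | hD
    · exact fun X h => ((hD X).1 h).1
    · exact fun X h => (hD X).1 h
  have hnD : ∀ X, dm X = k → nd X → D X := by
    rcases hD with hD | hD
    · exact fun X h h' => (hD X).2 ⟨h, h'⟩
    · exact fun X h h' => (hD X).2 h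
  intro X hX
  have dX := hDk X hX
  rcases hqk with hq | ⟨hq, -⟩
  · by_cases hw : ∃ w ∈ X, ndv w
    · obtain ⟨w, hwX, hw'⟩ := hw
      exact hf X dX (nd_of_ndv hw' hwX) (Or.inl ⟨hq, w, hwX, hw'⟩)
    · apply rigidBig hq hk hkn dX (hm X hX) hw
      rintro Y dY ⟨w, hwY, hw'⟩ hXY
      have nY := nd_of_ndv hw' hwY
      have := ha X Y hX (hnD Y dY nY) hXY
      rwa [hf Y dY nY (Or.inl ⟨hq, w, hwY, hw'⟩)] at this
  · have fix : ∀ Y, dm Y = k → Fx Y → h Y = Y := fun Y dY fY =>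
      hf Y dY (fY.nd hq) (Or.inr ⟨hq, fY⟩)
    have adj : ∀ X, D X → ∀ Y, dm Y = k → Fx Y → Ad X Y → Ad (h X) Y := by
      intro X hX Y dY fY hXY
      have := ha X Y hX (hnD Y dY (fY.nd hq)) hXY
      rwa [fix Y dY fY] at this
    have no1 : ∀ X, D X → (1 : Fin n → F) ∉ X → (1 : Fin n → F) ∉ h X := by
      intro X hX h1 h1'
      have e := fix (h X) (hm X hX) (Or.inl h1')
      have e2 := hi (h X) X (hnD _ (hm X hX) (nd_one h1')) hX e
      exact h1 (e2 ▸ h1')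
    have good : ∀ X, D X → (1 : Fin n → F) ∉ X → ∀ i, ¬ X ≤ coordHyp F n i →
        (Pi.single i 1 : Fin n → F) ∉ X ⊔ Submodule.span F {1} → h X = X :=
      fun X hX h1 i hi he => rigB hk (hDk X hX) (hm X hX) h1 (no1 X hX h1) (adj X hX) hi he
    by_cases h1 : (1 : Fin n → F) ∈ X
    · exact fix X dX (Or.inl h1)
    have dU := dm_sup_span h1
    obtain ⟨i, he⟩ : ∃ i, (Pi.single i 1 : Fin n → F) ∉ X ⊔ Submodule.span F {1} := by
      by_contra hc
      push Not at hc
      have := top_of_single hc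
      omega
    by_cases hXi : X ≤ coordHyp F n i
    · rcases hD with hD | hD
      · exact absurd hXi (((hD X).1 hX).2 i)
      by_contra hne
      have hle := rigA hk dX h1 (no1 X hX h1) (adj X hX)
      have dU' := dm_sup_span (no1 X hX h1)
      have dh := hm X hX
      have eU : h X ⊔ Submodule.span F {1} = X ⊔ Submodule.span F {1} :=
        dm_eq (sup_le hle le_sup_right) (by omega)
      have hUi : ¬ h X ≤ coordHyp F n i := by
        intro hc
        apply hne
        apply dm_eq _ (by omega)
        intro y hy
        obtain ⟨x, hx, z, hz, e⟩ := Submodule.mem_sup.1 (hle hy)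
        obtain ⟨c, rfl⟩ := Submodule.mem_span_singleton.1 hz
        have a1 : y i = 0 := hc hy
        have a2 : x i = 0 := hXi hx
        rw [← e] at a1
        have : c = 0 := by simpa [a2] using a1
        rw [← e, this]
        simpa using hx
      have := good (h X) ((hD _).2 dh) (no1 X hX h1) i hUi (by rw [eU]; exact he)
      exact hne (hi _ _ ((hD _).2 dh) hX this)
    · exact good X hX h1 i hXi he

lemma main_ext (hqk : 3 ≤ Fintype.card F ∨ (Fintype.card F = 2 ∧ 3 ≤ k)) (hk : 2 ≤ k)
    (hkn : k + 2 ≤ n) {f : Submodule F (Fin n → F) → Submodule F (Fin n → F)} (hf : Lv k f)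
    (hs : StarP k f) : ∃ G : Submodule F (Fin n → F) ≃o Submodule F (Fin n → F),
      ∀ X, dm X = k → nd X → f X = G X := by
  obtain ⟨Φ, hΦ, e⟩ := Gd.ex hf hs (by omega) hkn
  have : ∃ G : Submodule F (Fin n → F) ≃o Submodule F (Fin n → F), ∀ X, dm X = k →
      ((3 ≤ Fintype.card F ∧ ∃ w ∈ X, ndv w) ∨ (Fintype.card F = 2 ∧ Fx X)) → f X = G X := by
    rcases hqk with hq | ⟨hq, h3⟩
    · obtain ⟨G, hG⟩ := caseBig hq hΦ hk hkn
      refine ⟨G, fun X dX h => ?_⟩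
      rcases h with ⟨-, h⟩ | ⟨h, -⟩
      · rw [← e X dX]; exact hG X dX h
      · omega
    · obtain ⟨G, hG⟩ := caseTwo hq hΦ h3 hkn
      refine ⟨G, fun X dX h => ?_⟩
      rcases h with ⟨h, -⟩ | ⟨-, h⟩
      · omega
      · rw [← e X dX]; exact hG X dX h
  obtain ⟨G, hG⟩ := this
  refine ⟨G, ?_⟩
  have := rigid hqk hk hkn (fun X => dm X = k ∧ nd X) (Or.inl fun _ => Iff.rfl)
    (fun X => G.symm (f X)) (fun X hX => by rw [iso_dm]; exact hf.mem X hX.2 hX.1)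
    (fun X Y hX hY h => hf.inj X Y hX.2 hY.2 hX.1 hY.1 (G.symm.injective h))
    (fun X Y hX hY h => (iso_Ad _ _ _).2 (hf.adj X Y hX.2 hY.2 hX.1 hY.1 h))
    (fun X dX _ h => by simp only [hG X dX h, OrderIso.symm_apply_apply])
  intro X dX nX
  have h2 : G.symm (f X) = X := this X ⟨dX, nX⟩
  rw [← h2, G.apply_symm_apply, h2]

lemma adj_iff {X Y : Submodule F (Fin n → F)} (hk : 1 ≤ k) (hX : dm X = k) (hY : dm Y = k) :
    adjSub F n k X Y ↔ Ad X Y := by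
  have e : Module.finrank F ↥(X ⊓ Y) = dm (X ⊓ Y) := rfl
  unfold adjSub Ad
  rw [e]
  omega

/-- assembly: existence with a bijection `T` (identity or duality) -/
lemma main_fin (hqk : 3 ≤ Fintype.card F ∨ (Fintype.card F = 2 ∧ 3 ≤ k)) (hk : 2 ≤ k)
    (hkn : k + 2 ≤ n) {f : Submodule F (Fin n → F) → Submodule F (Fin n → F)}
    (T : Submodule F (Fin n → F) → Submodule F (Fin n → F))
    (TT : ∀ X, T (T X) = X) (Td : ∀ X, dm X = k → dm (T X) = k)
    (TA : ∀ X Y, Ad (T X) (T Y) ↔ Ad X Y)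
    (hf : Lv k (fun X => T (f X)))
    (hs : StarP k (fun X => T (f X))) :
    ∃ g : Submodule F (Fin n → F) → Submodule F (Fin n → F),
      (Set.BijOn g (grass F n k) (grass F n k) ∧
        (∀ X ∈ grass F n k, ∀ Y ∈ grass F n k,
          (adjSub F n k (g X) (g Y) ↔ adjSub F n k X Y)) ∧
        Set.EqOn g f (ndCodes F n k)) ∧
      ∀ g' : Submodule F (Fin n → F) → Submodule F (Fin n → F),
        (Set.BijOn g' (grass F n k) (grass F n k) ∧
          (∀ X ∈ grass F n k, ∀ Y ∈ grass F n k,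
            (adjSub F n k (g' X) (g' Y) ↔ adjSub F n k X Y)) ∧
          Set.EqOn g' f (ndCodes F n k)) →
        Set.EqOn g' g (grass F n k) := by
  obtain ⟨G, hG⟩ := main_ext hqk hk hkn hf hs
  have Ti : ∀ X Y, T X = T Y → X = Y := fun X Y h => by rw [← TT X, h, TT]
  have gd : ∀ X, dm X = k → dm (T (G X)) = k := fun X dX => Td _ (by rw [iso_dm, dX])
  refine ⟨fun X => T (G X), ⟨⟨fun X hX => gd X hX, fun X _ Y _ h => G.injective (Ti _ _ h),
    fun Y hY => ⟨G.symm (T Y), ?_, ?_⟩⟩, ?_, ?_⟩, ?_⟩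
  · exact (iso_dm _ _).trans (Td Y hY)
  · simp [TT]
  · intro X hX Y hY
    rw [adj_iff (by omega) (gd X hX) (gd Y hY), adj_iff (by omega) hX hY, TA, iso_Ad]
  · intro X hX
    have := hG X hX.1 hX.2
    simp only at this ⊢
    rw [← this, TT]
  · rintro g' ⟨hb, hadj, he⟩
    have := rigid hqk hk hkn (fun X => dm X = k) (Or.inr fun _ => Iff.rfl)
      (fun X => G.symm (T (g' X))) (fun X hX => by rw [iso_dm]; exact Td _ (hb.mapsTo hX))
      (fun X Y hX hY h => hb.injOn hX hY (Ti _ _ (G.symm.injective h)))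
      (fun X Y hX hY h => (iso_Ad _ _ _).2 ((TA _ _).2
        ((adj_iff (by omega) (hb.mapsTo hX) (hb.mapsTo hY)).1
          ((hadj X hX Y hY).2 ((adj_iff (by omega) hX hY).2 h)))))
      (fun X dX nX _ => by
        have h1 := he (show X ∈ ndCodes F n k from ⟨dX, nX⟩)
        have h2 : T (f X) = G X := hG X dX nX
        rw [h1, h2, OrderIso.symm_apply_apply])
    intro X hX
    have h2 := this X hX
    simp only at h2 ⊢
    apply Ti
    rw [TT]
    calc T (g' X) = G (G.symm (T (g' X))) := by simp
      _ = G X := by rw [h2]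

end Fin


/-- If `q ≥ 3` or `k ≥ 3`, every injective adjacency-preserving map
`f : C(n,k)_q → G_k(V)` extends uniquely to an automorphism of the Grassmann graph
`Γ_k(V)`. -/
theorem stmt_0 (q n k : ℕ) (F : Type*) [Field F] [Fintype F]
    (hF : Fintype.card F = q) (hk : 1 < k) (hkn : k < n - 1)
    (hqk : 3 ≤ q ∨ 3 ≤ k)
    (f : Submodule F (Fin n → F) → Submodule F (Fin n → F))
    (hmem : ∀ X ∈ ndCodes F n k, f X ∈ grass F n k)
    (hinj : Set.InjOn f (ndCodes F n k))
    (hadj : ∀ X ∈ ndCodes F n k, ∀ Y ∈ ndCodes F n k,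
      adjSub F n k X Y → adjSub F n k (f X) (f Y)) :
    ∃ g : Submodule F (Fin n → F) → Submodule F (Fin n → F),
      (Set.BijOn g (grass F n k) (grass F n k) ∧
        (∀ X ∈ grass F n k, ∀ Y ∈ grass F n k,
          (adjSub F n k (g X) (g Y) ↔ adjSub F n k X Y)) ∧
        Set.EqOn g f (ndCodes F n k)) ∧
      ∀ g' : Submodule F (Fin n → F) → Submodule F (Fin n → F),
        (Set.BijOn g' (grass F n k) (grass F n k) ∧
          (∀ X ∈ grass F n k, ∀ Y ∈ grass F n k,
            (adjSub F n k (g' X) (g' Y) ↔ adjSub F n k X Y)) ∧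
          Set.EqOn g' f (ndCodes F n k)) →
        Set.EqOn g' g (grass F n k) := by
  have hc : 2 ≤ Fintype.card F := two_le_card
  have hkn2 : k + 2 ≤ n := by omega
  have hqk2 : 3 ≤ Fintype.card F ∨ (Fintype.card F = 2 ∧ 3 ≤ k) := by omega
  have hL : Lv k f :=
    { mem := fun X nX dX => hmem X ⟨dX, nX⟩
      inj := fun X Y nX nY dX dY h => hinj ⟨dX, nX⟩ ⟨dY, nY⟩ h
      adj := fun X Y nX nY dX dY h =>
        (adj_iff (by omega) (hmem X ⟨dX, nX⟩) (hmem Y ⟨dY, nY⟩)).1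
          (hadj X ⟨dX, nX⟩ Y ⟨dY, nY⟩ ((adj_iff (by omega) dX dY).2 h)) }
  rcases first hL hk hkn2 with hs | ⟨h2, hs⟩
  · exact main_fin hqk2 (by omega) hkn2 (fun X => X) (fun _ => rfl) (fun _ h => h)
      (fun _ _ => Iff.rfl) hL hs
  · exact main_fin hqk2 (by omega) hkn2 du du_du (fun X h => by rw [du_dm]; omega)
      (fun _ _ => du_Ad) (hL.du h2) hs
end

section
/- Let n ≥ 4 and V = F_2^n. There exist an injective map h : C(n,2)_2 → G_2(V) and subspaces X, Y ∈ C(n,2)_2 such that: h(X') and h(Y') are adjacent whenever X', Y' ∈ C(n,2)_2 are adjacent; X and Y are not adjacent; and h(X) and h(Y) are adjacent. Consequently, no automorphism of the Grassmann graph Γ_2(V) restricts to h on C(n,2)_2. -/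
section Helpers

variable {n : ℕ}

lemma z2_cases (a : ZMod 2) : a = 0 ∨ a = 1 := by
  revert a; decide

lemma v2_add_self (x : Fin n → ZMod 2) : x + x = 0 := by
  funext i; exact CharTwo.add_self_eq_zero (x i)

lemma fr2 {a b : Fin n → ZMod 2} (ha : a ≠ 0) (hb : b ≠ 0) (hab : a ≠ b) :
    Module.finrank (ZMod 2) ↥(Submodule.span (ZMod 2) {a, b}) = 2 := by
  have hli : LinearIndependent (ZMod 2) ![a, b] := by
    rw [LinearIndependent.pair_iff]
    intro s t h
    rcases z2_cases s with rfl | rfl <;> rcases z2_cases t with rfl | rfl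
    · exact ⟨rfl, rfl⟩
    · simp at h; exact absurd h hb
    · simp at h; exact absurd h ha
    · simp only [one_smul] at h
      exfalso; apply hab
      have h2 := v2_add_self b
      exact add_right_cancel (h.trans h2.symm)
  have := finrank_span_eq_card hli
  rw [Matrix.range_cons_cons_empty] at this
  simpa using this

lemma eq_span {X : Submodule (ZMod 2) (Fin n → ZMod 2)}
    (hX : Module.finrank (ZMod 2) ↥X = 2) {a b : Fin n → ZMod 2} (haX : a ∈ X) (hbX : b ∈ X)
    (ha : a ≠ 0) (hb : b ≠ 0) (hab : a ≠ b) : X = Submodule.span (ZMod 2) {a, b} := by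
  symm
  apply Submodule.eq_of_le_of_finrank_eq
  · rw [Submodule.span_le]
    rintro v (rfl | rfl)
    · exact haX
    · exact hbX
  · rw [fr2 ha hb hab, hX]

lemma exists_pair {X : Submodule (ZMod 2) (Fin n → ZMod 2)}
    (hX : Module.finrank (ZMod 2) ↥X = 2) :
    ∃ a ∈ X, ∃ b ∈ X, a ≠ 0 ∧ b ≠ 0 ∧ a ≠ b := by
  let B := Module.finBasisOfFinrankEq (ZMod 2) ↥X hX
  refine ⟨B 0, (B 0).2, B 1, (B 1).2, ?_, ?_, ?_⟩
  · simpa using B.ne_zero 0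
  · simpa using B.ne_zero 1
  · intro h
    have := B.injective (Subtype.ext h)
    exact absurd this (by decide)

lemma exists_other {X : Submodule (ZMod 2) (Fin n → ZMod 2)}
    (hX : Module.finrank (ZMod 2) ↥X = 2) (x : Fin n → ZMod 2) :
    ∃ y ∈ X, y ≠ 0 ∧ y ≠ x := by
  obtain ⟨a, haX, b, hbX, ha, hb, hab⟩ := exists_pair hX
  by_cases h : a = x
  · exact ⟨b, hbX, hb, fun h' => hab (h.trans h'.symm)⟩
  · exact ⟨a, haX, ha, h⟩

lemma mem_span_two {a b v : Fin n → ZMod 2} :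
    v ∈ Submodule.span (ZMod 2) {a, b} ↔ v = 0 ∨ v = a ∨ v = b ∨ v = a + b := by
  rw [Submodule.mem_span_pair]
  constructor
  · rintro ⟨s, t, rfl⟩
    rcases z2_cases s with rfl | rfl <;> rcases z2_cases t with rfl | rfl <;> simp
  · rintro (rfl | rfl | rfl | rfl)
    · exact ⟨0, 0, by simp⟩
    · exact ⟨1, 0, by simp⟩
    · exact ⟨0, 1, by simp⟩
    · exact ⟨1, 1, by simp⟩

lemma adj_of {X Y : Submodule (ZMod 2) (Fin n → ZMod 2)}
    (hX : Module.finrank (ZMod 2) ↥X = 2) (hY : Module.finrank (ZMod 2) ↥Y = 2)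
    (hne : X ≠ Y) {v : Fin n → ZMod 2} (hvX : v ∈ X) (hvY : v ∈ Y) (hv : v ≠ 0) :
    adjSub (ZMod 2) n 2 X Y := by
  unfold adjSub
  have h1 : Module.finrank (ZMod 2) ↥(X ⊓ Y) ≠ 0 := by
    intro h
    rw [Submodule.finrank_eq_zero] at h
    have : v ∈ X ⊓ Y := ⟨hvX, hvY⟩
    rw [h] at this
    exact hv (by simpa using this)
  have h2 : Module.finrank (ZMod 2) ↥(X ⊓ Y) ≤ 2 :=
    (Submodule.finrank_mono inf_le_left).trans hX.le
  have h3 : Module.finrank (ZMod 2) ↥(X ⊓ Y) ≠ 2 := by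
    intro h
    have e1 : X ⊓ Y = X := Submodule.eq_of_le_of_finrank_eq inf_le_left (h.trans hX.symm)
    have e2 : X ⊓ Y = Y := Submodule.eq_of_le_of_finrank_eq inf_le_right (h.trans hY.symm)
    exact hne (e1.symm.trans e2)
  generalize Module.finrank (ZMod 2) ↥(X ⊓ Y) = m at h1 h2 h3 ⊢
  clear hX hY
  omega

lemma of_adj {X Y : Submodule (ZMod 2) (Fin n → ZMod 2)}
    (hX : Module.finrank (ZMod 2) ↥X = 2) (h : adjSub (ZMod 2) n 2 X Y) :
    X ≠ Y ∧ ∃ v, v ∈ X ∧ v ∈ Y ∧ v ≠ 0 := by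
  unfold adjSub at h
  constructor
  · rintro rfl
    rw [inf_idem, hX] at h
    omega
  · have : X ⊓ Y ≠ ⊥ := by
      intro h0
      rw [h0, finrank_bot] at h
      omega
    obtain ⟨v, hv, hv0⟩ := Submodule.exists_mem_ne_zero_of_ne_bot this
    exact ⟨v, hv.1, hv.2, hv0⟩

lemma nd_coord {X : Submodule (ZMod 2) (Fin n → ZMod 2)} (hX : X ∈ ndCodes (ZMod 2) n 2)
    {a b : Fin n → ZMod 2} (haX : a ∈ X) (hbX : b ∈ X)
    (ha : a ≠ 0) (hb : b ≠ 0) (hab : a ≠ b) (i : Fin n) (hi : b i = 0) : a i = 1 := by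
  have hs := eq_span hX.1 haX hbX ha hb hab
  by_contra h
  have h0 : a i = 0 := (z2_cases (a i)).resolve_right h
  apply hX.2 i
  intro v hv
  rw [hs, mem_span_two] at hv
  simp only [coordHyp, LinearMap.mem_ker, LinearMap.proj_apply]
  rcases hv with rfl | rfl | rfl | rfl <;> simp [h0, hi]

/-- The projection `x ↦ x + x_j 1`. -/
def projT (j : Fin n) : (Fin n → ZMod 2) →ₗ[ZMod 2] (Fin n → ZMod 2) where
  toFun x := x + x j • (1 : Fin n → ZMod 2)
  map_add' x y := by
    funext i; simp; ring
  map_smul' c x := by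
    funext i; simp; ring

lemma projT_cases (j : Fin n) (x : Fin n → ZMod 2) : projT j x = x ∨ projT j x = x + 1 := by
  rcases z2_cases (x j) with h | h <;> simp [projT, h]

lemma projT_j (j : Fin n) (x : Fin n → ZMod 2) : projT j x j = 0 := by
  simp [projT, CharTwo.add_self_eq_zero]

lemma v2_eq_of_add {x y : Fin n → ZMod 2} (h : x + y = 0) : x = y :=
  add_right_cancel (h.trans (v2_add_self y).symm)

lemma projT_zero {j : Fin n} {x : Fin n → ZMod 2} (h : projT j x = 0) : x = 0 ∨ x = 1 := by
  rcases projT_cases j x with h' | h'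
  · left; rw [← h', h]
  · right; exact v2_eq_of_add (h' ▸ h)

lemma projT_eq {j : Fin n} {x y : Fin n → ZMod 2} (h : projT j x = projT j y) :
    x = y ∨ x + 1 = y := by
  have : projT j (x + y) = 0 := by rw [map_add, h, v2_add_self]
  rcases projT_zero this with h' | h'
  · left; exact v2_eq_of_add h'
  · right; rw [← h', ← add_assoc, v2_add_self, zero_add]

lemma map_fr {j : Fin n} {X : Submodule (ZMod 2) (Fin n → ZMod 2)}
    (hX : Module.finrank (ZMod 2) ↥X = 2) (h1 : (1 : Fin n → ZMod 2) ∉ X) :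
    Module.finrank (ZMod 2) ↥(X.map (projT j)) = 2 := by
  obtain ⟨a, haX, b, hbX, ha, hb, hab⟩ := exists_pair hX
  have key : ∀ v ∈ X, v ≠ 0 → projT j v ≠ 0 := by
    intro v hv hv0 h
    rcases projT_zero h with rfl | rfl
    · exact hv0 rfl
    · exact h1 hv
  rw [eq_span hX haX hbX ha hb hab, Submodule.map_span, Set.image_pair]
  apply fr2 (key a haX ha) (key b hbX hb)
  intro h
  apply key (a + b) (X.add_mem haX hbX) (fun h' => hab (v2_eq_of_add h'))
  rw [map_add, h, v2_add_self]

lemma map_le {j : Fin n} {X Y : Submodule (ZMod 2) (Fin n → ZMod 2)}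
    (hX : X ∈ ndCodes (ZMod 2) n 2) (hY : Y ∈ ndCodes (ZMod 2) n 2)
    (h1X : (1 : Fin n → ZMod 2) ∉ X) (h1Y : (1 : Fin n → ZMod 2) ∉ Y)
    (h : X.map (projT j) = Y.map (projT j)) : X ≤ Y := by
  have key : ∀ v ∈ X, v ∈ Y ∨ v + 1 ∈ Y := by
    intro v hv
    have hm : projT j v ∈ Y.map (projT j) := h ▸ Submodule.mem_map_of_mem hv
    obtain ⟨w, hw, e⟩ := hm
    rcases projT_eq e.symm with rfl | rfl
    · exact Or.inl hw
    · exact Or.inr hw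
  intro x hx
  by_contra hxY
  have hx1 : x + 1 ∈ Y := (key x hx).resolve_left hxY
  have hx0 : x ≠ 0 := by rintro rfl; exact hxY Y.zero_mem
  have hy : ∃ y ∈ X, y ∈ Y ∧ y ≠ 0 ∧ y ≠ x := by
    obtain ⟨y, hyX, hy0, hyx⟩ := exists_other hX.1 x
    rcases key y hyX with hyY | hyY
    · exact ⟨y, hyX, hyY, hy0, hyx⟩
    · refine ⟨x + y, X.add_mem hx hyX, ?_, fun h' => hyx (v2_eq_of_add h').symm, ?_⟩
      · have := Y.add_mem hx1 hyY
        have e : x + 1 + (y + 1) = x + y := by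
          rw [add_add_add_comm, v2_add_self, add_zero]
        rwa [e] at this
      · intro h'
        exact hy0 (by simpa using h')
  obtain ⟨y, hyX, hyY, hy0, hyx⟩ := hy
  have hi : ∃ i, y i = 0 := by
    by_contra hcon
    push Not at hcon
    have : y = 1 := by
      funext i
      exact (z2_cases (y i)).resolve_left (hcon i)
    exact h1X (this ▸ hyX)
  obtain ⟨i, hi⟩ := hi
  have c1 := nd_coord hX hx hyX hx0 hy0 (Ne.symm hyx) i hi
  have c2 := nd_coord hY hx1 hyY (fun h' => h1X (v2_eq_of_add h' ▸ hx)) hy0 (by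
    intro h'
    apply h1X
    have : (1 : Fin n → ZMod 2) = x + y := by
      rw [← h', ← add_assoc, v2_add_self, zero_add]
    rw [this]
    exact X.add_mem hx hyX) i hi
  simp [c1] at c2

lemma nd_span {a b : Fin n → ZMod 2} (ha : a ≠ 0) (hb : b ≠ 0) (hab : a ≠ b)
    (hc : ∀ i, a i = 1 ∨ b i = 1) :
    Submodule.span (ZMod 2) {a, b} ∈ ndCodes (ZMod 2) n 2 := by
  refine ⟨fr2 ha hb hab, fun i hle => ?_⟩
  have h1 : a i = 0 := hle (Submodule.subset_span (by simp))
  have h2 : b i = 0 := hle (Submodule.subset_span (by simp))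
  rcases hc i with h | h
  · rw [h1] at h; exact absurd h (by decide)
  · rw [h2] at h; exact absurd h (by decide)

open Classical in
/-- The map `h`. -/
noncomputable def mapH (j : Fin n) (X : Submodule (ZMod 2) (Fin n → ZMod 2)) :
    Submodule (ZMod 2) (Fin n → ZMod 2) :=
  if (1 : Fin n → ZMod 2) ∈ X then X else X.map (projT j)

lemma mapH_pos {j : Fin n} {X : Submodule (ZMod 2) (Fin n → ZMod 2)}
    (h : (1 : Fin n → ZMod 2) ∈ X) : mapH j X = X := if_pos h

lemma mapH_neg {j : Fin n} {X : Submodule (ZMod 2) (Fin n → ZMod 2)}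
    (h : (1 : Fin n → ZMod 2) ∉ X) : mapH j X = X.map (projT j) := if_neg h

lemma one_notMem_map (j : Fin n) (X : Submodule (ZMod 2) (Fin n → ZMod 2)) :
    (1 : Fin n → ZMod 2) ∉ X.map (projT j) := by
  rintro ⟨v, -, e⟩
  have := projT_j j v
  rw [e] at this
  exact absurd this (by simp)

lemma mapH_grass {j : Fin n} {X : Submodule (ZMod 2) (Fin n → ZMod 2)}
    (hX : X ∈ ndCodes (ZMod 2) n 2) : Module.finrank (ZMod 2) ↥(mapH j X) = 2 := by
  by_cases h : (1 : Fin n → ZMod 2) ∈ X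
  · rw [mapH_pos h]; exact hX.1
  · rw [mapH_neg h]; exact map_fr hX.1 h

lemma mapH_inj (j : Fin n) : Set.InjOn (mapH j) (ndCodes (ZMod 2) n 2) := by
  intro X hX Y hY e
  by_cases h : (1 : Fin n → ZMod 2) ∈ X <;> by_cases h' : (1 : Fin n → ZMod 2) ∈ Y
  · rwa [mapH_pos h, mapH_pos h'] at e
  · rw [mapH_pos h, mapH_neg h'] at e
    exact absurd (e ▸ h) (one_notMem_map j Y)
  · rw [mapH_neg h, mapH_pos h'] at e
    exact absurd (e ▸ h') (one_notMem_map j X)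
  · rw [mapH_neg h, mapH_neg h'] at e
    exact le_antisymm (map_le hX hY h h' e) (map_le hY hX h' h e.symm)

lemma mapH_adj (j : Fin n) {X Y : Submodule (ZMod 2) (Fin n → ZMod 2)}
    (hX : X ∈ ndCodes (ZMod 2) n 2) (hY : Y ∈ ndCodes (ZMod 2) n 2)
    (hadj : adjSub (ZMod 2) n 2 X Y) : adjSub (ZMod 2) n 2 (mapH j X) (mapH j Y) := by
  obtain ⟨hne, v, hvX, hvY, hv⟩ := of_adj hX.1 hadj
  have hne' : mapH j X ≠ mapH j Y := fun e => hne (mapH_inj j hX hY e)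
  have key : ∀ Z : Submodule (ZMod 2) (Fin n → ZMod 2), v ∈ Z → projT j v ∈ mapH j Z := by
    intro Z hZ
    by_cases h : (1 : Fin n → ZMod 2) ∈ Z
    · rw [mapH_pos h]
      rcases projT_cases j v with e | e <;> rw [e]
      · exact hZ
      · exact Z.add_mem hZ h
    · rw [mapH_neg h]; exact Submodule.mem_map_of_mem hZ
  by_cases h0 : projT j v = 0
  · have hv1 : v = 1 := (projT_zero h0).resolve_left hv
    subst hv1
    rw [mapH_pos hvX, mapH_pos hvY]
    exact hadj
  · exact adj_of (mapH_grass hX) (mapH_grass hY) hne' (key X hvX) (key Y hvY) h0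

lemma witness (hn : 4 ≤ n) :
    ∃ X ∈ ndCodes (ZMod 2) n 2, ∃ Y ∈ ndCodes (ZMod 2) n 2,
      ¬ adjSub (ZMod 2) n 2 X Y ∧
      adjSub (ZMod 2) n 2 (mapH (⟨0, by omega⟩ : Fin n) X) (mapH (⟨0, by omega⟩ : Fin n) Y) := by
  set i0 : Fin n := ⟨0, by omega⟩ with hi0
  set i1 : Fin n := ⟨1, by omega⟩ with hi1
  set i2 : Fin n := ⟨2, by omega⟩ with hi2
  set i3 : Fin n := ⟨3, by omega⟩ with hi3
  let x : Fin n → ZMod 2 := fun i => if i.1 < 2 then 0 else 1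
  let y : Fin n → ZMod 2 := fun i => if i.1 = 2 then 0 else 1
  let u : Fin n → ZMod 2 := fun i => if i.1 < 2 then 1 else 0
  let w : Fin n → ZMod 2 := fun i => if i.1 = 1 then 0 else 1
  have x0 : x i0 = 0 := by simp [x, hi0]
  have x1 : x i1 = 0 := by simp [x, hi1]
  have x2 : x i2 = 1 := by simp [x, hi2]
  have x3 : x i3 = 1 := by simp [x, hi3]
  have y0 : y i0 = 1 := by simp [y, hi0]
  have y1 : y i1 = 1 := by simp [y, hi1]
  have y2 : y i2 = 0 := by simp [y, hi2]
  have y3 : y i3 = 1 := by simp [y, hi3]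
  have u0 : u i0 = 1 := by simp [u, hi0]
  have u1 : u i1 = 1 := by simp [u, hi1]
  have u2 : u i2 = 0 := by simp [u, hi2]
  have u3 : u i3 = 0 := by simp [u, hi3]
  have w0 : w i0 = 1 := by simp [w, hi0]
  have w1 : w i1 = 0 := by simp [w, hi1]
  have w2 : w i2 = 1 := by simp [w, hi2]
  have w3 : w i3 = 1 := by simp [w, hi3]
  have hux : u + 1 = x := by
    funext i
    by_cases h : i.1 < 2 <;>
      simp only [u, x, h, if_true, if_false, Pi.add_apply, Pi.one_apply] <;> decide
  have hxu : x i0 = 0 ∧ u i0 = 1 := ⟨x0, u0⟩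
  have hcX : ∀ i, x i = 1 ∨ y i = 1 := by
    intro i
    by_cases h : i.1 = 2 <;> simp [x, y, h]
  have hcY : ∀ i, u i = 1 ∨ w i = 1 := by
    intro i
    by_cases h : i.1 = 1 <;> simp [u, w, h]
  clear_value x y u w
  have ne_of : ∀ {a b : Fin n → ZMod 2} (i : Fin n), a i ≠ b i → a ≠ b :=
    fun i h e => h (congrFun e i)
  have hX : Submodule.span (ZMod 2) {x, y} ∈ ndCodes (ZMod 2) n 2 :=
    nd_span (ne_of i2 (by simp [x2])) (ne_of i0 (by simp [y0])) (ne_of i0 (by simp [x0, y0])) hcX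
  have hY : Submodule.span (ZMod 2) {u, w} ∈ ndCodes (ZMod 2) n 2 :=
    nd_span (ne_of i0 (by simp [u0])) (ne_of i0 (by simp [w0])) (ne_of i1 (by simp [u1, w1])) hcY
  have hdisj : ∀ v, v ∈ Submodule.span (ZMod 2) {x, y} → v ∈ Submodule.span (ZMod 2) {u, w} →
      v = 0 := by
    intro v hv hv'
    rw [mem_span_two] at hv hv'
    have d : (1 : ZMod 2) + 1 = 0 := by decide
    rcases hv with e | e | e | e
    · exact e
    all_goals
      exfalso
      have e0 := congrFun e i0
      have e1 := congrFun e i1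
      have e2 := congrFun e i2
      have e3 := congrFun e i3
      rcases hv' with f | f | f | f <;>
      · have f0 := congrFun f i0
        have f1 := congrFun f i1
        have f2 := congrFun f i2
        have f3 := congrFun f i3
        simp only [Pi.add_apply, Pi.zero_apply, x0, x1, x2, x3, y0, y1, y2, y3, u0, u1, u2, u3,
          w0, w1, w2, w3, d, add_zero, zero_add] at e0 e1 e2 e3 f0 f1 f2 f3
        simp_all
  have h1X : (1 : Fin n → ZMod 2) ∉ Submodule.span (ZMod 2) {x, y} := by
    rw [mem_span_two]
    rintro (e | e | e | e)
    · simpa using congrFun e i0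
    · simpa [x0] using congrFun e i0
    · simpa [y2] using congrFun e i2
    · have := congrFun e i3
      simp [x3, y3] at this
  have h1Y : (1 : Fin n → ZMod 2) ∉ Submodule.span (ZMod 2) {u, w} := by
    rw [mem_span_two]
    rintro (e | e | e | e)
    · simpa using congrFun e i0
    · simpa [u2] using congrFun e i2
    · simpa [w1] using congrFun e i1
    · have := congrFun e i0
      simp [u0, w0] at this
  have hxX : x ∈ Submodule.span (ZMod 2) {x, y} := Submodule.subset_span (by simp)
  have huY : u ∈ Submodule.span (ZMod 2) {u, w} := Submodule.subset_span (by simp)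
  have hx0 : x ≠ 0 := ne_of i2 (by simp [x2])
  refine ⟨_, hX, _, hY, ?_, ?_⟩
  · intro h
    obtain ⟨-, v, hv, hv', hv0⟩ := of_adj hX.1 h
    exact hv0 (hdisj v hv hv')
  · apply adj_of (mapH_grass hX) (mapH_grass hY) (v := x) _ _ _ hx0
    · intro e
      have := mapH_inj i0 hX hY e
      exact hx0 (hdisj x hxX (this ▸ hxX))
    · rw [mapH_neg h1X]
      refine ⟨x, hxX, ?_⟩
      simp [projT, x0]
    · rw [mapH_neg h1Y]
      refine ⟨u, huY, ?_⟩
      simp [projT, u0, hux]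

end Helpers

/-- For `V = F_2^n`, `n ≥ 4`, there is an injective adjacency-preserving
map `h : C(n,2)_2 → G_2(V)` and non-adjacent `X, Y ∈ C(n,2)_2` with `h X, h Y` adjacent;
consequently no automorphism of `Γ_2(V)` restricts to `h` on `C(n,2)_2`. -/
theorem stmt_1 (n : ℕ) (hn : 4 ≤ n) :
    ∃ h : Submodule (ZMod 2) (Fin n → ZMod 2) → Submodule (ZMod 2) (Fin n → ZMod 2),
      (∀ X ∈ ndCodes (ZMod 2) n 2, h X ∈ grass (ZMod 2) n 2) ∧
      Set.InjOn h (ndCodes (ZMod 2) n 2) ∧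
      (∀ X ∈ ndCodes (ZMod 2) n 2, ∀ Y ∈ ndCodes (ZMod 2) n 2,
        adjSub (ZMod 2) n 2 X Y → adjSub (ZMod 2) n 2 (h X) (h Y)) ∧
      (∃ X ∈ ndCodes (ZMod 2) n 2, ∃ Y ∈ ndCodes (ZMod 2) n 2,
        ¬ adjSub (ZMod 2) n 2 X Y ∧ adjSub (ZMod 2) n 2 (h X) (h Y)) ∧
      (∀ g : Submodule (ZMod 2) (Fin n → ZMod 2) → Submodule (ZMod 2) (Fin n → ZMod 2),
        Set.BijOn g (grass (ZMod 2) n 2) (grass (ZMod 2) n 2) →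
        (∀ X ∈ grass (ZMod 2) n 2, ∀ Y ∈ grass (ZMod 2) n 2,
          (adjSub (ZMod 2) n 2 (g X) (g Y) ↔ adjSub (ZMod 2) n 2 X Y)) →
        ¬ Set.EqOn g h (ndCodes (ZMod 2) n 2)) := by
  refine ⟨mapH ⟨0, by omega⟩, fun X hX => mapH_grass hX, mapH_inj _,
    fun X hX Y hY h => mapH_adj _ hX hY h, witness hn, ?_⟩
  intro g _ hg heq
  obtain ⟨X, hX, Y, hY, hna, ha⟩ := witness hn
  apply hna
  rw [← hg X hX.1 Y hY.1, heq hX, heq hY]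
  exact ha
end

section
/- Let q ≥ 3 be a prime power and 1 < k < n−1. Then for every (k−1)-dimensional subspace X ⊂ V, the set S^c(X) is a maximal clique of the graph Γ(n,k)_q. -/
/-- A proper subspace misses some vector with all coordinates nonzero, when `q ≥ 3`. -/
theorem exists_full_not_mem (n : ℕ) (F : Type*) [Field F] [Fintype F]
    (hq : 3 ≤ Fintype.card F) (W : Submodule F (Fin n → F))
    (hW : Module.finrank F ↥W < n) : ∃ v : Fin n → F, (∀ i, v i ≠ 0) ∧ v ∉ W := by
  classical
  by_contra! h
  have hc : ∃ c : F, c ≠ 0 ∧ c ≠ 1 := by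
    by_contra! hc
    have h1 : (Finset.univ : Finset F) ⊆ {0, 1} := by
      intro c _
      by_cases h0 : c = 0
      · simp [h0]
      · simp [hc c h0]
    have h2 := Finset.card_le_card h1
    have h3 : ({0, 1} : Finset F).card ≤ 2 := Finset.card_le_two
    rw [Finset.card_univ] at h2
    omega
  obtain ⟨c, hc0, hc1⟩ := hc
  have htop : W = ⊤ := by
    rw [eq_top_iff, ← (Pi.basisFun F (Fin n)).span_eq, Submodule.span_le]
    rintro _ ⟨j, rfl⟩
    have h1 : (fun _ => 1 : Fin n → F) ∈ W := h _ (fun i => one_ne_zero)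
    have h2 : (Function.update (fun _ => 1 : Fin n → F) j c) ∈ W := by
      apply h
      intro i
      by_cases hij : i = j
      · subst hij; simpa using hc0
      · simp [Function.update_of_ne hij]
    have h3 := W.smul_mem (c - 1)⁻¹ (W.sub_mem h2 h1)
    have hne : c - 1 ≠ 0 := sub_ne_zero.mpr hc1
    change _ ∈ W
    convert h3 using 1
    ext i
    by_cases hij : i = j
    · subst hij; simp [hne]
    · simp [hij]
  rw [htop, finrank_top] at hW
  simp at hW

/-- Existence of an element of the restricted star not contained in `W`. -/
theorem exists_star (n k : ℕ) (F : Type*) [Field F] [Fintype F]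
    (hq : 3 ≤ Fintype.card F) (hk : 1 < k) (X W : Submodule F (Fin n → F))
    (hX : Module.finrank F ↥X = k - 1) (hXW : X ≤ W)
    (hW : Module.finrank F ↥W < n) : ∃ Y ∈ scOf F n k X, ¬ Y ≤ W := by
  obtain ⟨v, hv, hvW⟩ := exists_full_not_mem n F hq W hW
  have hvX : v ∉ X := fun h => hvW (hXW h)
  have hvY : v ∈ X ⊔ Submodule.span F {v} :=
    Submodule.mem_sup_right (Submodule.mem_span_singleton_self v)
  have hdim : Module.finrank F ↥(X ⊔ Submodule.span F {v}) = k := by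
    have h1 := Submodule.finrank_add_le_finrank_add_finrank X (Submodule.span F {v})
    have h2 := finrank_span_singleton (K := F) (v := v) (fun h => hvX (h ▸ X.zero_mem))
    have h3 : X < X ⊔ Submodule.span F {v} :=
      lt_of_le_of_ne le_sup_left (fun h => hvX (h ▸ hvY))
    have h4 := Submodule.finrank_lt_finrank_of_lt h3
    omega
  exact ⟨X ⊔ Submodule.span F {v}, ⟨⟨hdim, le_sup_left⟩, hdim, fun i hi => hv i (hi hvY)⟩,
    fun h => hvW (h hvY)⟩

/-- For `q ≥ 3` and `1 < k < n-1`, the set `S^c(X)` is a maximal clique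
of `Γ(n,k)_q` for every `(k-1)`-dimensional subspace `X ⊂ V`. -/
theorem stmt_2 (q n k : ℕ) (F : Type*) [Field F] [Fintype F]
    (hF : Fintype.card F = q) (hq : 3 ≤ q) (hk : 1 < k) (hkn : k < n - 1)
    (X : Submodule F (Fin n → F)) (hX : Module.finrank F ↥X = k - 1) :
    isMaxClique F n k (scOf F n k X) := by
  subst hF
  refine ⟨⟨fun Y hY => hY.2, ?_⟩, ?_⟩
  · intro Y hY Z hZ hne
    have h1 : X ≤ Y ⊓ Z := le_inf hY.1.2 hZ.1.2
    have h2 := Submodule.finrank_mono h1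
    have h3 : Y ⊓ Z < Y := by
      refine lt_of_le_of_ne inf_le_left (fun h => hne ?_)
      exact Submodule.eq_of_le_of_finrank_eq (inf_eq_left.mp h) (hY.1.1.trans hZ.1.1.symm)
    have h4 := Submodule.finrank_lt_finrank_of_lt h3
    have h5 : Module.finrank F ↥Y = k := hY.1.1
    unfold adjSub
    omega
  · intro T hT hST
    refine Set.Subset.antisymm (fun Z hZ => ?_) hST
    have hZnd := hT.1 hZ
    have hZk : Module.finrank F ↥Z = k := hZnd.1
    refine ⟨⟨hZk, ?_⟩, hZnd⟩
    by_contra hXZ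
    have key : ∀ Y ∈ scOf F n k X, Module.finrank F ↥(Y ⊓ Z) = k - 1 := fun Y hY =>
      hT.2 (hST hY) hZ (fun h => hXZ (h ▸ hY.1.2))
    obtain ⟨Y₀, hY₀, -⟩ := exists_star n k F hq hk X X hX le_rfl (by omega)
    have h0 := key Y₀ hY₀
    have hY₀k : Module.finrank F ↥Y₀ = k := hY₀.1.1
    have h1 := Submodule.finrank_sup_add_finrank_inf_eq X (Y₀ ⊓ Z)
    have h2 : Module.finrank F ↥(X ⊔ Y₀ ⊓ Z) ≤ Module.finrank F ↥Y₀ :=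
      Submodule.finrank_mono (sup_le hY₀.1.2 inf_le_left)
    have h3 : Module.finrank F ↥(X ⊓ (Y₀ ⊓ Z)) ≤ Module.finrank F ↥(X ⊓ Z) :=
      Submodule.finrank_mono (inf_le_inf_left X inf_le_right)
    have h4 := Submodule.finrank_sup_add_finrank_inf_eq X Z
    obtain ⟨Y, hY, hYW⟩ := exists_star n k F hq hk X (X ⊔ Z) hX le_sup_left (by omega)
    have hYk : Module.finrank F ↥Y = k := hY.1.1
    have h5 : Y ⊓ (X ⊔ Z) < Y :=
      lt_of_le_of_ne inf_le_left (fun h => hYW (inf_eq_left.mp h))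
    have h6 := Submodule.finrank_lt_finrank_of_lt h5
    have h7 := key Y hY
    have h8 : Y ⊓ Z ≤ Y ⊓ (X ⊔ Z) := inf_le_inf_left Y le_sup_right
    have h9 : Y ⊓ Z = Y ⊓ (X ⊔ Z) := Submodule.eq_of_le_of_finrank_le h8 (by omega)
    have h10 : X ≤ Y ⊓ Z := h9 ▸ le_inf hY.1.2 le_sup_left
    exact hXZ (h10.trans inf_le_right)
end

section
/- Let V = F_2^n and 1 < k < n−1. For a (k−1)-dimensional subspace X ⊂ V, the set S^c(X) is a maximal clique of the graph Γ(n,k)_2 if and only if c(X) ≤ n−k−1. -/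
open Module

lemma aux_ker {F V : Type*} [Field F] [AddCommGroup V] [Module F V] [FiniteDimensional F V]
    (Y : Submodule F V) (g : V →ₗ[F] F) (x : V) (hx : x ∈ Y) (hg : g x ≠ 0) :
    finrank F ↥(Y ⊓ LinearMap.ker g) + 1 = finrank F ↥Y := by
  have hx' : x ∉ Y ⊓ LinearMap.ker g := fun h => hg h.2
  rw [← Submodule.finrank_sup_span_singleton hx']
  suffices h : Y ⊓ LinearMap.ker g ⊔ Submodule.span F {x} = Y by rw [h]
  apply le_antisymm
  · exact sup_le inf_le_left (by simpa using hx)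
  · intro y hy
    rw [Submodule.mem_sup]
    refine ⟨y - (g y / g x) • x, ⟨Y.sub_mem hy (Y.smul_mem _ hx), ?_⟩, (g y / g x) • x,
      Submodule.mem_span_singleton.2 ⟨_, rfl⟩, by simp⟩
    simp [LinearMap.mem_ker, hg]

lemma aux_ext {F V : Type*} [Field F] [AddCommGroup V] [Module F V] [FiniteDimensional F V]
    (U : Submodule F V) (d : ℕ) (h1 : finrank F ↥U ≤ d) (h2 : d ≤ finrank F V) :
    ∃ W : Submodule F V, U ≤ W ∧ finrank F ↥W = d := by
  induction d, h1 using Nat.le_induction with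
  | base => exact ⟨U, le_rfl, rfl⟩
  | succ d hd ih =>
    obtain ⟨W, hW, hWd⟩ := ih (by omega)
    have : ∃ v, v ∉ W := by
      by_contra! h
      have : W = ⊤ := by ext; simp [h]
      rw [this, finrank_top] at hWd
      omega
    obtain ⟨v, hv⟩ := this
    exact ⟨W ⊔ Submodule.span F {v}, hW.trans le_sup_left, by
      rw [Submodule.finrank_sup_span_singleton hv, hWd]⟩

lemma zmod2_ne {a : ZMod 2} (h : a ≠ 0) : a = 1 := by
  revert h; revert a; decide

lemma mem_coordHyp' {n : ℕ} (i : Fin n) (v : Fin n → ZMod 2) :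
    v ∈ coordHyp (ZMod 2) n i ↔ v i = 0 := by
  simp [coordHyp]

/-- The vectors that are constant on the set of coordinates vanishing on `X`. -/
def constSub (n : ℕ) (X : Submodule (ZMod 2) (Fin n → ZMod 2)) (j : Fin n) :
    Submodule (ZMod 2) (Fin n → ZMod 2) where
  carrier := {v | ∀ i, X ≤ coordHyp (ZMod 2) n i → v i = v j}
  add_mem' := by
    intro a b ha hb i hi
    simp [ha i hi, hb i hi]
  zero_mem' := by intro i hi; simp
  smul_mem' := by
    intro c a ha i hi
    simp [ha i hi]

lemma finrank_constSub (n : ℕ) (X : Submodule (ZMod 2) (Fin n → ZMod 2)) (j : Fin n) :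
    finrank (ZMod 2) ↥(constSub n X j) + numHyp (ZMod 2) n X ≤ n + 1 := by
  classical
  let f : ↥(constSub n X j) →ₗ[ZMod 2]
      ({i : Fin n // ¬ X ≤ coordHyp (ZMod 2) n i} → ZMod 2) × ZMod 2 :=
    ((LinearMap.funLeft (ZMod 2) (ZMod 2) Subtype.val).prod (LinearMap.proj j)).comp
      (constSub n X j).subtype
  have hf : Function.Injective f := by
    rintro ⟨a, ha⟩ ⟨b, hb⟩ h
    have h1 := congrArg Prod.fst h
    have h2 : a j = b j := congrArg Prod.snd h
    ext i
    by_cases hi : X ≤ coordHyp (ZMod 2) n i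
    · change a i = b i
      rw [ha i hi, hb i hi, h2]
    · exact congrFun h1 ⟨i, hi⟩
  have h := LinearMap.finrank_le_finrank_of_injective hf
  rw [finrank_prod, finrank_fintype_fun_eq_card, finrank_self, Fintype.card_subtype_compl] at h
  have h3 : numHyp (ZMod 2) n X = Fintype.card {i : Fin n // X ≤ coordHyp (ZMod 2) n i} := by
    rw [numHyp, ← Nat.card_coe_set_eq, ← Nat.card_eq_fintype_card]
    rfl
  have h4 := Fintype.card_subtype_le (fun i : Fin n => X ≤ coordHyp (ZMod 2) n i)
  simp only [Fintype.card_fin] at h h4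
  omega

lemma finrank_big (n k : ℕ) (hkn : k < n - 1) (X U : Submodule (ZMod 2) (Fin n → ZMod 2))
    (hc : numHyp (ZMod 2) n X ≤ n - k - 1)
    (hU : ∀ v : Fin n → ZMod 2, (∀ i, X ≤ coordHyp (ZMod 2) n i → v i = 1) → v ∈ U) :
    k + 2 ≤ finrank (ZMod 2) ↥U := by
  classical
  let f : (Fin n → ZMod 2) →ₗ[ZMod 2] ({i : Fin n // X ≤ coordHyp (ZMod 2) n i} → ZMod 2) :=
    LinearMap.funLeft (ZMod 2) (ZMod 2) Subtype.val
  have h := LinearMap.finrank_range_add_finrank_ker f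
  have h2 := Submodule.finrank_le (LinearMap.range f)
  have h3 : numHyp (ZMod 2) n X = Fintype.card {i : Fin n // X ≤ coordHyp (ZMod 2) n i} := by
    rw [numHyp, ← Nat.card_coe_set_eq, ← Nat.card_eq_fintype_card]
    rfl
  rw [finrank_fintype_fun_eq_card] at h h2
  rw [Fintype.card_fin] at h
  rw [← h3] at h2
  have h1U : (1 : Fin n → ZMod 2) ∈ U := hU _ (by simp)
  have hkU : LinearMap.ker f ≤ U := by
    intro v hv
    have : v + 1 ∈ U := hU _ (by
      intro i hi
      have : v i = 0 := congrFun hv ⟨i, hi⟩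
      simp [this])
    simpa using U.sub_mem this h1U
  by_cases hJ : ∃ i, X ≤ coordHyp (ZMod 2) n i
  · obtain ⟨i, hi⟩ := hJ
    have : LinearMap.ker f < U := by
      refine lt_of_le_of_ne hkU ?_
      intro he
      rw [← he] at h1U
      have : (1 : ZMod 2) = 0 := congrFun h1U ⟨i, hi⟩
      exact one_ne_zero this
    have := Submodule.finrank_lt_finrank_of_lt this
    omega
  · have hz : numHyp (ZMod 2) n X = 0 := by
      rw [numHyp]
      push Not at hJ
      simp [hJ]
    have := Submodule.finrank_mono hkU
    omega

lemma sc_mem (n k : ℕ) (hk : 1 < k) (X : Submodule (ZMod 2) (Fin n → ZMod 2))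
    (hX : finrank (ZMod 2) ↥X = k - 1) (v : Fin n → ZMod 2)
    (hv : ∀ i, X ≤ coordHyp (ZMod 2) n i → v i = 1) (hvX : v ∉ X) :
    X ⊔ Submodule.span (ZMod 2) {v} ∈ scOf (ZMod 2) n k X := by
  have hd : finrank (ZMod 2) ↥(X ⊔ Submodule.span (ZMod 2) {v}) = k := by
    rw [Submodule.finrank_sup_span_singleton hvX, hX]; omega
  refine ⟨⟨hd, le_sup_left⟩, hd, ?_⟩
  intro i hi
  have h1 := hv i (le_sup_left.trans hi)
  have : v ∈ coordHyp (ZMod 2) n i :=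
    hi (Submodule.mem_sup_right (Submodule.mem_span_singleton_self v))
  rw [mem_coordHyp', h1] at this
  exact one_ne_zero this

lemma sc_const (n k : ℕ) (hk : 1 < k) (X : Submodule (ZMod 2) (Fin n → ZMod 2))
    (hX : finrank (ZMod 2) ↥X = k - 1) (j : Fin n) (hj : X ≤ coordHyp (ZMod 2) n j)
    (Y : Submodule (ZMod 2) (Fin n → ZMod 2)) (hY : Y ∈ scOf (ZMod 2) n k X) :
    Y ≤ constSub n X j := by
  obtain ⟨⟨hYd, hXY⟩, -, hnd⟩ := hY
  have key : ∀ i, X ≤ coordHyp (ZMod 2) n i → X = Y ⊓ coordHyp (ZMod 2) n i := by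
    intro i hi
    obtain ⟨w, hw, hwi⟩ := SetLike.not_le_iff_exists.1 (hnd i)
    have := aux_ker Y (LinearMap.proj i) w hw hwi
    apply Submodule.eq_of_le_of_finrank_eq (le_inf hXY hi)
    unfold coordHyp
    omega
  have key2 : ∀ i, X ≤ coordHyp (ZMod 2) n i → ∀ y ∈ Y, (y i = 0 ↔ y ∈ X) := by
    intro i hi y hy
    rw [key i hi, Submodule.mem_inf, mem_coordHyp']
    simp [hy]
  intro y hy i hi
  have h := (key2 i hi y hy).trans (key2 j hj y hy).symm
  by_cases h0 : y i = 0
  · rw [h0, h.1 h0]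
  · rw [zmod2_ne h0, zmod2_ne (fun hh => h0 (h.2 hh))]

lemma sc_clique (n k : ℕ) (hk : 1 < k) (X : Submodule (ZMod 2) (Fin n → ZMod 2))
    (hX : finrank (ZMod 2) ↥X = k - 1) : isClique (ZMod 2) n k (scOf (ZMod 2) n k X) := by
  refine ⟨fun Y hY => hY.2, ?_⟩
  intro Y hY Z hZ hne
  have h1 := Submodule.finrank_mono (le_inf hY.1.2 hZ.1.2)
  have hYd := hY.1.1
  have hZd := hZ.1.1
  have h2 : Y ⊓ Z < Y := by
    refine lt_of_le_of_ne inf_le_left ?_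
    intro h
    exact hne (Submodule.eq_of_le_of_finrank_eq (inf_eq_left.1 h) (by omega))
  have h3 := Submodule.finrank_lt_finrank_of_lt h2
  unfold adjSub
  omega

/-- For `V = F_2^n` and `1 < k < n-1`, for a `(k-1)`-dimensional
subspace `X ⊂ V`, the set `S^c(X)` is a maximal clique of `Γ(n,k)_2` if and only if
`c(X) ≤ n - k - 1`. -/
theorem stmt_3 (n k : ℕ) (hk : 1 < k) (hkn : k < n - 1)
    (X : Submodule (ZMod 2) (Fin n → ZMod 2))
    (hX : Module.finrank (ZMod 2) ↥X = k - 1) :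
    isMaxClique (ZMod 2) n k (scOf (ZMod 2) n k X) ↔ numHyp (ZMod 2) n X ≤ n - k - 1 := by
  have hcl := sc_clique n k hk X hX
  constructor
  · rintro ⟨-, hmax⟩
    by_contra hc
    have hJ : ∃ j, X ≤ coordHyp (ZMod 2) n j := by
      by_contra! h
      apply hc
      rw [numHyp]
      simp [h]
    obtain ⟨j, hj⟩ := hJ
    have hx : ∃ x ∈ X, x ≠ 0 := by
      by_contra! h
      have : X = ⊥ := (Submodule.eq_bot_iff X).2 h
      rw [this, finrank_bot] at hX
      omega
    obtain ⟨x, hxX, hx0⟩ := hx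
    obtain ⟨a, hxa⟩ := Function.ne_iff.1 hx0
    have hxj : x j = 0 := (mem_coordHyp' j x).1 (hj hxX)
    obtain ⟨U, hU, hUd⟩ := aux_ext (constSub n X j) (k + 1)
      (by have := finrank_constSub n X j; omega) (by simp; omega)
    let g : (Fin n → ZMod 2) →ₗ[ZMod 2] ZMod 2 := 
      (LinearMap.proj j : (Fin n → ZMod 2) →ₗ[ZMod 2] ZMod 2) - LinearMap.proj a
    have hgx : g x ≠ 0 := by
      simpa [g, hxj] using hxa
    have hxU : x ∈ U := hU (by
      intro i hi
      rw [hxj]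
      exact (mem_coordHyp' i x).1 (hi hxX))
    have hZd := aux_ker U g x hxU hgx
    have hZ1 : (1 : Fin n → ZMod 2) ∈ U ⊓ LinearMap.ker g :=
      ⟨hU (by intro i hi; simp), by simp [g]⟩
    have hZn : U ⊓ LinearMap.ker g ∈ ndCodes (ZMod 2) n k := by
      refine ⟨by omega, ?_⟩
      intro i hi
      have := (mem_coordHyp' i _).1 (hi hZ1)
      exact one_ne_zero this
    have hadj : ∀ Y ∈ scOf (ZMod 2) n k X,
        adjSub (ZMod 2) n k Y (U ⊓ LinearMap.ker g) := by
      intro Y hY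
      have hYU : Y ≤ U := (sc_const n k hk X hX j hj Y hY).trans hU
      have h := aux_ker Y g x (hY.1.2 hxX) hgx
      have hYd := hY.1.1
      unfold adjSub
      rw [← inf_assoc, inf_eq_left.2 hYU]
      omega
    have hT := hmax (insert (U ⊓ LinearMap.ker g) (scOf (ZMod 2) n k X))
      ⟨Set.insert_subset hZn hcl.1, by
        refine hcl.2.insert ?_
        intro Y hY _
        refine ⟨?_, hadj Y hY⟩
        have := hadj Y hY
        unfold adjSub at this ⊢
        rwa [inf_comm]⟩ (Set.subset_insert _ _)
    have hmem : U ⊓ LinearMap.ker g ∈ scOf (ZMod 2) n k X := hT ▸ Set.mem_insert _ _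
    exact hgx (hmem.1.2 hxX).2
  · intro hc
    refine ⟨hcl, ?_⟩
    intro T hT hST
    refine Set.Subset.antisymm ?_ hST
    intro Z hZ
    have hZn := hT.1 hZ
    refine ⟨⟨hZn.1, ?_⟩, hZn⟩
    by_contra hXZ
    have hadj : ∀ Y ∈ scOf (ZMod 2) n k X, finrank (ZMod 2) ↥(Y ⊓ Z) = k - 1 := by
      intro Y hY
      refine hT.2 (hST hY) hZ ?_
      rintro rfl
      exact hXZ hY.1.2
    have hsub : ∀ Y ∈ scOf (ZMod 2) n k X, Y ≤ X ⊔ Z := by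
      intro Y hY
      have hYd := hY.1.1
      have h1 : X < X ⊔ (Y ⊓ Z) := by
        refine lt_of_le_of_ne le_sup_left ?_
        intro h
        have h2 : Y ⊓ Z ≤ X := by rw [h]; exact le_sup_right
        have h3 := Submodule.eq_of_le_of_finrank_eq h2 (by rw [hadj Y hY, hX])
        exact hXZ (h3 ▸ inf_le_right)
      have h2 := Submodule.finrank_lt_finrank_of_lt h1
      have h3 := Submodule.eq_of_le_of_finrank_le (sup_le hY.1.2 inf_le_left : X ⊔ (Y ⊓ Z) ≤ Y)
        (by omega)
      rw [← h3]
      exact sup_le_sup_left inf_le_right X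
    have hY0 : ∃ v : Fin n → ZMod 2, (∀ i, X ≤ coordHyp (ZMod 2) n i → v i = 1) ∧ v ∉ X := by
      by_contra! h
      have := finrank_big n k hkn X X hc h
      omega
    obtain ⟨v, hv, hvX⟩ := hY0
    have hY := sc_mem n k hk X hX v hv hvX
    have h1 := Submodule.finrank_sup_add_finrank_inf_eq (X ⊔ Submodule.span (ZMod 2) {v}) Z
    rw [hadj _ hY, hY.1.1, hZn.1] at h1
    have h2 : X ⊔ Z ≤ (X ⊔ Submodule.span (ZMod 2) {v}) ⊔ Z := sup_le_sup_right le_sup_left Z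
    have h3 := Submodule.finrank_mono h2
    have h4 := finrank_big n k hkn X (X ⊔ Z) hc (by
      intro w hw
      by_cases hwX : w ∈ X
      · exact Submodule.mem_sup_left hwX
      · exact hsub _ (sc_mem n k hk X hX w hw hwX)
          (Submodule.mem_sup_right (Submodule.mem_span_singleton_self w)))
    omega
end
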